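/- arXiv:1412.4284 — 5 statements merged into one kernel-verified Lean document; each statement's English description precedes it below -/
import Mathlib

section
/- Let G = (ℤ/2ℤ) * (ℤ/3ℤ) with a, b the canonical generators of orders 2 and 3 respectively, and let d be the word metric on G with respect to {a, b} (with inverses allowed); write B_R(e) for the ball of radius R around the identity. Let R ≥ 2 be real and let S ⊆ B_{2R}(e) be a finite set with |S| ≥ R⁶. Then the set of commutators [S,S] = {g₁g₂g₁⁻¹g₂⁻¹ : g₁, g₂ ∈ S} satisfies |[S,S]| ≥ R³. -/
/-- The free product `G = (ℤ/2ℤ) ∗ (ℤ/3ℤ)` (isomorphic to `PSL₂(ℤ)`). -/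
abbrev Gfp := Monoid.Coprod (Multiplicative (ZMod 2)) (Multiplicative (ZMod 3))

/-- The canonical generator `a` of order 2 (the image of `1 ∈ ℤ/2ℤ`). -/
def genA : Gfp := Monoid.Coprod.inl (Multiplicative.ofAdd (1 : ZMod 2))

/-- The canonical generator `b` of order 3 (the image of `1 ∈ ℤ/3ℤ`). -/
def genB : Gfp := Monoid.Coprod.inr (Multiplicative.ofAdd (1 : ZMod 3))

/-- The first free factor, the canonical embedded copy of `ℤ/2ℤ`. -/
def factorL : Subgroup Gfp :=
  (Monoid.Coprod.inl : Multiplicative (ZMod 2) →* Gfp).range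

/-- The second free factor, the canonical embedded copy of `ℤ/3ℤ`. -/
def factorR : Subgroup Gfp :=
  (Monoid.Coprod.inr : Multiplicative (ZMod 3) →* Gfp).range

/-- The symmetrized generating set `{a, a⁻¹, b, b⁻¹}` of `G = (ℤ/2ℤ) ∗ (ℤ/3ℤ)`. -/
def genSet : Set Gfp := {genA, genA⁻¹, genB, genB⁻¹}

/-- The ball `B_R(e)` of radius `R` about the identity in the word metric on `G` with
respect to `{a, b}`: elements expressible as a word of length `≤ R` in `a^{±1}, b^{±1}`. -/
def ballW (R : ℝ) : Set Gfp :=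
  {g | ∃ l : List Gfp, (l.length : ℝ) ≤ R ∧ (∀ x ∈ l, x ∈ genSet) ∧ l.prod = g}

/-- The commutator set `[S,T] = {g t g⁻¹ t⁻¹ : g ∈ S, t ∈ T}`. -/
def commSet (S T : Set Gfp) : Set Gfp :=
  {z | ∃ g ∈ S, ∃ t ∈ T, z = g * t * g⁻¹ * t⁻¹}


namespace MC

inductive Lt where
  | a | b | c

def ty : Lt → Bool
  | .a => true
  | .b => false
  | .c => false

def iv : Lt → Lt
  | .a => .a
  | .b => .c
  | .c => .b

def el : Lt → Gfp
  | .a => genA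
  | .b => genB
  | .c => genB⁻¹

def Red (l : List Lt) : Prop := List.IsChain (fun x y => ty x ≠ ty y) l

abbrev W := {l : List Lt // Red l}

def ev (l : List Lt) : Gfp := (l.map el).prod

lemma ev_append (l m : List Lt) : ev (l ++ m) = ev l * ev m := by simp [ev]
lemma ev_cons (x : Lt) (m : List Lt) : ev (x :: m) = el x * ev m := by simp [ev]
lemma ev_nil : ev [] = 1 := by simp [ev]

def rawA : List Lt → List Lt
  | .a :: l => l
  | l => .a :: l

def rawB : List Lt → List Lt
  | .b :: l => .c :: l
  | .c :: l => l
  | l => .b :: l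

lemma red_rawA (l : List Lt) (h : Red l) : Red (rawA l) := by
  rcases l with _ | ⟨x, _ | ⟨y, l⟩⟩
  · simp [rawA, Red]
  · cases x <;> simp [rawA, Red, ty]
  · cases x <;> cases y <;> simp_all [rawA, Red, ty]

lemma red_rawB (l : List Lt) (h : Red l) : Red (rawB l) := by
  rcases l with _ | ⟨x, _ | ⟨y, l⟩⟩
  · simp [rawB, Red]
  · cases x <;> simp [rawB, Red, ty]
  · cases x <;> cases y <;> simp_all [rawB, Red, ty]

lemma rawA2 (l : List Lt) (h : Red l) : rawA (rawA l) = l := by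
  rcases l with _ | ⟨x, _ | ⟨y, l⟩⟩
  · simp [rawA]
  · cases x <;> simp [rawA]
  · cases x <;> cases y <;> simp_all [rawA, Red, ty]

lemma rawB3 (l : List Lt) (h : Red l) : rawB (rawB (rawB l)) = l := by
  rcases l with _ | ⟨x, _ | ⟨y, l⟩⟩
  · simp [rawB]
  · cases x <;> simp [rawB]
  · cases x <;> cases y <;> simp_all [rawB, Red, ty]

def actA : Function.End W := fun w => ⟨rawA w.1, red_rawA w.1 w.2⟩
def actB : Function.End W := fun w => ⟨rawB w.1, red_rawB w.1 w.2⟩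

lemma actA2 : actA ^ 2 = 1 := by
  funext w
  exact Subtype.ext (rawA2 w.1 w.2)

lemma actB3 : actB ^ 3 = 1 := by
  funext w
  exact Subtype.ext (rawB3 w.1 w.2)

def powHom {M : Type} [Monoid M] (n : ℕ) [NeZero n] (x : M) (h : x ^ n = 1) :
    Multiplicative (ZMod n) →* M where
  toFun k := x ^ (Multiplicative.toAdd k).val
  map_one' := by simp
  map_mul' k l := by
    rw [← pow_add, toAdd_mul, ZMod.val_add, ← pow_mod_orderOf x (_ % n),
      Nat.mod_mod_of_dvd _ (orderOf_dvd_of_pow_eq_one h), pow_mod_orderOf]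

def phi : Gfp →* Function.End W :=
  Monoid.Coprod.lift (powHom 2 actA actA2) (powHom 3 actB actB3)

lemma phi_a : phi genA = actA := by
  simp [phi, genA, powHom, ZMod.val_one]

lemma phi_b : phi genB = actB := by
  simp only [phi, genB, powHom, Monoid.Coprod.lift_apply_inr]
  exact pow_one _

lemma a2 : genA * genA = 1 := by
  rw [genA, ← map_mul, ← map_one Monoid.Coprod.inl]
  congr 1

lemma b3 : genB * (genB * genB) = 1 := by
  rw [genB, ← map_mul, ← map_mul, ← map_one Monoid.Coprod.inr]
  congr 1

lemma a_inv : genA⁻¹ = genA := inv_eq_of_mul_eq_one_left a2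
lemma b_inv : genB⁻¹ = genB * genB := by
  apply inv_eq_of_mul_eq_one_right b3

lemma phi_c : phi genB⁻¹ = actB * actB := by
  rw [b_inv, map_mul, phi_b]

lemma el_iv (x : Lt) : el (iv x) = (el x)⁻¹ := by
  cases x <;> simp [iv, el, a_inv]

lemma ty_iv (x : Lt) : ty (iv x) = ty x := by
  cases x <;> rfl

def nf (g : Gfp) : List Lt := (phi g ⟨[], List.isChain_nil⟩).1

lemma nf_red (g : Gfp) : Red (nf g) := (phi g ⟨[], List.isChain_nil⟩).2

lemma phi_cons (x : Lt) (w : W) (h : Red (x :: w.1)) :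
    (phi (el x) w).1 = x :: w.1 := by
  obtain ⟨l, hl⟩ := w
  cases x
  · simp only [el, phi_a, actA]
    rcases l with _ | ⟨y, l⟩
    · rfl
    · cases y <;> simp_all [Red, ty, rawA]
  · simp only [el, phi_b, actB]
    rcases l with _ | ⟨y, l⟩
    · rfl
    · cases y <;> simp_all [Red, ty, rawB]
  · simp only [el, phi_c]
    change rawB (rawB l) = _
    rcases l with _ | ⟨y, l⟩
    · rfl
    · cases y <;> simp_all [Red, ty, rawB]

lemma red_cons2 (x y : Lt) (l : List Lt) :
    Red (x :: y :: l) ↔ ty x ≠ ty y ∧ Red (y :: l) := by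
  simp only [Red, List.isChain_cons_cons]

lemma phi_len (x : Lt) (w : W) (h : ¬ Red (x :: w.1)) :
    (phi (el x) w).1.length ≤ w.1.length := by
  obtain ⟨l, hl⟩ := w
  rcases l with _ | ⟨y, l⟩
  · simp [Red] at h
  have hxy : ty x = ty y := by
    by_contra hne
    exact h ((red_cons2 _ _ _).2 ⟨hne, hl⟩)
  cases x
  · simp only [el, phi_a, actA]
    cases y <;> simp_all [ty, rawA]
  · simp only [el, phi_b, actB]
    cases y <;> simp_all [ty, rawB]
  · simp only [el, phi_c]
    change (rawB (rawB (y :: l))).length ≤ (y :: l).length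
    cases y
    · simp [ty] at hxy
    · simp [rawB]
    · change (rawB l).length ≤ _
      rcases l with _ | ⟨z, l⟩
      · simp [rawB]
      · cases z <;> simp [rawB] <;> omega

lemma nf_mul_el (x : Lt) (g : Gfp) : nf (el x * g) = (phi (el x) ⟨nf g, nf_red g⟩).1 := by
  simp only [nf, map_mul]
  rfl

lemma nf_cons_red (x : Lt) (g : Gfp) (h : Red (x :: nf g)) : nf (el x * g) = x :: nf g :=
  (nf_mul_el x g).trans (phi_cons x ⟨nf g, nf_red g⟩ h)

lemma nf_cons_len (x : Lt) (g : Gfp) (h : ¬ Red (x :: nf g)) :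
    (nf (el x * g)).length ≤ (nf g).length := by
  have := phi_len x ⟨nf g, nf_red g⟩ h
  rwa [← nf_mul_el] at this

lemma nf_one : nf 1 = [] := by
  rw [nf, map_one]; rfl

lemma nf_ev (l : List Lt) (h : Red l) : nf (ev l) = l := by
  induction l with
  | nil => rw [ev_nil, nf_one]
  | cons x l ih =>
    have hl : Red l := List.IsChain.tail h
    have := ih hl
    rw [ev_cons, nf_cons_red, this]
    rwa [this]

lemma ev_rawA (l : List Lt) : ev (rawA l) = genA * ev l := by
  rcases l with _ | ⟨y, l⟩
  · rfl
  · cases y <;> simp [rawA, ev_cons, el]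
    rw [← mul_assoc, a2, one_mul]

lemma ev_rawB (l : List Lt) : ev (rawB l) = genB * ev l := by
  rcases l with _ | ⟨y, l⟩
  · rfl
  · cases y <;> simp [rawB, ev_cons, el]
    rw [b_inv, mul_assoc]

lemma ev_phi (g : Gfp) : ∀ w : W, ev (phi g w).1 = g * ev w.1 := by
  have hA : ∀ n : ℕ, ∀ w : W, ev (phi (genA ^ n) w).1 = genA ^ n * ev w.1 := by
    intro n
    induction n with
    | zero => intro w; rw [pow_zero, map_one, one_mul]; rfl
    | succ n ih =>
      intro w
      rw [pow_succ', map_mul, phi_a, mul_assoc, ← ih w, ← ev_rawA]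
      rfl
  have hB : ∀ n : ℕ, ∀ w : W, ev (phi (genB ^ n) w).1 = genB ^ n * ev w.1 := by
    intro n
    induction n with
    | zero => intro w; rw [pow_zero, map_one, one_mul]; rfl
    | succ n ih =>
      intro w
      rw [pow_succ', map_mul, phi_b, mul_assoc, ← ih w, ← ev_rawB]
      rfl
  induction g using Monoid.Coprod.induction_on with
  | inl m =>
    have : (Monoid.Coprod.inl m : Gfp) = genA ^ (Multiplicative.toAdd m).val := by
      rw [genA, ← map_pow, ← ofAdd_nsmul]
      simp
    rw [this]; exact hA _
  | inr m =>
    have : (Monoid.Coprod.inr m : Gfp) = genB ^ (Multiplicative.toAdd m).val := by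
      rw [genB, ← map_pow, ← ofAdd_nsmul]
      simp
    rw [this]; exact hB _
  | mul x y hx hy =>
    intro w
    rw [map_mul, mul_assoc, ← hy, ← hx]
    rfl

lemma ev_nf (g : Gfp) : ev (nf g) = g := by
  rw [nf, ev_phi]; simp [ev]

lemma nf_inj {g h : Gfp} (e : nf g = nf h) : g = h := by
  rw [← ev_nf g, e, ev_nf]

lemma len_ev (l : List Lt) : (nf (ev l)).length ≤ l.length ∧
    ((nf (ev l)).length = l.length → Red l) := by
  induction l with
  | nil => rw [ev_nil, nf_one]; simp [Red]
  | cons x l ih =>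
    rw [ev_cons]
    by_cases h : Red (x :: nf (ev l))
    · rw [nf_cons_red _ _ h]
      refine ⟨by simpa using ih.1, fun e => ?_⟩
      have hl := ih.2 (by simpa using e)
      rwa [nf_ev l hl] at h
    · have := nf_cons_len x (ev l) h
      have h1 := ih.1
      simp only [List.length_cons]
      constructor
      · omega
      · intro e; omega

abbrev len (g : Gfp) : ℕ := (nf g).length

lemma len_mul (g h : Gfp) : len (g * h) ≤ len g + len h := by
  have := (len_ev (nf g ++ nf h)).1
  rwa [ev_append, ev_nf, ev_nf, List.length_append] at this

def rv (l : List Lt) : List Lt := (l.map iv).reverse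

lemma ev_rv (l : List Lt) : ev (rv l) = (ev l)⁻¹ := by
  induction l with
  | nil => simp [rv, ev]
  | cons x l ih =>
    have : rv (x :: l) = rv l ++ [iv x] := by simp [rv]
    rw [this, ev_append, ih, ev_cons, ev_cons, ev_nil, el_iv]; simp

lemma red_rv (l : List Lt) (h : Red l) : Red (rv l) := by
  simp only [Red, rv, List.isChain_reverse, List.isChain_map, ty_iv] at *
  refine h.imp ?_
  intro _ _ hab
  exact hab.symm

lemma nf_inv (g : Gfp) : nf g⁻¹ = rv (nf g) := by
  conv_lhs => rw [← ev_nf g, ← ev_rv]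
  exact nf_ev _ (red_rv _ (nf_red g))

lemma len_inv (g : Gfp) : len g⁻¹ = len g := by
  simp [len, nf_inv, rv]

lemma len_el (x : Lt) : len (el x) ≤ 1 := by
  have := (len_ev [x]).1
  simpa [ev] using this

lemma len_ball (R : ℝ) (g : Gfp) (h : g ∈ ballW R) : (len g : ℝ) ≤ R := by
  obtain ⟨l, hl, hx, rfl⟩ := h
  refine le_trans ?_ hl
  norm_cast
  clear hl
  induction l with
  | nil => simp [len, nf_one]
  | cons x l ih =>
    rw [List.prod_cons]
    have h1 := len_mul x l.prod
    have h2 := ih (fun y hy => hx y (by simp [hy]))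
    have h3 : len x ≤ 1 := by
      have := hx x (by simp)
      simp only [genSet, Set.mem_insert_iff, Set.mem_singleton_iff] at this
      rcases this with rfl | rfl | rfl | rfl
      · exact len_el .a
      · rw [a_inv]; exact len_el .a
      · exact len_el .b
      · exact len_el .c
    simp only [List.length_cons]; omega


lemma red_append (l m : List Lt) : Red (l ++ m) ↔ Red l ∧ Red m ∧
    ∀ x ∈ l.getLast?, ∀ y ∈ m.head?, ty x ≠ ty y := by
  simp only [Red, List.isChain_append]

/-- cyclically reduced words -/
def Cyc (l : List Lt) : Prop := l ≠ [] ∧ Red (l ++ l)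

def pw (l : List Lt) : ℕ → List Lt
  | 0 => []
  | n + 1 => l ++ pw l n

lemma ev_pw (l : List Lt) (n : ℕ) : ev (pw l n) = ev l ^ n := by
  induction n with
  | zero => simp [pw, ev_nil]
  | succ n ih => rw [pw, ev_append, ih, pow_succ']

lemma head_pw (l : List Lt) (hl : l ≠ []) (n : ℕ) : ∀ y ∈ (pw l n).head?, y ∈ l.head? := by
  cases n with
  | zero => simp [pw]
  | succ n =>
    rcases l with _ | ⟨x, l⟩
    · exact absurd rfl hl
    · simp [pw]

lemma len_pw (l : List Lt) (hl : l ≠ []) (n : ℕ) : n ≤ (pw l n).length := by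
  induction n with
  | zero => simp
  | succ n ih =>
    have := List.length_pos_iff.2 hl
    rw [pw, List.length_append]; omega

lemma red_pw (k l : List Lt) (hl : Cyc l) (h : Red (k ++ l)) (n : ℕ) : Red (k ++ pw l n) := by
  induction n generalizing k with
  | zero => simpa [pw] using ((red_append _ _).1 h).1
  | succ n ih =>
    obtain ⟨h1, h2, h3⟩ := (red_append _ _).1 h
    have := ih l hl.2
    rw [pw]
    refine (red_append _ _).2 ⟨h1, this, fun x hx y hy => h3 x hx y ?_⟩
    rcases l with _ | ⟨z, l⟩
    · exact absurd rfl hl.1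
    · simpa using hy

lemma comm_prefix (g k : Gfp) (hg : Cyc (nf g)) (hk : Red (nf k ++ nf g)) (hc : k * g = g * k) :
    nf k = (pw (nf g) (len k)).take (len k) := by
  set P := pw (nf g) (len k) with hP
  have hr : Red (nf k ++ P) := red_pw _ _ hg hk _
  have hcm : k * g ^ len k = g ^ len k * k := (Commute.pow_right (show Commute k g from hc) _).eq
  have e : ev (nf k ++ P) = ev (P ++ nf k) := by
    rw [ev_append, ev_append, hP, ev_pw, ev_nf, ev_nf]; exact hcm
  have e1 := nf_ev _ hr
  have hr2 : Red (P ++ nf k) := by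
    apply (len_ev _).2
    rw [← e, e1]; simp [add_comm]
  have e2 := nf_ev _ hr2
  rw [← e, e1] at e2
  have h3 : len k ≤ P.length := len_pw _ hg.1 _
  have := congrArg (List.take (len k)) e2
  rw [List.take_append_of_le_length le_rfl, List.take_append_of_le_length h3] at this
  rw [← this]; simp [len]

lemma last_ty (l m : List Lt) (hl : Cyc m) (h : Red l) :
    Red (l ++ m) ∨ Red (l ++ rv m) := by
  obtain ⟨hm, hr⟩ := hl
  obtain ⟨h1, -, h2⟩ := (red_append _ _).1 hr
  rcases List.eq_nil_or_concat l with rfl | ⟨l, x, rfl⟩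
  · left; simpa using h1
  have hm' : ∃ y z, m.head? = some y ∧ m.getLast? = some z := by
    rcases m with _ | ⟨y, m⟩
    · exact absurd rfl hm
    · exact ⟨y, _, rfl, List.getLast?_eq_some_getLast (by simp)⟩
  obtain ⟨y, z, hy, hz⟩ := hm'
  have hzy := h2 z hz y hy
  have hrv : (rv m).head? = some (iv z) := by
    simp [rv, hz]
  by_cases hxy : ty x = ty y
  · right
    refine (red_append _ _).2 ⟨h, red_rv _ h1, ?_⟩
    intro u hu v hv
    simp [hrv] at hu hv
    subst hu hv
    rw [ty_iv, hxy]; exact hzy.symm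
  · left
    refine (red_append _ _).2 ⟨h, h1, ?_⟩
    intro u hu v hv
    simp [hy] at hu hv
    subst hu hv
    exact hxy

lemma cyc_rv (m : List Lt) (h : Cyc m) : Cyc (rv m) := by
  refine ⟨by simpa [rv] using h.1, ?_⟩
  have := red_rv _ h.2
  simpa [rv] using this

open Classical in
lemma card_cyc (g : Gfp) (hg : Cyc (nf g)) (n : ℕ) (T : Finset Gfp)
    (hT : ∀ k ∈ T, k * g = g * k ∧ len k ≤ n) : T.card ≤ 2 * n + 2 := by
  have hgi : Cyc (nf g⁻¹) := by rw [nf_inv]; exact cyc_rv _ hg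
  have := Finset.card_le_card_of_injOn (s := T) (t := Finset.range (n + 1) ×ˢ Finset.univ)
    (fun k => (len k, decide (Red (nf k ++ nf g))))
    (by
      intro k hk
      have := (hT k hk).2
      simpa using ⟨this, Classical.em _⟩)
    (by
      intro k hk k' hk' e
      simp only [Prod.mk.injEq, decide_eq_decide] at e
      apply nf_inj
      by_cases h : Red (nf k ++ nf g)
      · rw [comm_prefix g k hg h (hT k hk).1, comm_prefix g k' hg (e.2.1 h) (hT k' hk').1, e.1]
      · have h' : ¬ Red (nf k' ++ nf g) := fun h' => h (e.2.2 h')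
        have f : ∀ k, ¬ Red (nf k ++ nf g) → Red (nf k ++ nf g⁻¹) := by
          intro k hk
          rw [nf_inv]
          exact (last_ty _ _ hg (nf_red k)).resolve_left hk
        have c : ∀ k, k * g = g * k → k * g⁻¹ = g⁻¹ * k := fun k hk =>
          (Commute.inv_right (show Commute k g from hk)).eq
        rw [comm_prefix g⁻¹ k hgi (f k h) (c k (hT k hk).1),
          comm_prefix g⁻¹ k' hgi (f k' h') (c k' (hT k' hk').1), e.1])
  simp at this
  omega

lemma pow_el (x : Lt) : el x * (el x) * el x * (el x * el x * el x) = 1 := by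
  cases x
  · simp [el, a2]
  · simp [el, mul_assoc, b3]
  · have : genB⁻¹ * genB⁻¹ * genB⁻¹ = 1 := by
      have := congrArg (fun x => x⁻¹) b3
      simpa [mul_assoc] using this
    simp [el, this]

/-- an element commuting with a letter whose normal form does not start with the type of the
letter is trivial -/
lemma comm_letter_aux (x : Lt) (k : Gfp) (hc : k * el x = el x * k) (h : Red (x :: nf k)) :
    k = 1 := by
  rcases hk : nf k with _ | ⟨y, l⟩
  · apply nf_inj; rw [hk, nf_one]
  exfalso
  have e1 := nf_cons_red x k h
  rw [← hc] at e1
  have e2 : ev (nf k ++ [x]) = k * el x := by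
    rw [ev_append, ev_nf, ev_cons, ev_nil, mul_one]
  have hr : Red (nf k ++ [x]) := by
    apply (len_ev _).2
    rw [e2, e1]; simp
  have e3 := nf_ev _ hr
  rw [e2, e1, hk] at e3
  have hxy : x = y := by simpa using congrArg List.head? e3
  rw [hk, hxy, red_cons2] at h
  exact h.1 rfl

lemma comm_letter (x : Lt) (k : Gfp) (hc : k * el x = el x * k) :
    k = 1 ∨ k = el x ∨ k = (el x)⁻¹ := by
  by_cases h : Red (x :: nf k)
  · exact Or.inl (comm_letter_aux x k hc h)
  rcases hk : nf k with _ | ⟨y, l⟩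
  · rw [hk] at h; simp [Red] at h
  have hy : Red (y :: l) := hk ▸ nf_red k
  have hxy : ty x = ty y := by
    by_contra hne
    exact h (by rw [hk]; exact (red_cons2 _ _ _).2 ⟨hne, hy⟩)
  have hl : Red l := List.IsChain.tail hy
  have hkl : k = el y * ev l := by rw [← ev_nf k, hk, ev_cons]
  have hyx : el y = el x ∨ el y = (el x)⁻¹ := by
    cases x <;> cases y <;> simp_all [ty, el]
  have hcl : ev l * el x = el x * ev l := by
    have e : ev l = (el y)⁻¹ * k := by rw [hkl]; simp
    have c1 : Commute k (el x) := hc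
    have c2 : Commute (el y) (el x) := by
      rcases hyx with e | e <;> rw [e]
      exact (Commute.refl _).inv_left
    rw [e]
    exact (c2.inv_left.mul_left c1).eq
  have hxl : Red (x :: nf (ev l)) := by
    rw [nf_ev l hl]
    rcases l with _ | ⟨z, l⟩
    · simp [Red]
    · rw [red_cons2] at hy ⊢
      rwa [hxy]
  have := comm_letter_aux x (ev l) hcl hxl
  rw [this, mul_one] at hkl
  rw [hkl]; exact Or.inr hyx

open Classical in
lemma card_letter (x : Lt) (T : Finset Gfp)
    (hT : ∀ k ∈ T, k * el x = el x * k) : T.card ≤ 3 := by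
  have : T ⊆ {1, el x, (el x)⁻¹} := by
    intro k hk
    simpa using comm_letter x k (hT k hk)
  exact (Finset.card_le_card this).trans Finset.card_le_three

lemma conj_red (n : ℕ) : ∀ g : Gfp, len g ≤ n → g ≠ 1 → ∃ p, len p ≤ len g ∧
    (Cyc (nf (p * g * p⁻¹)) ∨ ∃ x, p * g * p⁻¹ = el x) := by
  induction n with
  | zero =>
    intro g hg h1
    exfalso; apply h1; apply nf_inj
    rw [nf_one]; exact List.length_eq_zero_iff.1 (Nat.le_zero.1 hg)
  | succ n ih =>
    intro g hg h1
    rcases List.eq_nil_or_concat (nf g) with h | ⟨l, y, h⟩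
    · exact absurd (nf_inj (h.trans nf_one.symm)) h1
    by_cases hc : Red (nf g ++ nf g)
    · refine ⟨1, by simp [len, nf_one], Or.inl ?_⟩
      simp only [one_mul, inv_one, mul_one]
      exact ⟨by simp [h], hc⟩
    rcases l with _ | ⟨x, m⟩
    · refine ⟨1, by simp [len, nf_one], Or.inr ⟨y, ?_⟩⟩
      simp only [one_mul, inv_one, mul_one]
      rw [← ev_nf g, h]; simp [ev]
    have hr := nf_red g
    have hyx : ty y = ty x := by
      by_contra hne
      apply hc
      refine (red_append _ _).2 ⟨hr, hr, ?_⟩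
      intro u hu v hv
      have hu' : ((x :: m).concat y).getLast? = some y := by
        rw [List.concat_eq_append, List.getLast?_concat]
      rw [h, hu'] at hu
      simp [h] at hu hv
      subst hu hv
      exact hne
    have e : el y * g * (el y)⁻¹ = ev (y :: x :: m) := by
      conv_lhs => rw [← ev_nf g, h]
      simp [ev, mul_assoc]
    have hlt : len (el y * g * (el y)⁻¹) < len g := by
      rw [e]
      have h1 := len_ev (y :: x :: m)
      have h2 : (nf (ev (y :: x :: m))).length ≠ (y :: x :: m).length := by
        intro h2
        have := (red_cons2 _ _ _).1 (h1.2 h2)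
        exact this.1 hyx
      have h3 : len g = (y :: x :: m).length := by simp [len, h]
      have := h1.1
      simp only [len] at *
      omega
    obtain ⟨p, hp, hp'⟩ := ih (el y * g * (el y)⁻¹) (by omega) (by
      intro h
      apply h1
      exact (conj_eq_one_iff).1 h)
    refine ⟨p * el y, ?_, ?_⟩
    · have := len_mul p (el y)
      have := len_el y
      omega
    · have e : p * el y * g * (p * el y)⁻¹ = p * (el y * g * (el y)⁻¹) * p⁻¹ := by
        simp [mul_assoc]
      rw [e]; exact hp'

open Classical in
lemma card_comm (g : Gfp) (hg : g ≠ 1) (n : ℕ) (hn : 1 ≤ n) (T : Finset Gfp)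
    (hT : ∀ k ∈ T, k * g = g * k ∧ len k ≤ n) : T.card ≤ 2 * (n + 2 * len g) + 2 := by
  obtain ⟨p, hp, h⟩ := conj_red (len g) g le_rfl hg
  have hcard : (T.image (fun k => p * k * p⁻¹)).card = T.card := by
    apply Finset.card_image_of_injective
    intro k k' e
    simpa using e
  have hT' : ∀ k ∈ T.image (fun k => p * k * p⁻¹),
      k * (p * g * p⁻¹) = (p * g * p⁻¹) * k ∧ len k ≤ n + 2 * len g := by
    intro k hk
    obtain ⟨k, hk', rfl⟩ := Finset.mem_image.1 hk
    obtain ⟨h1, h2⟩ := hT k hk'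
    constructor
    · have : p * k * p⁻¹ * (p * g * p⁻¹) = p * (k * g) * p⁻¹ := by group
      rw [this, h1]; group
    · have := len_mul (p * k) p⁻¹
      have := len_mul p k
      have := len_inv p
      omega
  rw [← hcard]
  rcases h with h | ⟨x, h⟩
  · exact card_cyc _ h _ _ hT'
  · rw [h] at hT'
    have := card_letter x _ (fun k hk => (hT' k hk).1)
    omega

open Classical in
lemma words (n : ℕ) : ∀ t : Bool, ∃ F : Finset (List Lt), F.card + 1 ≤ 2 ^ (n + 1) ∧
    ∀ l : List Lt, Red l → l.length ≤ n → (∀ x ∈ l.head?, ty x = t) → l ∈ F := by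
  induction n with
  | zero =>
    intro t
    refine ⟨{[]}, by simp, fun l _ h _ => ?_⟩
    simpa using h
  | succ n ih =>
    intro t
    obtain ⟨F, hF, hF'⟩ := ih (!t)
    have key : ∀ x l, Red (x :: l) → (x :: l).length ≤ n + 1 → ty x = t → l ∈ F := by
      intro x l h1 h2 h3
      refine hF' l (List.IsChain.tail h1) (by simpa using h2) ?_
      intro y hy
      rcases l with _ | ⟨z, l⟩
      · simp at hy
      · simp at hy
        subst hy
        have := ((red_cons2 _ _ _).1 h1).1
        rw [h3] at this
        revert this; cases t <;> cases ty z <;> simp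
    cases t with
    | true =>
      refine ⟨insert [] (F.image (fun l => Lt.a :: l)), ?_, ?_⟩
      · have h1 := Finset.card_insert_le [] (F.image (fun l => Lt.a :: l))
        have h2 := Finset.card_image_le (s := F) (f := fun l => Lt.a :: l)
        have h3 : 1 ≤ 2 ^ n := Nat.one_le_two_pow
        rw [pow_succ] at *; omega
      · intro l h1 h2 h3
        rcases l with _ | ⟨x, l⟩
        · simp
        · have hx : ty x = true := h3 x (by simp)
          have hl := key x l h1 h2 hx
          cases x <;> simp_all [ty]
    | false =>
      refine ⟨insert [] (F.image (fun l => Lt.b :: l) ∪ F.image (fun l => Lt.c :: l)), ?_, ?_⟩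
      · have h1 := Finset.card_insert_le []
          (F.image (fun l => Lt.b :: l) ∪ F.image (fun l => Lt.c :: l))
        have h2 := Finset.card_image_le (s := F) (f := fun l => Lt.b :: l)
        have h3 := Finset.card_image_le (s := F) (f := fun l => Lt.c :: l)
        have h4 := Finset.card_union_le (F.image (fun l => Lt.b :: l)) (F.image (fun l => Lt.c :: l))
        rw [pow_succ]; omega
      · intro l h1 h2 h3
        rcases l with _ | ⟨x, l⟩
        · simp
        · have hx : ty x = false := h3 x (by simp)
          have hl := key x l h1 h2 hx
          cases x <;> simp_all [ty]

open Classical in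
lemma card_ball (n : ℕ) (S : Finset Gfp) (hS : ∀ g ∈ S, len g ≤ n) :
    S.card + 2 ≤ 2 ^ (n + 2) := by
  obtain ⟨F, hF, hF'⟩ := words n true
  obtain ⟨E, hE, hE'⟩ := words n false
  have h1 : S.card ≤ (F ∪ E).card := by
    apply Finset.card_le_card_of_injOn nf
    · intro g hg
      have hl := hS g hg
      have hr := nf_red g
      rw [Finset.coe_union]
      rcases hc : nf g with _ | ⟨x, l⟩
      · left
        exact hF' [] (by simp [Red]) (by simp) (by simp)
      · rw [hc] at hr
        simp only [len, hc] at hl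
        cases hx : ty x with
        | true => left; exact hF' _ hr hl (by simpa using hx)
        | false => right; exact hE' _ hr hl (by simpa using hx)
    · intro g _ h _ e
      exact nf_inj e
  have h2 := Finset.card_union_le F E
  rw [pow_succ]; omega

lemma small (R : ℝ) (hR : 2 ≤ R) (n : ℕ) (h1 : (n : ℝ) ≤ 2 * R) (h2 : 2 * R < n + 1)
    (h5 : R < 5) (c : ℕ) (hc : c + 2 ≤ 2 ^ (n + 2)) (h : R ^ 6 ≤ (c : ℝ)) : False := by
  have hn : n < 10 := by
    have : (n : ℝ) < 10 := by linarith
    exact_mod_cast this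
  have hn3 : 3 < n := by
    have : (3 : ℝ) < n := by linarith
    exact_mod_cast this
  have hp : ((n : ℝ) / 2) ^ 6 ≤ R ^ 6 := by
    apply pow_le_pow_left₀ (by positivity); linarith
  have hc' : (c : ℝ) + 2 ≤ 2 ^ (n + 2) := by exact_mod_cast hc
  interval_cases n <;> norm_num at hp hc' <;> linarith

open Classical in
theorem main (R : ℝ) (hR : 2 ≤ R) (S : Finset Gfp)
    (hS : ↑S ⊆ ballW (2 * R)) (hcard : R ^ 6 ≤ (S.card : ℝ)) :
    R ^ 3 ≤ (Nat.card ↥(commSet ↑S ↑S) : ℝ) := by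
  set N := ⌊2 * R⌋₊ with hN
  have hN1 : (N : ℝ) ≤ 2 * R := Nat.floor_le (by linarith)
  have hN2 : 2 * R < N + 1 := Nat.lt_floor_add_one _
  have hlen : ∀ g ∈ S, len g ≤ N := fun g hg => Nat.le_floor (len_ball _ g (hS hg))
  rcases lt_or_ge R 5 with h5 | h5
  · exact (small R hR N hN1 hN2 h5 _ (card_ball N S hlen) hcard).elim
  have hSone : 1 < S.card := by
    have : (5 : ℝ) ^ 6 ≤ R ^ 6 := pow_le_pow_left₀ (by norm_num) h5 6
    have : (1 : ℝ) < S.card := by linarith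
    exact_mod_cast this
  obtain ⟨g, hg, hg1⟩ := Finset.exists_mem_ne hSone 1
  have hfib := Finset.card_le_mul_card_image (f := fun h => g * h * g⁻¹ * h⁻¹) S (8 * N + 2) (by
    intro c _
    rcases Finset.eq_empty_or_nonempty (S.filter fun h => g * h * g⁻¹ * h⁻¹ = c) with h0 | ⟨h0, hh0⟩
    · rw [h0]; simp
    obtain ⟨hm0, he0⟩ := Finset.mem_filter.1 hh0
    have hc : ((S.filter fun h => g * h * g⁻¹ * h⁻¹ = c).image (fun h => h0⁻¹ * h)).card
        = (S.filter fun h => g * h * g⁻¹ * h⁻¹ = c).card :=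
      Finset.card_image_of_injective _ (mul_right_injective _)
    rw [← hc]
    have hN1' : 1 ≤ N := Nat.le_floor (by push_cast; linarith)
    refine (card_comm g hg1 (2 * N) (by omega) _ ?_).trans ?_
    · intro k hk
      obtain ⟨h, hh, rfl⟩ := Finset.mem_image.1 hk
      obtain ⟨hm, he⟩ := Finset.mem_filter.1 hh
      constructor
      · have e : h * g⁻¹ * h⁻¹ = h0 * g⁻¹ * h0⁻¹ := by
          rw [← he0] at he
          simpa [mul_assoc] using he
        have e2 : h * g * h⁻¹ = h0 * g * h0⁻¹ := by
          have := congrArg (fun x => x⁻¹) e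
          simpa [mul_assoc] using this
        calc h0⁻¹ * h * g = h0⁻¹ * (h * g * h⁻¹) * h := by group
          _ = g * (h0⁻¹ * h) := by rw [e2]; group
      · have := len_mul h0⁻¹ h
        have := len_inv h0
        have := hlen h hm
        have := hlen h0 hm0
        omega
    · have := hlen g hg
      omega)
  set I := S.image (fun h => g * h * g⁻¹ * h⁻¹) with hI
  have hfin : (commSet (S : Set Gfp) S).Finite := by
    refine Set.Finite.subset ((S ×ˢ S).image (fun p => p.1 * p.2 * p.1⁻¹ * p.2⁻¹)).finite_toSet ?_
    rintro z ⟨u, hu, v, hv, rfl⟩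
    simp only [Finset.coe_image, Set.mem_image]
    exact ⟨(u, v), by simpa using ⟨hu, hv⟩, rfl⟩
  have hIc : I.card ≤ Nat.card ↥(commSet (S : Set Gfp) S) := by
    rw [Nat.card_coe_set_eq, ← Set.ncard_coe_finset]
    apply Set.ncard_le_ncard _ hfin
    intro z hz
    obtain ⟨h, hh, rfl⟩ := Finset.mem_image.1 hz
    exact ⟨g, hg, h, hh, rfl⟩
  have hIR : (I.card : ℝ) ≤ Nat.card ↥(commSet (S : Set Gfp) S) := by exact_mod_cast hIc
  refine le_trans ?_ hIR
  have h1 : (S.card : ℝ) ≤ (8 * N + 2) * I.card := by exact_mod_cast hfib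
  have h2 : (8 * N + 2 : ℝ) ≤ R ^ 3 := by nlinarith [mul_nonneg (sub_nonneg.2 h5) (sub_nonneg.2 h5)]
  have h3 : (8 * N + 2 : ℝ) * I.card ≤ R ^ 3 * I.card :=
    mul_le_mul_of_nonneg_right h2 (Nat.cast_nonneg _)
  have h4 : R ^ 3 * R ^ 3 ≤ R ^ 3 * I.card := by
    calc R ^ 3 * R ^ 3 = R ^ 6 := by ring
      _ ≤ _ := by linarith
  exact le_of_mul_le_mul_left h4 (by positivity)

end MC

/-- **Many commutators (free-product version of Bourgain–Gamburd's Lemma 3).**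
If `R ≥ 2` and `S ⊆ B_{2R}(e)` has `|S| ≥ R⁶`, then `|[S,S]| ≥ R³`. -/
theorem many_commutators (R : ℝ) (hR : 2 ≤ R) (S : Finset Gfp)
    (hS : ↑S ⊆ ballW (2 * R)) (hcard : R ^ 6 ≤ (S.card : ℝ)) :
    R ^ 3 ≤ (Nat.card ↥(commSet ↑S ↑S) : ℝ) := by
  exact MC.main R hR S hS hcard
end

section
/- Let G = (ℤ/2ℤ) * (ℤ/3ℤ) with a, b the canonical generators of orders 2 and 3, and let B_R(e) denote the ball of radius R around the identity in the word metric with respect to {a, b}. Let R > 2 be real and let S ⊆ B_{2R}(e) be a finite set such that [[S,S],[S,S]] = {e}, i.e., every two elements of the commutator set [S,S] commute. Then |S| < R⁶. -/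
inductive Ltr | a | b | c
  deriving DecidableEq

namespace Ltr

def ty : Ltr → Bool
  | a => true
  | b => false
  | c => false

def inv : Ltr → Ltr
  | a => a
  | b => c
  | c => b

def act : Ltr → List Ltr → List Ltr
  | a, a :: l => l
  | a, l => a :: l
  | b, b :: l => c :: l
  | b, c :: l => l
  | b, l => b :: l
  | c, c :: l => b :: l
  | c, b :: l => l
  | c, l => c :: l

def Red (l : List Ltr) : Prop := l.IsChain (fun x y => ty x ≠ ty y)

theorem red_act (x : Ltr) (l : List Ltr) (h : Red l) : Red (act x l) := by
  rcases l with _ | ⟨y, _ | ⟨z, l⟩⟩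
  · cases x <;> simp [act, Red]
  · cases x <;> cases y <;> simp [act, Red, ty]
  · cases x <;> cases y <;> cases z <;> simp_all [act, Red, ty]

theorem act_inv (x : Ltr) (l : List Ltr) (h : Red l) : act (inv x) (act x l) = l := by
  rcases l with _ | ⟨y, _ | ⟨z, l⟩⟩
  · cases x <;> simp [act, inv]
  · cases x <;> cases y <;> simp [act, inv]
  · cases x <;> cases y <;> cases z <;> simp_all [act, Red, ty, inv]

theorem act_b3 (l : List Ltr) (h : Red l) : act b (act b (act b l)) = l := by
  rcases l with _ | ⟨y, _ | ⟨z, l⟩⟩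
  · simp [act]
  · cases y <;> simp [act]
  · cases y <;> cases z <;> simp_all [act, Red, ty]

theorem act_cons (x : Ltr) (l : List Ltr) (h : Red (x :: l)) : act x l = x :: l := by
  rcases l with _ | ⟨z, l⟩
  · cases x <;> simp [act]
  · cases x <;> cases z <;> simp_all [act, Red, ty]

theorem act_append (x : Ltr) (l r : List Ltr) (h : l ≠ []) : act x (l ++ r) = act x l ++ r := by
  rcases l with _ | ⟨z, l⟩
  · simp at h
  · cases x <;> cases z <;> simp [act]

theorem length_act_le (x : Ltr) (l : List Ltr) : (act x l).length ≤ l.length + 1 := by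
  rcases l with _ | ⟨z, l⟩
  · cases x <;> simp [act]
  · cases x <;> cases z <;> simp [act] <;> omega

theorem le_length_act (x : Ltr) (l : List Ltr) : l.length ≤ (act x l).length + 1 := by
  rcases l with _ | ⟨z, l⟩
  · cases x <;> simp [act]
  · cases x <;> cases z <;> simp [act] <;> omega

abbrev NF := {l : List Ltr // Red l}

def pA : Equiv.Perm NF where
  toFun s := ⟨act a s.1, red_act _ _ s.2⟩
  invFun s := ⟨act a s.1, red_act _ _ s.2⟩
  left_inv s := Subtype.ext (act_inv a s.1 s.2)
  right_inv s := Subtype.ext (act_inv a s.1 s.2)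

def pB : Equiv.Perm NF where
  toFun s := ⟨act b s.1, red_act _ _ s.2⟩
  invFun s := ⟨act c s.1, red_act _ _ s.2⟩
  left_inv s := Subtype.ext (act_inv b s.1 s.2)
  right_inv s := Subtype.ext (act_inv c s.1 s.2)

theorem pA2 : pA ^ 2 = 1 := by
  ext s : 2
  exact act_inv a s.1 s.2

theorem pB3 : pB ^ 3 = 1 := by
  ext s : 2
  exact act_b3 s.1 s.2

theorem zA : zmultiplesHom (Additive (Equiv.Perm NF)) (Additive.ofMul pA) ((2 : ℕ) : ℤ) = 0 := by
  have h : pA ^ ((2 : ℕ) : ℤ) = 1 := by rw [zpow_natCast, pA2]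
  exact congrArg Additive.ofMul h

theorem zB : zmultiplesHom (Additive (Equiv.Perm NF)) (Additive.ofMul pB) ((3 : ℕ) : ℤ) = 0 := by
  have h : pB ^ ((3 : ℕ) : ℤ) = 1 := by rw [zpow_natCast, pB3]
  exact congrArg Additive.ofMul h

def hA : Multiplicative (ZMod 2) →* Equiv.Perm NF :=
  AddMonoidHom.toMultiplicativeLeft (ZMod.lift 2 ⟨zmultiplesHom _ (Additive.ofMul pA), zA⟩)

def hB : Multiplicative (ZMod 3) →* Equiv.Perm NF :=
  AddMonoidHom.toMultiplicativeLeft (ZMod.lift 3 ⟨zmultiplesHom _ (Additive.ofMul pB), zB⟩)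

def phi : Gfp →* Equiv.Perm NF := Monoid.Coprod.lift hA hB

theorem phi_a : phi genA = pA := by
  have := ZMod.lift_coe 2 ⟨zmultiplesHom _ (Additive.ofMul pA), zA⟩ 1
  simp at this
  simp [phi, genA, hA, this]

theorem phi_b : phi genB = pB := by
  have := ZMod.lift_coe 3 ⟨zmultiplesHom _ (Additive.ofMul pB), zB⟩ 1
  simp at this
  simp [phi, genB, hB, this]

def val : Ltr → Gfp
  | a => genA
  | b => genB
  | c => genB⁻¹

theorem a2 : genA * genA = 1 := by
  unfold genA
  rw [← map_mul, ← map_one Monoid.Coprod.inl]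
  congr 1

theorem b3 : genB * genB * genB = 1 := by
  unfold genB
  rw [← map_mul, ← map_mul, ← map_one Monoid.Coprod.inr]
  congr 1

theorem a_inv : genA⁻¹ = genA := inv_eq_of_mul_eq_one_left a2

theorem bb : genB * genB = genB⁻¹ := eq_inv_of_mul_eq_one_left b3

theorem bb' : genB⁻¹ * genB⁻¹ = genB := by rw [← mul_inv_rev, bb, inv_inv]

theorem val_inv (x : Ltr) : val (inv x) = (val x)⁻¹ := by
  cases x <;> simp [val, inv, a_inv]

def valL (l : List Ltr) : Gfp := (l.map val).prod

theorem valL_cons (x l) : valL (x :: l) = val x * valL l := by simp [valL]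
theorem valL_append (l m) : valL (l ++ m) = valL l * valL m := by simp [valL]
@[simp] theorem valL_nil : valL [] = 1 := by simp [valL]

theorem valL_act (x l) : valL (act x l) = val x * valL l := by
  have h1 := bb
  have h2 := bb'
  have h3 := a2
  rcases l with _ | ⟨z, l⟩
  · cases x <;> simp [act, valL_cons]
  · cases x <;> cases z <;> simp [act, valL_cons, val, ← mul_assoc, h1, h2, h3]

theorem phi_val (x : Ltr) (s : NF) : (phi (val x) s).1 = act x s.1 := by
  cases x
  · simp [val, phi_a, pA]
  · simp [val, phi_b, pB]
  · simp only [val, map_inv, phi_b]; rfl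

theorem exists_list (g : Gfp) : ∃ l, valL l = g := by
  induction g using Monoid.Coprod.induction_on with
  | inl m =>
    have : m = 1 ∨ m = Multiplicative.ofAdd 1 := by revert m; decide
    rcases this with rfl | rfl
    · exact ⟨[], by simp⟩
    · exact ⟨[a], by simp [valL, val, genA]⟩
  | inr m =>
    have : m = 1 ∨ m = Multiplicative.ofAdd 1 ∨ m = (Multiplicative.ofAdd 1)⁻¹ := by
      revert m; decide
    rcases this with rfl | rfl | rfl
    · exact ⟨[], by simp⟩
    · exact ⟨[b], by simp [valL, val, genB]⟩
    · exact ⟨[c], by simp [valL, val, genB]⟩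
  | mul x y hx hy =>
    obtain ⟨l, rfl⟩ := hx
    obtain ⟨m, rfl⟩ := hy
    exact ⟨l ++ m, valL_append _ _⟩

def nf (g : Gfp) : List Ltr := (phi g ⟨[], by simp [Red]⟩).1

theorem red_nf (g) : Red (nf g) := (phi g _).2

theorem nf_one : nf 1 = [] := by simp [nf]

theorem nf_val_mul (x g) : nf (val x * g) = act x (nf g) := by
  simp [nf, map_mul, phi_val]

theorem valL_nf (g) : valL (nf g) = g := by
  obtain ⟨l, rfl⟩ := exists_list g
  induction l with
  | nil => simp [nf_one]
  | cons x l ih => rw [valL_cons, nf_val_mul, valL_act, ih]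

theorem nf_valL (l) (h : Red l) : nf (valL l) = l := by
  induction l with
  | nil => simp [nf_one]
  | cons x l ih =>
    rw [valL_cons, nf_val_mul, ih (List.IsChain.tail h), act_cons _ _ h]

theorem nf_inj {g h : Gfp} (e : nf g = nf h) : g = h := by
  rw [← valL_nf g, e, valL_nf]

def len (g : Gfp) : ℕ := (nf g).length

theorem len_valL_le (l) : len (valL l) ≤ l.length := by
  induction l with
  | nil => simp [len, nf_one]
  | cons x l ih =>
    rw [valL_cons, len, nf_val_mul]
    have := length_act_le x (nf (valL l))
    simp [len] at *; omega

theorem len_mul_le (g h) : len (g * h) ≤ len g + len h := by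
  conv_lhs => rw [← valL_nf g, ← valL_nf h, ← valL_append]
  exact (len_valL_le _).trans (by simp [len])

def invL (l : List Ltr) : List Ltr := (l.map inv).reverse

theorem valL_invL (l) : valL (invL l) = (valL l)⁻¹ := by
  induction l with
  | nil => simp [invL]
  | cons x l ih =>
    have : invL (x :: l) = invL l ++ [inv x] := by simp [invL]
    rw [this, valL_append, ih, valL_cons, valL_cons, val_inv]; simp

theorem inv_inv' (x) : inv (inv x) = x := by cases x <;> rfl
theorem ty_inv (x) : ty (inv x) = ty x := by cases x <;> rfl

theorem invL_invL (l) : invL (invL l) = l := by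
  simp [invL, Function.comp_def, inv_inv']

theorem red_invL (l) (h : Red l) : Red (invL l) := by
  unfold Red invL at *
  rw [List.isChain_reverse, List.isChain_map]
  exact h.imp (by simp [ty_inv, flip, eq_comm])

theorem nf_inv (g) : nf g⁻¹ = invL (nf g) := by
  rw [← nf_valL _ (red_invL _ (red_nf g)), valL_invL, valL_nf]

theorem len_inv (g) : len g⁻¹ = len g := by simp [len, nf_inv, invL]

theorem nf_mul_append (u : Gfp) (P r : List Ltr) (h : Red (P ++ r)) (hl : len u ≤ P.length) :
    nf (u * valL (P ++ r)) = nf (u * valL P) ++ r ∧ P.length ≤ len (u * valL P) + len u := by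
  have hP : Red P := List.IsChain.left_of_append h
  have key : ∀ l : List Ltr, l.length ≤ P.length →
      nf (valL l * valL (P ++ r)) = nf (valL l * valL P) ++ r ∧
        P.length ≤ len (valL l * valL P) + l.length := by
    intro l
    induction l with
    | nil => simp [nf_valL _ h, nf_valL _ hP, len]
    | cons x l ih =>
      intro hl
      simp only [List.length_cons] at hl
      obtain ⟨h1, h2⟩ := ih (by omega)
      rw [valL_cons, mul_assoc, mul_assoc, nf_val_mul, nf_val_mul, h1, act_append]
      · refine ⟨rfl, ?_⟩
        have := le_length_act x (nf (valL l * valL P))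
        simp only [len, nf_val_mul, List.length_cons] at *
        omega
      · intro h0
        simp [len, h0] at h2
        omega
  have := key (nf u) hl
  rwa [valL_nf] at this

theorem nf_append_mul (u : Gfp) (Q r : List Ltr) (h : Red (Q ++ r)) (hl : len u ≤ r.length) :
    ∃ t, nf (valL (Q ++ r) * u) = Q ++ t := by
  have h1 := red_invL _ h
  have e : invL (Q ++ r) = invL r ++ invL Q := by simp [invL]
  rw [e] at h1
  have := (nf_mul_append u⁻¹ (invL r) (invL Q) h1 (by rw [len_inv]; simpa [invL])).1
  refine ⟨invL (nf (u⁻¹ * valL (invL r))), ?_⟩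
  have e2 : valL (Q ++ r) * u = (u⁻¹ * valL (invL r ++ invL Q))⁻¹ := by
    rw [← e, valL_invL]; simp
  rw [e2, nf_inv, this]
  conv_rhs => rw [← invL_invL Q]
  simp [invL]

/-- Centralizers of long elements. -/
theorem card_long (W : Gfp) (M : ℕ) (hW : 3 * M ≤ len W) (T : Finset Gfp)
    (hT : ∀ u ∈ T, len u ≤ M ∧ u * W = W * u) : T.card ≤ 2 * M + 1 := by
  set P := (nf W).take M with hP
  have hPl : P.length = M := by simp [hP, len] at *; omega
  have key : ∀ u ∈ T, nf (u * valL P) = (nf W).take (len (u * valL P)) ∧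
      len (u * valL P) ≤ 2 * M := by
    intro u hu
    obtain ⟨hu1, hu2⟩ := hT u hu
    have hPl2 : len (valL P) ≤ M := (len_valL_le P).trans hPl.le
    have hle := len_mul_le u (valL P)
    refine ⟨?_, by omega⟩
    have e1 : P ++ (nf W).drop M = nf W := List.take_append_drop _ _
    have e2 := List.take_append_drop (len W - M) (nf W)
    obtain ⟨h1, -⟩ := nf_mul_append u P ((nf W).drop M) (by rw [e1]; exact red_nf W) (by omega)
    obtain ⟨t, h2⟩ := nf_append_mul u ((nf W).take (len W - M)) ((nf W).drop (len W - M))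
      (by rw [e2]; exact red_nf W) (by simp [len] at *; omega)
    rw [e1, valL_nf] at h1
    rw [e2, valL_nf, ← hu2, h1] at h2
    have h3 := congrArg (List.take (len (u * valL P))) h2
    rw [List.take_append_of_le_length (by simp [len]),
      List.take_append_of_le_length (by simp [len] at *; omega), List.take_take,
      min_eq_left (by omega)] at h3
    rw [← h3]; simp [len]
  have := Finset.card_le_card_of_injOn (t := Finset.range (2 * M + 1)) (fun u => len (u * valL P))
    (fun u hu => by have := (key u hu).2; simp; omega)
    (fun u hu v hv e => by
      have h := (key u hu).1
      simp only at e
      rw [e, ← (key v hv).1] at h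
      exact mul_right_cancel (nf_inj h))
  simpa using this

/-- Centralizers of letters. -/
theorem no_comm (x y : Ltr) (l : List Ltr) (hl : Red (y :: l)) (hxy : ty x ≠ ty y)
    (h : val x * valL (y :: l) = valL (y :: l) * val x) : False := by
  have hr : Red (x :: y :: l) := List.IsChain.cons_cons hxy hl
  have h1 : nf (val x * valL (y :: l)) = x :: y :: l := by
    rw [← valL_cons, nf_valL _ hr]
  have hlen : len (val x) ≤ 1 := by simpa [valL] using len_valL_le [x]
  have h2 : ∃ t, nf (valL (y :: l) * val x) = y :: t := by
    rcases l with _ | ⟨z, l⟩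
    · refine ⟨[x], ?_⟩
      have : valL [y] * val x = valL [y, x] := by simp [valL]
      rw [this, nf_valL]
      simp [Red, hxy.symm]
    · exact nf_append_mul (val x) [y] (z :: l) hl (by simp; omega)
  obtain ⟨t, h2⟩ := h2
  rw [← h, h1] at h2
  injection h2 with h3 _
  exact hxy (by rw [h3])

theorem comm_letter (x : Ltr) (u : Gfp) (h : val x * u = u * val x) :
    ∃ l ∈ ([[], [a], [b], [c]] : List (List Ltr)), u = valL l := by
  have hu := valL_nf u
  have hr := red_nf u
  generalize nf u = l at hu hr
  subst hu
  rcases l with _ | ⟨y, l⟩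
  · exact ⟨[], by simp⟩
  · by_cases hxy : ty x = ty y
    · rcases l with _ | ⟨z, l⟩
      · refine ⟨[y], ?_⟩; cases y <;> simp
      · exfalso
        have hr2 : Red (z :: l) := List.IsChain.tail hr
        have hyz : ty y ≠ ty z := by simp [Red] at hr; exact hr.1
        refine no_comm x z l hr2 (hxy ▸ hyz) ?_
        have hc : val x * val y = val y * val x := by
          cases x <;> cases y <;> simp_all [val, ty]
        rw [valL_cons y] at h
        have : val y * (val x * valL (z :: l)) = val y * (valL (z :: l) * val x) := by
          rw [← mul_assoc, ← hc, mul_assoc, h, mul_assoc]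
        exact mul_left_cancel this
    · exact (no_comm x y l hr hxy h).elim

theorem pow_long (l : List Ltr) (hl : Red (l ++ l)) (h0 : l ≠ []) (k : ℕ) :
    ∃ t, Red (l ++ t) ∧ valL (l ++ t) = valL l ^ (k + 1) ∧ k + 1 ≤ (l ++ t).length := by
  have hpos := List.length_pos_iff.2 h0
  induction k with
  | zero => exact ⟨[], by rw [List.append_nil]; exact List.IsChain.left_of_append hl, by simp, by simp; omega⟩
  | succ k ih =>
    obtain ⟨t, h1, h2, h3⟩ := ih
    refine ⟨l ++ t, ?_, ?_, ?_⟩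
    · unfold Red at *
      rw [List.isChain_append] at hl ⊢
      refine ⟨hl.1, h1, ?_⟩
      rw [List.head?_append_of_ne_nil _ h0]
      exact hl.2.2
    · rw [valL_append, h2, ← pow_succ']
    · rw [List.length_append]; omega

theorem same_ty (x y : Ltr) (h : ty x = ty y) :
    ∃ l : List Ltr, l.length ≤ 1 ∧ val y * val x = valL l := by
  cases x <;> cases y <;> simp [ty] at h
  · exact ⟨[], by simp [val, a2]⟩
  · exact ⟨[c], by simp [val, bb, valL]⟩
  · exact ⟨[], by simp [val]⟩
  · exact ⟨[], by simp [val]⟩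
  · exact ⟨[b], by simp [val, bb', valL]⟩

theorem classify (n : ℕ) : ∀ w : Gfp, len w ≤ n → w ≠ 1 →
    (∃ h x, w = h * val x * h⁻¹) ∨ ∀ m, ∃ k, m ≤ len (w ^ k) := by
  induction n with
  | zero =>
    intro w hw h1
    exfalso; apply h1
    have : nf w = [] := by simpa [len] using hw
    rw [← valL_nf w, this, valL_nil]
  | succ n ih =>
    intro w hw h1
    have hu := valL_nf w
    have hr := red_nf w
    unfold len at hw
    generalize nf w = l at hu hr hw
    subst hu
    rcases l with _ | ⟨x, l⟩
    · simp at h1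
    rcases List.eq_nil_or_concat l with rfl | ⟨m, y, rfl⟩
    · left; exact ⟨1, x, by simp [valL]⟩
    by_cases hxy : ty x = ty y
    · obtain ⟨p, hp1, hp2⟩ := same_ty x y hxy
      simp only [List.concat_eq_append] at *
      set w := valL (x :: (m ++ [y])) with hw'
      have e : (val x)⁻¹ * w * val x = valL (m ++ p) := by
        rw [hw', valL_cons, valL_append, valL_append, ← hp2]
        simp [valL, mul_assoc]
      have hne : valL (m ++ p) ≠ 1 := by
        rw [← e]
        intro h
        apply h1
        have : w = val x * ((val x)⁻¹ * w * val x) * (val x)⁻¹ := by group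
        rw [this, h]; simp
      rcases ih (valL (m ++ p)) ((len_valL_le _).trans (by simp at *; omega)) hne with
        ⟨h, z, hz⟩ | h
      · left
        refine ⟨val x * h, z, ?_⟩
        rw [← e] at hz
        have : w = val x * ((val x)⁻¹ * w * val x) * (val x)⁻¹ := by group
        rw [this, hz]; group
      · right
        intro M
        obtain ⟨k, hk⟩ := h (M + 2 * len (val x))
        refine ⟨k, ?_⟩
        have e2 : valL (m ++ p) ^ k = (val x)⁻¹ * w ^ k * val x := by
          rw [← e]
          have := conj_pow (i := k) (a := (val x)⁻¹) (b := w)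
          rwa [inv_inv] at this
        rw [e2] at hk
        have h1 := len_mul_le ((val x)⁻¹ * w ^ k) (val x)
        have h2 := len_mul_le ((val x)⁻¹) (w ^ k)
        rw [len_inv] at h2
        omega
    · right
      intro M
      obtain ⟨t, h1, h2, h3⟩ := pow_long (x :: m.concat y) (by
        unfold Red at *
        rw [List.isChain_append]
        refine ⟨hr, hr, ?_⟩
        simp only [List.concat_eq_append]
        rw [← List.cons_append, List.getLast?_append]
        simpa [eq_comm] using hxy) (by simp) M
      refine ⟨M + 1, ?_⟩
      rw [← h2, len, nf_valL _ h1]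
      omega

theorem card_centralizer (w : Gfp) (hw : w ≠ 1) (M : ℕ) (hM : 2 ≤ M) (T : Finset Gfp)
    (hT : ∀ u ∈ T, len u ≤ M ∧ u * w = w * u) : T.card ≤ 2 * M + 1 := by
  classical
  rcases classify _ w le_rfl hw with ⟨h, x, rfl⟩ | h
  · have := Finset.card_le_card_of_injOn
      (s := T) (t := (([[], [a], [b], [c]] : List (List Ltr)).map valL).toFinset)
      (fun u => h⁻¹ * u * h)
      (fun u hu => by
        have h1 := (hT u hu).2
        obtain ⟨l, hl, e⟩ := comm_letter x (h⁻¹ * u * h) (by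
          have : h⁻¹ * (u * (h * val x * h⁻¹)) * h = h⁻¹ * ((h * val x * h⁻¹) * u) * h := by
            rw [h1]
          have e1 : h⁻¹ * (u * (h * val x * h⁻¹)) * h = h⁻¹ * u * h * val x := by group
          have e2 : h⁻¹ * ((h * val x * h⁻¹) * u) * h = val x * (h⁻¹ * u * h) := by group
          rw [← e1, ← e2, this])
        simp only [List.coe_toFinset, Set.mem_ofPred_eq, List.mem_map]
        exact ⟨l, hl, e.symm⟩)
      (fun u _ v _ e => by simpa using e)
    have h2 := List.toFinset_card_le (([[], [a], [b], [c]] : List (List Ltr)).map valL)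
    simp only [List.length_map, List.length_cons, List.length_nil] at h2
    omega
  · obtain ⟨k, hk⟩ := h (3 * M)
    exact card_long (w ^ k) M hk T fun u hu =>
      ⟨(hT u hu).1, ((show Commute u w from (hT u hu).2).pow_right k)⟩

/-- Small balls. -/
def wab : ℕ → List (List Ltr) × List (List Ltr)
  | 0 => ([[]], [[]])
  | n + 1 => ([] :: (wab n).2.map (List.cons a),
      [] :: ((wab n).1.map (List.cons b) ++ (wab n).1.map (List.cons c)))

theorem mem_wab (n : ℕ) : ∀ l : List Ltr, Red l → l.length ≤ n →
    ((∀ x ∈ l.head?, ty x = true) → l ∈ (wab n).1) ∧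
    ((∀ x ∈ l.head?, ty x = false) → l ∈ (wab n).2) := by
  induction n with
  | zero => intro l _ h; simp at h; subst h; simp [wab]
  | succ n ih =>
    intro l hr hl
    rcases l with _ | ⟨x, l⟩
    · simp [wab]
    have := ih l (List.IsChain.tail hr) (by simpa using hl)
    have hh := (List.isChain_cons.1 hr).1
    cases x <;> simp_all [wab, ty]

theorem card_small (T : Finset Gfp) (hT : ∀ u ∈ T, len u ≤ 6) : T.card ≤ 64 := by
  classical
  have := Finset.card_le_card_of_injOn (s := T) (t := ((wab 6).1 ++ (wab 6).2).toFinset) nf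
    (fun u hu => by
      have h := mem_wab 6 (nf u) (red_nf u) (hT u hu)
      simp only [List.coe_toFinset, Set.mem_ofPred_eq, List.mem_append]
      rcases hn : nf u with _ | ⟨x, l⟩
      · left; simp [wab]
      · rw [hn] at h
        cases hx : ty x
        · right; exact h.2 (by simpa using hx)
        · left; exact h.1 (by simpa using hx))
    (fun u _ v _ e => nf_inj e)
  refine this.trans ((List.toFinset_card_le _).trans ?_)
  decide

theorem card_bound (N : ℕ) (hN : 2 ≤ N) (S : Finset Gfp) (hS : ∀ u ∈ S, len u ≤ N)
    (hcomm : ∀ z₁ ∈ commSet ↑S ↑S, ∀ z₂ ∈ commSet ↑S ↑S, z₁ * z₂ = z₂ * z₁) :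
    S.card ≤ (8 * N + 1) * (4 * N + 1) := by
  classical
  by_cases hab : ∀ s ∈ S, ∀ t ∈ S, s * t = t * s
  · by_cases h1 : ∃ s ∈ S, s ≠ 1
    · obtain ⟨s, hs, h1⟩ := h1
      have := card_centralizer s h1 N hN S fun u hu => ⟨hS u hu, hab u hu s hs⟩
      nlinarith
    · push Not at h1
      have : S ⊆ {1} := fun s hs => by simp [h1 s hs]
      have := Finset.card_le_card this
      simp at this
      nlinarith
  · push Not at hab
    obtain ⟨s, hs, t, ht, hst⟩ := hab
    have hs1 : s ≠ 1 := by rintro rfl; simp at hst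
    have hz : s * t * s⁻¹ * t⁻¹ ≠ 1 := by
      intro h
      apply hst
      rw [mul_inv_eq_one, mul_inv_eq_iff_eq_mul] at h
      exact h
    set f : Gfp → Gfp := fun h => s * h * s⁻¹ * h⁻¹ with hf
    have hI : (S.image f).card ≤ 2 * (4 * N) + 1 := by
      apply card_centralizer _ hz _ (by omega)
      intro u hu
      obtain ⟨h, hh, rfl⟩ := Finset.mem_image.1 hu
      refine ⟨?_, hcomm _ ⟨s, hs, h, hh, rfl⟩ _ ⟨s, hs, t, ht, rfl⟩⟩
      have h1 := len_mul_le (s * h * s⁻¹) h⁻¹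
      have h2 := len_mul_le (s * h) s⁻¹
      have h3 := len_mul_le s h
      have h4 := hS s hs
      have h5 := hS h hh
      rw [len_inv] at h1 h2
      simp only [hf]
      omega
    have hfib : ∀ z ∈ S.image f, (S.filter (fun h => f h = z)).card ≤ 4 * N + 1 := by
      intro z hz
      obtain ⟨h0, hh0, rfl⟩ := Finset.mem_image.1 hz
      have := card_centralizer s hs1 (2 * N) (by omega)
        ((S.filter (fun h => f h = f h0)).image (fun h => h0⁻¹ * h)) (by
          intro u hu
          obtain ⟨h, hh, rfl⟩ := Finset.mem_image.1 hu
          obtain ⟨hh, e⟩ := Finset.mem_filter.1 hh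
          have h1 := len_mul_le h0⁻¹ h
          rw [len_inv] at h1
          have h2 := hS h hh
          have h3 := hS h0 hh0
          refine ⟨by omega, ?_⟩
          simp only [hf] at e
          have e1 : h * s⁻¹ * h⁻¹ = h0 * s⁻¹ * h0⁻¹ := by
            apply mul_left_cancel (a := s)
            simpa [mul_assoc] using e
          have e2 : h * s * h⁻¹ = h0 * s * h0⁻¹ := by
            have := congrArg (·⁻¹) e1
            simpa [mul_assoc] using this
          have e3 : h0⁻¹ * (h * s * h⁻¹) * h = h0⁻¹ * (h0 * s * h0⁻¹) * h := by rw [e2]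
          simpa [mul_assoc] using e3)
      rw [Finset.card_image_of_injective _ (mul_right_injective _)] at this
      omega
    have := Finset.card_le_mul_card_image (f := f) S (4 * N + 1) hfib
    nlinarith

theorem len_of_ball (R : ℝ) (g : Gfp) (hg : g ∈ ballW R) : (len g : ℝ) ≤ R := by
  obtain ⟨l, hl, hm, rfl⟩ := hg
  refine le_trans ?_ hl
  norm_cast
  clear hl
  induction l with
  | nil => simp [len, nf_one]
  | cons x l ih =>
    have ih' := ih fun y hy => hm y (List.mem_cons_of_mem _ hy)
    have hx : ∃ y, x = val y := by
      have := hm x List.mem_cons_self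
      simp only [genSet, Set.mem_insert_iff, Set.mem_singleton_iff] at this
      rcases this with rfl | rfl | rfl | rfl
      · exact ⟨a, rfl⟩
      · exact ⟨a, a_inv⟩
      · exact ⟨b, rfl⟩
      · exact ⟨c, rfl⟩
    obtain ⟨y, rfl⟩ := hx
    rw [List.prod_cons, len, nf_val_mul, List.length_cons]
    exact (length_act_le _ _).trans (Nat.succ_le_succ ih')

end Ltr

/-- **Sets with commuting commutators are small.** If `R > 2` and `S ⊆ B_{2R}(e)` is such
that `[[S,S],[S,S]] = {e}`, i.e. every two elements of the commutator set `[S,S]` commute,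
then `|S| < R⁶`. -/
theorem vanishing_second_commutator (R : ℝ) (hR : 2 < R) (S : Finset Gfp)
    (hS : ↑S ⊆ ballW (2 * R))
    (hcomm : ∀ z₁ ∈ commSet ↑S ↑S, ∀ z₂ ∈ commSet ↑S ↑S, z₁ * z₂ = z₂ * z₁) :
    (S.card : ℝ) < R ^ 6 := by
  have hlen : ∀ u ∈ S, (Ltr.len u : ℝ) ≤ 2 * R := fun u hu => Ltr.len_of_ball _ _ (hS hu)
  rcases lt_or_ge R (7 / 2) with h | h
  · have h1 : S.card ≤ 64 := Ltr.card_small S fun u hu => by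
      have h2 := hlen u hu
      have h3 : (Ltr.len u : ℝ) < 7 := by linarith
      have h4 : Ltr.len u < 7 := by exact_mod_cast h3
      omega
    have h2 : (S.card : ℝ) ≤ 64 := by exact_mod_cast h1
    have h3 : (2 : ℝ) ^ 6 < R ^ 6 := pow_lt_pow_left₀ hR (by norm_num) (by norm_num)
    norm_num at h3
    linarith
  · have hR0 : (0 : ℝ) ≤ 2 * R := by linarith
    have hN : (⌊2 * R⌋₊ : ℝ) ≤ 2 * R := Nat.floor_le hR0
    have h1 := Ltr.card_bound ⌊2 * R⌋₊ (Nat.le_floor (by push_cast; linarith)) S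
      (fun u hu => Nat.le_floor (hlen u hu)) hcomm
    have h2 : (S.card : ℝ) ≤ (8 * (⌊2 * R⌋₊ : ℝ) + 1) * (4 * (⌊2 * R⌋₊ : ℝ) + 1) := by
      exact_mod_cast h1
    have h3 : (8 * (⌊2 * R⌋₊ : ℝ) + 1) * (4 * (⌊2 * R⌋₊ : ℝ) + 1)
        ≤ (8 * (2 * R) + 1) * (4 * (2 * R) + 1) := by gcongr
    have h4 : (7 / 2 : ℝ) ^ 4 ≤ R ^ 4 := pow_le_pow_left₀ (by norm_num) h 4
    have h5 : (7 / 2 : ℝ) ^ 4 * R ^ 2 ≤ R ^ 4 * R ^ 2 :=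
      mul_le_mul_of_nonneg_right h4 (sq_nonneg R)
    have h6 : R ^ 4 * R ^ 2 = R ^ 6 := by ring
    rw [h6] at h5
    norm_num at h5
    nlinarith
end

section
/- Let κ ≥ 1 and D > 1, and let S ⊂ SL₂(ℤ) be a finite set whose images in PSL₂(ℤ) freely generate a free semigroup. Then there exists c = c(κ, D, S) > 0 such that for every ε > 0 there is C(ε) > 0 with the following property: for every integer q ≥ 2 in whose prime factorization no prime occurs with exponent > κ, every divisor q' of q with q' ≥ q^{1/D}, every subgroup H ≤ SL₂(ℤ/q'ℤ) whose projection to SL₂(ℤ/pℤ) is a proper subgroup for each prime p | q', and every coset aH in SL₂(ℤ/q'ℤ), one has ν_{q'}^{(⌈c log q⌉)}(aH) ≤ C(ε) q^ε. -/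
/-- `SL₂(ℤ)`. -/
abbrev SL2Z := Matrix.SpecialLinearGroup (Fin 2) ℤ

/-- The element `g_a g_{a'} = [[0,1],[1,a]]·[[0,1],[1,a']] = [[1,a'],[a,aa'+1]]` of `SL₂(ℤ)`. -/
def gPair (a a' : ℕ) : SL2Z :=
  ⟨!![1, (a' : ℤ); (a : ℤ), (a : ℤ) * (a' : ℤ) + 1], by
    simp [Matrix.det_fin_two_of]; ring⟩

/-- The generating set `S_A = {g_a g_{a'} : a, a' ∈ A}` of the semigroup `Γ_A`. -/
def gensSet (A : Finset ℕ) : Set SL2Z := {g | ∃ a ∈ A, ∃ a' ∈ A, g = gPair a a'}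

/-- The semigroup `Γ_A ⊂ SL₂(ℤ)`: all nonempty products of the generators `g_a g_{a'}`. -/
def GammaA (A : Finset ℕ) : Set SL2Z :=
  {g | ∃ l : List SL2Z, l ≠ [] ∧ (∀ x ∈ l, x ∈ gensSet A) ∧ l.prod = g}

/-- Reduction modulo `q`, `SL₂(ℤ) →* SL₂(ℤ/qℤ)`. -/
def modq (q : ℕ) : SL2Z →* Matrix.SpecialLinearGroup (Fin 2) (ZMod q) :=
  Matrix.SpecialLinearGroup.map (Int.castRingHom (ZMod q))

/-- Projection `SL₂(ℤ) → PSL₂(ℤ)` (quotient by the center). -/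
def PSLproj : SL2Z →* SL2Z ⧸ Subgroup.center SL2Z :=
  QuotientGroup.mk' (Subgroup.center SL2Z)

/-- The images of `S` in `PSL₂(ℤ)` freely generate a free semigroup: the evaluation map
from nonempty words over `S` to `PSL₂(ℤ)` is injective. -/
def FreelyGeneratesPSL (S : Set SL2Z) : Prop :=
  ∀ l₁ l₂ : List SL2Z, l₁ ≠ [] → l₂ ≠ [] → (∀ x ∈ l₁, x ∈ S) → (∀ x ∈ l₂, x ∈ S) →
    PSLproj l₁.prod = PSLproj l₂.prod → l₁ = l₂


lemma klein_numeric {Ω : Type*} [Fintype Ω] [DecidableEq Ω] (o r : Ω → ℕ) (n : ℕ)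
    (hor : ∀ ω, o ω * r ω = n) (hr : ∀ ω, 2 ≤ r ω)
    (hsum : Fintype.card Ω * n + 2 = (∑ ω, o ω) + 2 * n) (ω₁ : Ω) (h6 : 6 ≤ r ω₁) :
    o ω₁ ≤ 2 := by
  have h2 : ∀ ω, o ω * 2 ≤ n := fun ω => by
    rw [← hor ω]; exact Nat.mul_le_mul_left _ (hr ω)
  have hle : (∑ ω, o ω) * 2 ≤ Fintype.card Ω * n := by
    rw [Finset.sum_mul]
    calc ∑ ω, o ω * 2 ≤ ∑ _ω : Ω, n := Finset.sum_le_sum (fun ω _ => h2 ω)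
      _ = _ := by simp
  have hpos : 0 < Fintype.card Ω := Fintype.card_pos_iff.2 ⟨ω₁⟩
  have hk : Fintype.card Ω < 4 := by
    by_contra hk
    have : 4 * n ≤ Fintype.card Ω * n := Nat.mul_le_mul_right _ (by omega)
    omega
  have ho1 : o ω₁ ≤ ∑ ω, o ω := Finset.single_le_sum (fun _ _ => Nat.zero_le _) (Finset.mem_univ _)
  have hcases : Fintype.card Ω = 1 ∨ Fintype.card Ω = 2 ∨ Fintype.card Ω = 3 := by omega
  rcases hcases with h | h | h
  · rw [h] at hsum; omega
  · rw [h] at hsum; omega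
  · have h16 : o ω₁ * 6 ≤ n := by rw [← hor ω₁]; exact Nat.mul_le_mul_left _ h6
    have hc : (Finset.univ.erase ω₁).card = 2 := by
      rw [Finset.card_erase_of_mem (Finset.mem_univ _), Finset.card_univ, h]
    obtain ⟨a, b, hab, he⟩ := Finset.card_eq_two.1 hc
    have hs : ∑ ω, o ω = o ω₁ + (o a + o b) := by
      rw [← Finset.add_sum_erase _ _ (Finset.mem_univ ω₁), he, Finset.sum_pair hab]
    rw [h, hs] at hsum
    have key : ∀ c, r c = 2 ∨ o c * 3 ≤ n := fun c => by
      rcases Nat.lt_or_ge (r c) 3 with h3 | h3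
      · left; have := hr c; omega
      · right; rw [← hor c]; exact Nat.mul_le_mul_left _ h3
    have ha := h2 a
    have hb := h2 b
    rcases key a with ka | ka
    · rcases key b with kb | kb
      · have := hor a; have := hor b; simp only [ka, kb] at *; omega
      · omega
    · omega

open MulAction in
lemma klein_action {G Y : Type*} [Group G] [Finite G] [MulAction G Y] (Z : Subgroup G) [Z.Normal]
    (hZ : ∀ g ∈ Z, ∀ y : Y, g • y = y) (h2 : ∀ g ∉ Z, (fixedBy Y g).ncard = 2) (x₁ : Y)
    (hx₁ : 6 * Nat.card Z ≤ Nat.card (stabilizer G x₁)) : (stabilizer G x₁).index ≤ 2 := by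
  classical
  have hZpos : 0 < Nat.card Z := Nat.card_pos
  have := Fintype.ofFinite G
  let X : SubMulAction G Y :=
    { carrier := {y | ∃ g ∉ Z, g • y = y}
      smul_mem' := by
        rintro c y ⟨g, hg, hy⟩
        refine ⟨c * g * c⁻¹, fun h => hg ?_, ?_⟩
        · have := ‹Z.Normal›.conj_mem _ h c⁻¹
          simpa [mul_assoc] using this
        · rw [← mul_smul]; simp [mul_smul, hy] }
  have hXmem : ∀ y, y ∈ X ↔ ∃ g ∉ Z, g • y = y := fun y => Iff.rfl
  have hXfin : (X : Set Y).Finite := by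
    have : (X : Set Y) ⊆ ⋃ g ∈ {g : G | g ∉ Z}, fixedBy Y g := by
      intro y hy
      obtain ⟨g, hg, h⟩ := hy
      simp only [Set.mem_iUnion]
      exact ⟨g, hg, h⟩
    refine Set.Finite.subset (Set.Finite.biUnion (Set.toFinite _) ?_) this
    intro g hg
    exact Set.finite_of_ncard_ne_zero (by rw [h2 g hg]; norm_num)
  have : Finite X := hXfin
  have := Fintype.ofFinite X
  have hstabZ : ∀ y : Y, Z ≤ stabilizer G y := fun y g hg => hZ g hg y
  have hx1 : x₁ ∈ X := by
    by_contra hcon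
    have : stabilizer G x₁ ≤ Z := by
      intro g hg
      by_contra hgZ
      exact hcon ⟨g, hgZ, hg⟩
    have h3 := Subgroup.card_le_of_le this
    omega
  have hstab : ∀ x : X, stabilizer G x = stabilizer G (x : Y) := fun x => by
    ext g; simp [mem_stabilizer_iff, Subtype.ext_iff]
  let Ω := Quotient (orbitRel G X)
  have : Fintype Ω := Fintype.ofFinite _
  have burn := sum_card_fixedBy_eq_card_orbits_mul_card_group G X
  have hfix : ∀ g : G, Fintype.card (fixedBy X g) = if g ∈ Z then Fintype.card X else 2 := by
    intro g
    split_ifs with hg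
    · rw [← Nat.card_eq_fintype_card, ← Nat.card_eq_fintype_card]
      have : fixedBy X g = Set.univ := by
        ext x; simp [Subtype.ext_iff, hZ g hg]
      rw [this]; simp
    · rw [← h2 g hg, ← Nat.card_eq_fintype_card, ← Nat.card_coe_set_eq]
      refine Nat.card_congr
        { toFun := fun x => ⟨x.1.1, congrArg Subtype.val (x.2 : g • x.1 = x.1)⟩
          invFun := fun y => ⟨⟨y.1, ⟨g, hg, y.2⟩⟩, Subtype.ext y.2⟩
          left_inv := fun x => rfl
          right_inv := fun x => rfl }
  simp_rw [hfix] at burn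
  rw [Finset.sum_ite, Finset.sum_const, Finset.sum_const] at burn
  have hcz : (Finset.univ.filter (fun g : G => g ∈ Z)).card = Nat.card Z := by
    rw [Nat.card_eq_fintype_card, Fintype.card_subtype]
  have hcz' : (Finset.univ.filter (fun g : G => g ∉ Z)).card + Nat.card Z = Fintype.card G := by
    rw [← hcz, add_comm]
    rw [Finset.card_filter_add_card_filter_not]; rfl
  have hX : Fintype.card X = ∑ ω : Ω, Fintype.card (orbit G ω.out) := by
    rw [Fintype.card_congr (selfEquivSigmaOrbits G X), Fintype.card_sigma]
  obtain ⟨n, hn⟩ : Nat.card Z ∣ Fintype.card G := by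
    rw [← Nat.card_eq_fintype_card]; exact Subgroup.card_subgroup_dvd_card Z
  have hr : ∀ ω : Ω, ∃ r, Nat.card (stabilizer G ω.out) = Nat.card Z * r := fun ω => by
    rw [hstab]; exact Subgroup.card_dvd_of_le (hstabZ _)
  choose r hr using hr
  have hos : ∀ ω : Ω, Fintype.card (orbit G ω.out) * r ω = n := fun ω => by
    have := card_orbit_mul_card_stabilizer_eq_card_group G ω.out
    rw [← Nat.card_eq_fintype_card (α := stabilizer G ω.out), hr, hn] at this
    apply Nat.eq_of_mul_eq_mul_left hZpos
    rw [← this]; ring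
  have hr2 : ∀ ω : Ω, 2 ≤ r ω := fun ω => by
    by_contra hcon
    obtain ⟨g, hg, hgx⟩ := ω.out.2
    have h3 : Nat.card (stabilizer G ω.out) ≤ Nat.card Z := by
      rw [hr]
      calc _ ≤ Nat.card Z * 1 := Nat.mul_le_mul_left _ (by omega)
        _ = _ := by ring
    have h4 : Z = stabilizer G ω.out := by
      apply Subgroup.eq_of_le_of_card_ge
      · rw [hstab]; exact hstabZ _
      · exact h3
    apply hg
    rw [h4, hstab]
    exact hgx
  have key := klein_numeric (fun ω : Ω => Fintype.card (orbit G ω.out)) r n hos hr2 (by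
    rw [← hX]
    apply Nat.eq_of_mul_eq_mul_left hZpos
    rw [hcz, smul_eq_mul, smul_eq_mul, hn] at burn
    rw [hn] at hcz'
    have e : Fintype.card Ω * (Nat.card Z * n) = Nat.card Z * (Fintype.card Ω * n) := by ring
    have burn' : Nat.card Z * Fintype.card X + (Finset.univ.filter (fun g : G => g ∉ Z)).card * 2 = Nat.card Z * (Fintype.card Ω * n) := by
      rw [← e]; convert burn
    rw [mul_add, mul_add, ← burn']
    have : Nat.card Z * (2 * n) = 2 * (Nat.card Z * n) := by ring
    rw [this]; omega)
  let x1 : X := ⟨x₁, hx1⟩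
  let ω₁ : Ω := Quotient.mk _ x1
  have horb : orbit G ω₁.out = orbit G x1 := by
    have : (orbitRel G X) ω₁.out x1 := Quotient.exact (Quotient.out_eq ω₁)
    exact orbit_eq_iff.2 this
  have hcard : Nat.card (orbit G ω₁.out) = (stabilizer G x₁).index := by
    rw [horb, ← hstab x1, index_stabilizer, Nat.card_coe_set_eq]
  have hidx := Subgroup.card_mul_index (stabilizer G x₁)
  rw [Nat.card_eq_fintype_card (α := G), hn, ← hcard, Nat.card_eq_fintype_card (α := orbit G ω₁.out)] at hidx
  rw [← hcard, Nat.card_eq_fintype_card]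
  refine key ω₁ ?_
  by_contra hlt
  have hpos : 0 < Fintype.card (orbit G ω₁.out) := Fintype.card_pos_iff.2 ⟨⟨_, mem_orbit_self _⟩⟩
  have h7 : Fintype.card (orbit G ω₁.out) * r ω₁ < Fintype.card (orbit G ω₁.out) * 6 :=
    Nat.mul_lt_mul_of_pos_left (by omega) hpos
  rw [hos] at h7
  have h8 : Nat.card Z * n < Nat.card Z * (Fintype.card (orbit G ω₁.out) * 6) :=
    Nat.mul_lt_mul_of_pos_left h7 hZpos
  have h9 := Nat.mul_le_mul_right (Fintype.card (orbit G ω₁.out)) hx₁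
  rw [hidx] at h9
  linarith [mul_comm (6 * Nat.card Z) (Fintype.card (orbit G ω₁.out)),
    (by ring : Nat.card Z * (Fintype.card (orbit G ω₁.out) * 6)
      = 6 * Nat.card Z * Fintype.card (orbit G ω₁.out))]


open MulAction in
lemma fixed_two {K : Type*} [Field K] [DecidableEq K] [IsAlgClosed K] (g : Matrix.GeneralLinearGroup (Fin 2) K)
    (hd : (g 0 0 - g 1 1) ^ 2 + 4 * g 0 1 * g 1 0 ≠ 0) :
    (fixedBy (OnePoint K) g).ncard = 2 := by
  rw [Set.ncard_eq_two]
  have hf : ∀ c : K, g • (c : OnePoint K) = c ↔ g 1 0 * c ^ 2 + (g 1 1 - g 0 0) * c - g 0 1 = 0 := by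
    intro c
    rw [← Matrix.GeneralLinearGroup.fixpointPolynomial_aeval_eq_zero_iff]
    simp [Matrix.GeneralLinearGroup.fixpointPolynomial]
  by_cases hc : g 1 0 = 0
  · have had : g 1 1 - g 0 0 ≠ 0 := by
      intro h; apply hd; rw [hc]; linear_combination (g 1 1 - g 0 0) * h
    refine ⟨OnePoint.infty, ((g 0 1 / (g 1 1 - g 0 0) : K) : OnePoint K), OnePoint.infty_ne_coe _, ?_⟩
    ext x
    cases x with
    | infty => simp [OnePoint.smul_infty_eq_self_iff, hc]
    | coe c =>
      simp only [mem_fixedBy, hf, hc, Set.mem_insert_iff, Set.mem_singleton_iff, OnePoint.coe_eq_coe,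
        OnePoint.coe_ne_infty, false_or]
      rw [eq_div_iff had]
      constructor <;> intro h <;> linear_combination h
  · obtain ⟨x, hx⟩ := IsAlgClosed.exists_root
      (Polynomial.C (g 1 0) * Polynomial.X ^ 2 + Polynomial.C (g 1 1 - g 0 0) * Polynomial.X
        + Polynomial.C (- g 0 1)) (by rw [Polynomial.degree_quadratic hc]; norm_num)
    simp only [Polynomial.IsRoot, Polynomial.eval_add, Polynomial.eval_mul, Polynomial.eval_C, Polynomial.eval_pow, Polynomial.eval_X] at hx
    refine ⟨((x : K) : OnePoint K), (((g 0 0 - g 1 1) / g 1 0 - x : K) : OnePoint K), ?_, ?_⟩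
    · intro h
      rw [OnePoint.coe_eq_coe] at h
      apply hd
      field_simp at h
      have h2 : 2 * g 1 0 * x = g 0 0 - g 1 1 := by linear_combination h
      linear_combination (2 * g 1 0 * x - (g 0 0 - g 1 1)) * h2 - 4 * g 1 0 * hx
    · ext y
      cases y with
      | infty => simp [OnePoint.smul_infty_eq_self_iff, hc]
      | coe c =>
        simp only [mem_fixedBy, hf, Set.mem_insert_iff, Set.mem_singleton_iff, OnePoint.coe_eq_coe]
        constructor
        · intro h
          have : (c - x) * (c - ((g 0 0 - g 1 1) / g 1 0 - x)) = 0 := by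
            field_simp
            linear_combination h - hx
          rcases mul_eq_zero.1 this with h | h
          · left; linear_combination h
          · right; linear_combination h
        · rintro (rfl | rfl)
          · linear_combination hx
          · field_simp
            linear_combination g 1 0 * hx

lemma mem_center_SL2 {F : Type*} [Field F] {g : Matrix.SpecialLinearGroup (Fin 2) F} :
    g ∈ Subgroup.center _ ↔ g 0 1 = 0 ∧ g 1 0 = 0 ∧ g 0 0 = g 1 1 := by
  rw [Matrix.SpecialLinearGroup.mem_center_iff]
  constructor
  · rintro ⟨r, hr, h⟩
    have h' : ∀ i j, g i j = Matrix.scalar (Fin 2) r i j := fun i j => by rw [h]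
    simp [h']
  · rintro ⟨h1, h2, h3⟩
    refine ⟨g 0 0, ?_, ?_⟩
    · have := g.det_coe
      rw [Matrix.det_fin_two] at this
      simp only [Fintype.card_fin]
      rw [h1, ← h3] at this
      linear_combination this
    · ext i j
      fin_cases i <;> fin_cases j <;> simp [h1, h2, h3]

lemma semisimple_of_coprime {p : ℕ} [Fact p.Prime] (G : Subgroup (Matrix.SpecialLinearGroup (Fin 2) (ZMod p)))
    (hG : ¬ p ∣ Nat.card G) (g : Matrix.SpecialLinearGroup (Fin 2) (ZMod p)) (hg : g ∈ G)
    (ht : (g 0 0 - g 1 1) ^ 2 + 4 * g 0 1 * g 1 0 = 0) : g ∈ Subgroup.center _ := by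
  have hp : p.Prime := Fact.out
  have hdet := g.det_coe
  rw [Matrix.det_fin_two] at hdet
  obtain ⟨l, hl⟩ : ∃ l : ZMod p, g 0 0 + g 1 1 = 2 * l ∧ l ^ 2 = 1 := by
    have : (g 0 0 + g 1 1 - 2) * (g 0 0 + g 1 1 + 2) = 0 := by linear_combination ht + 4 * hdet
    rcases mul_eq_zero.1 this with h | h
    · exact ⟨1, by linear_combination h, by ring⟩
    · exact ⟨-1, by linear_combination h, by ring⟩
  set A : Matrix (Fin 2) (Fin 2) (ZMod p) := g.1 with hA
  have hsq : (A - Matrix.scalar (Fin 2) l) ^ 2 = 0 := by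
    have h1 : A 0 0 * A 1 1 - A 0 1 * A 1 0 = 1 := hdet
    have h2 : A 0 0 + A 1 1 = 2 * l := hl.1
    have h3 := hl.2
    rw [sq]
    ext i j
    fin_cases i <;> fin_cases j <;> simp [Matrix.mul_apply, Fin.sum_univ_two]
    · linear_combination -h1 + h3 + A 0 0 * h2
    · linear_combination A 0 1 * h2
    · linear_combination A 1 0 * h2
    · linear_combination -h1 + h3 + A 1 1 * h2
  have hpow : A ^ p = Matrix.scalar (Fin 2) (l ^ p) := by
    have : (A - Matrix.scalar (Fin 2) l) ^ p = 0 := pow_eq_zero_of_le hp.two_le hsq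
    have hcomm : Commute A (Matrix.scalar (Fin 2) l) := (Matrix.scalar_commute l (fun _ => mul_comm _ _) A).symm
    rw [sub_pow_char_of_commute _ hcomm] at this
    rw [map_pow]
    exact sub_eq_zero.1 this
  have hcen : g ^ p ∈ Subgroup.center (Matrix.SpecialLinearGroup (Fin 2) (ZMod p)) := by
    have h : ∀ i j, (g ^ p) i j = (Matrix.scalar (Fin 2) (l ^ p)) i j := fun i j => by
      rw [← hpow]; simp [hA]
    rw [mem_center_SL2]
    simp [h]
  have hco : p.Coprime (orderOf g) := by
    rw [hp.coprime_iff_not_dvd]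
    intro h
    exact hG (h.trans (G.orderOf_dvd_natCard hg))
  obtain ⟨m, hm⟩ := exists_pow_eq_self_of_coprime hco
  rw [← hm]
  exact Subgroup.pow_mem _ hcen _

lemma det_comm_of_fix {K : Type*} [Field K] [DecidableEq K] (a b : Matrix.GeneralLinearGroup (Fin 2) K)
    (y : OnePoint K) (ha : a • y = y) (hb : b • y = y) : (a.1 * b.1 - b.1 * a.1).det = 0 := by
  cases y with
  | infty =>
    rw [OnePoint.smul_infty_eq_self_iff] at ha hb
    rw [Matrix.det_fin_two]
    simp [Matrix.mul_apply, Fin.sum_univ_two, ha, hb]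
    ring_nf; simp
  | coe t =>
    rw [← Matrix.GeneralLinearGroup.fixpointPolynomial_aeval_eq_zero_iff] at ha hb
    simp [Matrix.GeneralLinearGroup.fixpointPolynomial] at ha hb
    rw [Matrix.det_fin_two]
    simp only [Matrix.mul_apply, Fin.sum_univ_two, Matrix.sub_apply]
    have ha' : a.1 0 1 = a.1 1 0 * t ^ 2 + (a.1 1 1 - a.1 0 0) * t := by linear_combination -ha
    have hb' : b.1 0 1 = b.1 1 0 * t ^ 2 + (b.1 1 1 - b.1 0 0) * t := by linear_combination -hb
    rw [ha', hb']
    ring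

lemma commute_of_det_comm {p : ℕ} [Fact p.Prime] (G : Subgroup (Matrix.SpecialLinearGroup (Fin 2) (ZMod p)))
    (hG : ¬ p ∣ Nat.card G) (a b : Matrix.SpecialLinearGroup (Fin 2) (ZMod p)) (ha : a ∈ G) (hb : b ∈ G)
    (h : (a.1 * b.1 - b.1 * a.1).det = 0) : a * b = b * a := by
  set c := a * b * a⁻¹ * b⁻¹ with hc
  have hcG : c ∈ G := G.mul_mem (G.mul_mem (G.mul_mem ha hb) (G.inv_mem ha)) (G.inv_mem hb)
  have hcba : c * (b * a) = a * b := by rw [hc]; group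
  have h1 : a.1 * b.1 - b.1 * a.1 = (c.1 - 1) * (b * a).1 := by
    have : (c * (b * a)).1 = (a * b).1 := by rw [hcba]
    simp only [Matrix.SpecialLinearGroup.coe_mul] at this ⊢
    rw [sub_mul, this, one_mul]
  rw [h1, Matrix.det_mul, (b * a).det_coe, mul_one, Matrix.det_fin_two] at h
  simp only [Matrix.sub_apply, Matrix.one_apply_eq, Matrix.one_apply, zero_ne_one, one_ne_zero, if_false, sub_zero] at h
  have hd := c.det_coe
  rw [Matrix.det_fin_two] at hd
  have htr : c 0 0 + c 1 1 = 2 := by linear_combination hd - h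
  have hcen := semisimple_of_coprime G hG c hcG (by linear_combination (c 0 0 + c 1 1 + 2) * htr - 4 * hd)
  rw [mem_center_SL2] at hcen
  obtain ⟨h01, h10, h00⟩ := hcen
  have hl : c 0 0 = 1 := by
    have : (c 0 0 - 1) ^ 2 = 0 := by
      rw [h01, ← h00] at hd
      rw [← h00] at htr
      linear_combination hd - htr
    have := pow_eq_zero_iff (two_ne_zero) |>.1 this
    linear_combination this
  have hc1 : c = 1 := by
    ext i j
    fin_cases i <;> fin_cases j <;> simp [h01, h10, hl, ← h00]
  rw [← hcba, hc1, one_mul]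

open MulAction in
lemma coprime_law {p : ℕ} [Fact p.Prime] (G : Subgroup (Matrix.SpecialLinearGroup (Fin 2) (ZMod p)))
    (hG : ¬ p ∣ Nat.card G) (a b : Matrix.SpecialLinearGroup (Fin 2) (ZMod p)) (ha : a ∈ G) (hb : b ∈ G) :
    a ^ 120 * b ^ 120 = b ^ 120 * a ^ 120 := by
  classical
  let K := AlgebraicClosure (ZMod p)
  let φ : Matrix.SpecialLinearGroup (Fin 2) (ZMod p) →* Matrix.GeneralLinearGroup (Fin 2) K :=
    Matrix.SpecialLinearGroup.toGL.comp (Matrix.SpecialLinearGroup.map (algebraMap (ZMod p) K))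
  have hφ : ∀ g i j, (φ g) i j = algebraMap (ZMod p) K (g i j) := fun g i j => by
    simp [φ]
  let _ : MulAction G (OnePoint K) := MulAction.compHom (OnePoint K) (φ.comp G.subtype)
  have hsm : ∀ (g : G) (y : OnePoint K), g • y = φ g.1 • y := fun g y => rfl
  let Z : Subgroup G := (Subgroup.center (Matrix.SpecialLinearGroup (Fin 2) (ZMod p))).subgroupOf G
  have hinj : Function.Injective (algebraMap (ZMod p) K) := (algebraMap (ZMod p) K).injective
  have hZ : ∀ g ∈ Z, ∀ y : OnePoint K, g • y = y := by
    intro g hg y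
    have hg' : g.1 ∈ Subgroup.center _ := Subgroup.mem_subgroupOf.1 hg
    rw [mem_center_SL2] at hg'
    rw [hsm]
    cases y with
    | infty => rw [OnePoint.smul_infty_eq_self_iff, hφ, hg'.2.1, map_zero]
    | coe t =>
      rw [← Matrix.GeneralLinearGroup.fixpointPolynomial_aeval_eq_zero_iff]
      simp [Matrix.GeneralLinearGroup.fixpointPolynomial, hφ, hg'.1, hg'.2.1, hg'.2.2]
  have h2 : ∀ g ∉ Z, (fixedBy (OnePoint K) g).ncard = 2 := by
    intro g hg
    have := fixed_two (φ g.1) (by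
      intro h
      apply hg
      rw [Subgroup.mem_subgroupOf]
      apply semisimple_of_coprime G hG g.1 g.2
      apply hinj
      simp only [hφ] at h
      have h4 : algebraMap (ZMod p) K 4 = 4 := map_ofNat _ 4
      simpa [h4] using h)
    exact this
  have hcomm : ∀ (y : OnePoint K) (a b : G), a • y = y → b • y = y → a * b = b * a := by
    intro y a b ha hb
    apply Subtype.ext
    apply commute_of_det_comm G hG a.1 b.1 a.2 b.2
    apply hinj
    have := det_comm_of_fix (φ a.1) (φ b.1) y ha hb
    rw [Matrix.det_fin_two] at this ⊢
    simp only [Matrix.sub_apply, Matrix.mul_apply, Fin.sum_univ_two] at this ⊢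
    simp only [map_sub, map_add, map_mul, map_zero]
    simpa only [hφ] using this
  by_cases hbig : ∃ y : OnePoint K, 6 * Nat.card Z ≤ Nat.card (stabilizer G y)
  · obtain ⟨y, hy⟩ := hbig
    have hidx := klein_action Z hZ h2 y hy
    have h0 : (stabilizer G y).index ≠ 0 := Subgroup.index_ne_zero_of_finite
    have hmem : ∀ g : G, g ^ 120 ∈ stabilizer G y := by
      intro g
      have : g ^ 2 ∈ stabilizer G y := by
        have : (stabilizer G y).index = 1 ∨ (stabilizer G y).index = 2 := by omega
        rcases this with h | h
        · rw [Subgroup.index_eq_one] at h; rw [h]; trivial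
        · exact Subgroup.sq_mem_of_index_two h g
      have h' := Subgroup.pow_mem _ this 60
      rwa [← pow_mul] at h'
    have := hcomm y (⟨a, ha⟩ ^ 120) (⟨b, hb⟩ ^ 120) (hmem _) (hmem _)
    simpa using congrArg Subtype.val this
  · push Not at hbig
    have hsq : ∀ g ∈ Z, g ^ 2 = 1 := by
      intro g hg
      have hg' : g.1 ∈ Subgroup.center _ := Subgroup.mem_subgroupOf.1 hg
      rw [mem_center_SL2] at hg'
      obtain ⟨h01, h10, h00⟩ := hg'
      have hd := g.1.det_coe
      rw [Matrix.det_fin_two, h01, ← h00] at hd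
      apply Subtype.ext
      ext i j
      fin_cases i <;> fin_cases j <;> simp [sq, Matrix.mul_apply, Fin.sum_univ_two, h01, h10, ← h00] <;> linear_combination hd
    have hone : ∀ g : G, g ^ 120 = 1 := by
      intro g
      by_cases hg : g ∈ Z
      · have h' : (g ^ 2) ^ 60 = 1 := by rw [hsq g hg, one_pow]
        rwa [← pow_mul] at h'
      · have hne : (fixedBy (OnePoint K) g).Nonempty := by
          apply Set.nonempty_of_ncard_ne_zero; rw [h2 g hg]; norm_num
        obtain ⟨y, hy⟩ := hne
        have hlt := hbig y
        have hle : Z ≤ stabilizer G y := fun g hg => hZ g hg y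
        have hri : Z.relIndex (stabilizer G y) < 6 := by
          have := Subgroup.card_mul_index (Z.subgroupOf (stabilizer G y))
          have hc : Nat.card (Z.subgroupOf (stabilizer G y)) = Nat.card Z :=
            Nat.card_congr (Subgroup.subgroupOfEquivOfLe hle).toEquiv
          rw [hc] at this
          rw [← this] at hlt
          rw [Subgroup.relIndex]
          by_contra hcon
          have := Nat.mul_le_mul_left (Nat.card Z) (not_lt.1 hcon)
          omega
        have hri0 : Z.relIndex (stabilizer G y) ≠ 0 := Subgroup.index_ne_zero_of_finite
        have hmem : g ^ (Z.relIndex (stabilizer G y)) ∈ Z := by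
          have := Subgroup.pow_index_mem (Z.subgroupOf (stabilizer G y)) ⟨g, hy⟩
          rw [Subgroup.mem_subgroupOf] at this
          exact this
        have h1 := hsq _ hmem
        rw [← pow_mul] at h1
        have hdv : Z.relIndex (stabilizer G y) * 2 ∣ 120 := by
          generalize Z.relIndex (stabilizer G y) = r at *
          interval_cases r <;> omega
        obtain ⟨k, hk⟩ := hdv
        rw [hk, pow_mul, h1, one_pow]
    have := congrArg Subtype.val (hone ⟨a, ha⟩)
    have e : a ^ 120 = 1 := by simpa using this
    rw [e, one_mul, mul_one]

lemma unipotent_form {F : Type*} [Field F] (a : Matrix.SpecialLinearGroup (Fin 2) F) (v : Fin 2 → F)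
    (hv : v ≠ 0) (ha : a.1.mulVec v = v) :
    ∃ s : F, a.1 = !![1 - s * (v 0 * v 1), s * v 0 ^ 2; - s * v 1 ^ 2, 1 + s * (v 0 * v 1)] := by
  have hd := a.det_coe
  rw [Matrix.det_fin_two] at hd
  have h0 := congrFun ha 0
  have h1 := congrFun ha 1
  simp only [Matrix.mulVec_fin_two, Matrix.cons_val_zero, Matrix.cons_val_one] at h0 h1
  by_cases hx : v 0 = 0
  · have hy : v 1 ≠ 0 := by
      intro hy; apply hv; ext i; fin_cases i <;> simp [hx, hy]
    rw [hx] at h0 h1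
    have e01 : a.1 0 1 = 0 := by
      have : a.1 0 1 * v 1 = 0 := by linear_combination h0
      exact (mul_eq_zero.1 this).resolve_right hy
    have e11 : a.1 1 1 = 1 := by
      have : (a.1 1 1 - 1) * v 1 = 0 := by linear_combination h1
      have := (mul_eq_zero.1 this).resolve_right hy
      linear_combination this
    have e00 : a.1 0 0 = 1 := by rw [e01, e11] at hd; linear_combination hd
    refine ⟨- a.1 1 0 / v 1 ^ 2, ?_⟩
    ext i j
    fin_cases i <;> fin_cases j <;> simp [hx, e01, e11, e00]
    field_simp
  · have htr : a.1 0 0 + a.1 1 1 = 2 := by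
      have : (a.1 0 0 + a.1 1 1 - 2) * v 0 = 0 := by
        linear_combination (1 - a.1 1 1) * h0 + a.1 0 1 * h1 + v 0 * hd
      have := (mul_eq_zero.1 this).resolve_right hx
      linear_combination this
    have e00 : a.1 0 0 = 1 - a.1 0 1 * v 1 / v 0 := by
      field_simp; linear_combination h0
    have e11 : a.1 1 1 = 1 + a.1 0 1 * v 1 / v 0 := by linear_combination htr - e00
    have e10 : a.1 1 0 = - a.1 0 1 * v 1 ^ 2 / v 0 ^ 2 := by
      rw [e11] at h1
      field_simp at h1 ⊢
      linear_combination h1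
    refine ⟨a.1 0 1 / v 0 ^ 2, ?_⟩
    ext i j
    fin_cases i <;> fin_cases j <;> simp [e00, e10, e11] <;> field_simp

lemma commute_of_fix_vec {F : Type*} [Field F] (a b : Matrix.SpecialLinearGroup (Fin 2) F) (v : Fin 2 → F)
    (hv : v ≠ 0) (ha : a.1.mulVec v = v) (hb : b.1.mulVec v = v) : a * b = b * a := by
  obtain ⟨s, hs⟩ := unipotent_form a v hv ha
  obtain ⟨t, ht⟩ := unipotent_form b v hv hb
  apply Subtype.ext
  simp only [Matrix.SpecialLinearGroup.coe_mul]
  rw [hs, ht, Matrix.mul_fin_two, Matrix.mul_fin_two]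
  ext i j
  fin_cases i <;> fin_cases j <;> simp <;> ring

lemma elementary_gen {p : ℕ} [Fact p.Prime] (G : Subgroup (Matrix.SpecialLinearGroup (Fin 2) (ZMod p)))
    (u l : Matrix.SpecialLinearGroup (Fin 2) (ZMod p)) (s t : ZMod p) (hs : s ≠ 0) (ht : t ≠ 0)
    (hu : u.1 = !![1, s; 0, 1]) (hl : l.1 = !![1, 0; t, 1]) (huG : u ∈ G) (hlG : l ∈ G) : G = ⊤ := by
  have hup : ∀ k : ℕ, (u ^ k).1 = !![1, k * s; 0, 1] := by
    intro k
    induction k with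
    | zero => ext i j; fin_cases i <;> fin_cases j <;> simp
    | succ k ih =>
      rw [pow_succ, Matrix.SpecialLinearGroup.coe_mul, ih, hu, Matrix.mul_fin_two]
      ext i j; fin_cases i <;> fin_cases j <;> simp; ring
  have hlp : ∀ k : ℕ, (l ^ k).1 = !![1, 0; k * t, 1] := by
    intro k
    induction k with
    | zero => ext i j; fin_cases i <;> fin_cases j <;> simp
    | succ k ih =>
      rw [pow_succ, Matrix.SpecialLinearGroup.coe_mul, ih, hl, Matrix.mul_fin_two]
      ext i j; fin_cases i <;> fin_cases j <;> simp; ring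
  have hU : ∀ x : ZMod p, ∃ g ∈ G, g.1 = !![1, x; 0, 1] := fun x =>
    ⟨u ^ (x / s).val, G.pow_mem huG _, by rw [hup, ZMod.natCast_zmod_val, div_mul_cancel₀ _ hs]⟩
  have hL : ∀ x : ZMod p, ∃ g ∈ G, g.1 = !![1, 0; x, 1] := fun x =>
    ⟨l ^ (x / t).val, G.pow_mem hlG _, by rw [hlp, ZMod.natCast_zmod_val, div_mul_cancel₀ _ ht]⟩
  have key : ∀ g : Matrix.SpecialLinearGroup (Fin 2) (ZMod p), g.1 1 0 ≠ 0 → g ∈ G := by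
    intro g hc
    have hd := g.det_coe
    rw [Matrix.det_fin_two] at hd
    obtain ⟨x, hx, hx1⟩ := hU ((g.1 0 0 - 1) / g.1 1 0)
    obtain ⟨y, hy, hy1⟩ := hL (g.1 1 0)
    obtain ⟨z, hz, hz1⟩ := hU ((g.1 1 1 - 1) / g.1 1 0)
    have : g = x * y * z := by
      apply Subtype.ext
      simp only [Matrix.SpecialLinearGroup.coe_mul]
      rw [hx1, hy1, hz1, Matrix.mul_fin_two, Matrix.mul_fin_two]
      ext i j; fin_cases i <;> fin_cases j <;> simp <;> field_simp
      · ring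
      · linear_combination -hd
      · ring
    rw [this]
    exact G.mul_mem (G.mul_mem hx hy) hz
  rw [eq_top_iff]
  intro g _
  by_cases hc : g.1 1 0 = 0
  · obtain ⟨y, hy, hy1⟩ := hL 1
    have hd := g.det_coe
    rw [Matrix.det_fin_two, hc] at hd
    have : y * g ∈ G := by
      apply key
      simp only [Matrix.SpecialLinearGroup.coe_mul]
      rw [hy1]
      simp [Matrix.mul_apply, Fin.sum_univ_two, hc]
      intro h
      rw [h] at hd; simp at hd
    exact (G.mul_mem_cancel_left hy).1 this
  · exact key g hc

lemma line_of_dvd {p : ℕ} [Fact p.Prime] (G : Subgroup (Matrix.SpecialLinearGroup (Fin 2) (ZMod p)))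
    (hG : p ∣ Nat.card G) (hne : G ≠ ⊤) :
    ∃ v : Fin 2 → ZMod p, v ≠ 0 ∧ ∀ x ∈ G, ∃ m : ZMod p, x.1.mulVec v = m • v := by
  have hp : p.Prime := Fact.out
  obtain ⟨g', hg'⟩ := exists_prime_orderOf_dvd_card' p hG
  obtain ⟨g, hg, hgp⟩ : ∃ g ∈ G, orderOf g = p := ⟨g'.1, g'.2, by rw [Subgroup.orderOf_coe]; exact hg'⟩
  have hg1 : g ≠ 1 := by rintro rfl; rw [orderOf_one] at hgp; exact hp.one_lt.ne hgp
  have hgp1 : g ^ p = 1 := orderOf_dvd_iff_pow_eq_one.1 hgp.dvd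
  have hdet : (g.1 - 1).det = 0 := by
    have h1 : (g.1 - 1) ^ p = 0 := by
      rw [sub_pow_char_of_commute _ (Commute.one_right _), one_pow, ← Matrix.SpecialLinearGroup.coe_pow,
        hgp1, Matrix.SpecialLinearGroup.coe_one, sub_self]
    have h2 : ((g.1 - 1).det) ^ p = 0 := by rw [← Matrix.det_pow, h1]; simp
    exact pow_eq_zero_iff hp.ne_zero |>.1 h2
  obtain ⟨v, hv, hgv⟩ := Matrix.exists_mulVec_eq_zero_iff.2 hdet
  have hgv : g.1.mulVec v = v := by
    rw [Matrix.sub_mulVec, Matrix.one_mulVec] at hgv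
    exact sub_eq_zero.1 hgv
  refine ⟨v, hv, ?_⟩
  by_contra hcon
  push Not at hcon
  obtain ⟨x, hx, hxv⟩ := hcon
  apply hne
  set v' := x.1.mulVec v with hv'
  have hδ : v 0 * v' 1 - v 1 * v' 0 ≠ 0 := by
    intro h0
    by_cases h : v 0 = 0
    · have hy : v 1 ≠ 0 := by
        intro hy; apply hv; ext i; fin_cases i <;> simp [h, hy]
      apply hxv (v' 1 / v 1)
      have : v' 0 = 0 := by
        rw [h] at h0
        have : v 1 * v' 0 = 0 := by linear_combination -h0
        exact (mul_eq_zero.1 this).resolve_left hy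
      ext i; fin_cases i
      · simp [h, this]
      · simp; field_simp
    · apply hxv (v' 0 / v 0)
      ext i; fin_cases i
      · simp; field_simp
      · simp; field_simp; linear_combination h0
  set δ := v 0 * v' 1 - v 1 * v' 0 with hδdef
  let h : Matrix.SpecialLinearGroup (Fin 2) (ZMod p) :=
    ⟨!![v 0, v' 0 / δ; v 1, v' 1 / δ], by
      rw [Matrix.det_fin_two_of]; field_simp; rw [hδdef]; ring⟩
  have he1 : h.1.mulVec ![1, 0] = v := by
    ext i; fin_cases i <;> simp [h]
  have he2 : h.1.mulVec ![0, 1] = δ⁻¹ • v' := by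
    ext i; fin_cases i <;> simp [h] <;> field_simp
  have hinv : ∀ a b, h.1.mulVec a = b → (h⁻¹).1.mulVec b = a := by
    rintro a b rfl
    rw [Matrix.mulVec_mulVec, ← Matrix.SpecialLinearGroup.coe_mul, inv_mul_cancel,
      Matrix.SpecialLinearGroup.coe_one, Matrix.one_mulVec]
  have hxi : (x⁻¹).1.mulVec v' = v := by
    rw [hv', Matrix.mulVec_mulVec, ← Matrix.SpecialLinearGroup.coe_mul, inv_mul_cancel,
      Matrix.SpecialLinearGroup.coe_one, Matrix.one_mulVec]
  have hu : (h⁻¹ * g * h).1.mulVec ![1, 0] = ![1, 0] := by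
    simp only [Matrix.SpecialLinearGroup.coe_mul]
    rw [← Matrix.mulVec_mulVec, ← Matrix.mulVec_mulVec, he1, hgv]
    exact hinv _ _ he1
  have hl : (h⁻¹ * (x * g * x⁻¹) * h).1.mulVec ![0, 1] = ![0, 1] := by
    simp only [Matrix.SpecialLinearGroup.coe_mul]
    rw [← Matrix.mulVec_mulVec, ← Matrix.mulVec_mulVec, he2, ← Matrix.mulVec_mulVec, ← Matrix.mulVec_mulVec,
      Matrix.mulVec_smul, hxi, Matrix.mulVec_smul, hgv, Matrix.mulVec_smul, ← hv']
    exact hinv _ _ he2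
  obtain ⟨s, hs⟩ := unipotent_form _ _ (by simp) hu
  obtain ⟨t, ht⟩ := unipotent_form _ _ (by simp) hl
  have hs : (h⁻¹ * g * h).1 = !![1, s; 0, 1] := by rw [hs]; simp
  have ht : (h⁻¹ * (x * g * x⁻¹) * h).1 = !![1, 0; -t, 1] := by rw [ht]; simp
  have hs0 : s ≠ 0 := by
    rintro rfl
    apply hg1
    have : h⁻¹ * g * h = 1 := by
      apply Subtype.ext
      rw [hs]; ext i j; fin_cases i <;> fin_cases j <;> simp
    have h2 : g = h * (h⁻¹ * g * h) * h⁻¹ := by group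
    rw [h2, this]; group
  have ht0 : t ≠ 0 := by
    rintro rfl
    apply hg1
    have : h⁻¹ * (x * g * x⁻¹) * h = 1 := by
      apply Subtype.ext
      rw [ht]; ext i j; fin_cases i <;> fin_cases j <;> simp
    have h2 : g = x⁻¹ * (h * (h⁻¹ * (x * g * x⁻¹) * h) * h⁻¹) * x := by group
    rw [h2, this]; group
  have htop := elementary_gen (G.comap (MulAut.conj h).toMonoidHom) (h⁻¹ * g * h) (h⁻¹ * (x * g * x⁻¹) * h)
    s (-t) hs0 (neg_ne_zero.2 ht0) hs ht
    (by
      rw [Subgroup.mem_comap]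
      have : (MulAut.conj h).toMonoidHom (h⁻¹ * g * h) = g := by simp [mul_assoc]
      rwa [this])
    (by
      rw [Subgroup.mem_comap]
      have : (MulAut.conj h).toMonoidHom (h⁻¹ * (x * g * x⁻¹) * h) = x * g * x⁻¹ := by simp [mul_assoc]
      rw [this]
      exact G.mul_mem (G.mul_mem hx hg) (G.inv_mem hx))
  rw [eq_top_iff]
  intro y _
  have : h⁻¹ * y * h ∈ G.comap (MulAut.conj h).toMonoidHom := by rw [htop]; trivial
  rw [Subgroup.mem_comap] at this
  have e : (MulAut.conj h).toMonoidHom (h⁻¹ * y * h) = y := by simp [mul_assoc]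
  rwa [e] at this

/-- The commutator of the 120-th powers. -/
def cw {G : Type*} [Group G] (a b : G) : G := a ^ 120 * b ^ 120 * (a ^ 120)⁻¹ * (b ^ 120)⁻¹

lemma proper_law {p : ℕ} [Fact p.Prime] (G : Subgroup (Matrix.SpecialLinearGroup (Fin 2) (ZMod p)))
    (hne : G ≠ ⊤) (a b : Matrix.SpecialLinearGroup (Fin 2) (ZMod p)) (ha : a ∈ G) (hb : b ∈ G) :
    cw a b * (a * cw a b * a⁻¹) = a * cw a b * a⁻¹ * cw a b := by
  by_cases hG : p ∣ Nat.card G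
  · obtain ⟨v, hv, hl⟩ := line_of_dvd G hG hne
    have hne0 : ∀ x : Matrix.SpecialLinearGroup (Fin 2) (ZMod p), ∀ m : ZMod p, x.1.mulVec v = m • v → m ≠ 0 := by
      rintro x m hm rfl
      apply hv
      rw [zero_smul] at hm
      have : (x⁻¹).1.mulVec (x.1.mulVec v) = v := by
        rw [Matrix.mulVec_mulVec, ← Matrix.SpecialLinearGroup.coe_mul, inv_mul_cancel,
          Matrix.SpecialLinearGroup.coe_one, Matrix.one_mulVec]
      rw [← this, hm, Matrix.mulVec_zero]
    have hw : (cw a b).1.mulVec v = v := by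
      obtain ⟨α, hα⟩ := hl _ (G.pow_mem ha 120)
      obtain ⟨β, hβ⟩ := hl _ (G.pow_mem hb 120)
      have hα0 := hne0 _ _ hα
      have hβ0 := hne0 _ _ hβ
      have e : cw a b * (b ^ 120 * a ^ 120) = a ^ 120 * b ^ 120 := by rw [cw]; group
      have e' : (cw a b * (b ^ 120 * a ^ 120)).1.mulVec v = (a ^ 120 * b ^ 120).1.mulVec v := by rw [e]
      simp only [Matrix.SpecialLinearGroup.coe_mul, ← Matrix.mulVec_mulVec] at e'
      simp only [hα, hβ, Matrix.mulVec_smul, smul_smul] at e'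
      rw [mul_comm β α] at e'
      exact smul_right_injective _ (mul_ne_zero hα0 hβ0) e'
    apply commute_of_fix_vec _ _ v hv hw
    obtain ⟨α, hα⟩ := hl _ (G.inv_mem ha)
    simp only [Matrix.SpecialLinearGroup.coe_mul, ← Matrix.mulVec_mulVec]
    rw [hα, Matrix.mulVec_smul, hw, ← hα, Matrix.mulVec_mulVec, ← Matrix.SpecialLinearGroup.coe_mul, mul_inv_cancel,
          Matrix.SpecialLinearGroup.coe_one, Matrix.one_mulVec]
  · have : cw a b = 1 := by
      rw [cw, coprime_law G hG a b ha hb]; group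
    rw [this]; group

section PartTwo
open Matrix

lemma conj_scalar (W W' : Matrix (Fin 2) (Fin 2) ℤ) (hW : W 1 1 = - W 0 0)
    (hW' : W' 1 1 = - W' 0 0)
    (hd : ∀ d : ℤ, (∀ i j, d ∣ W i j) → ∀ i j, d ∣ W' i j) (h0 : W ≠ 0)
    (hc : W * W' = W' * W) : ∃ k : ℤ, W' = k • W := by
  obtain ⟨a, b, c, e, rfl⟩ : ∃ a b c e, W = !![a, b; c, e] := ⟨_, _, _, _, Matrix.eta_fin_two W⟩
  obtain ⟨a', b', c', e', rfl⟩ : ∃ a b c e, W' = !![a, b; c, e] := ⟨_, _, _, _, Matrix.eta_fin_two W'⟩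
  simp at hW hW'
  subst hW hW'
  rw [Matrix.mul_fin_two, Matrix.mul_fin_two] at hc
  have h1 := congrFun₂ hc 0 0
  have h2 := congrFun₂ hc 0 1
  have h3 := congrFun₂ hc 1 0
  simp at h1 h2 h3
  set g1 : ℤ := (Int.gcd a b : ℤ)
  have hg1 := Int.gcd_eq_gcd_ab a b
  set g : ℤ := (Int.gcd (Int.gcd a b : ℤ) c : ℤ) with hgdef
  have hg := Int.gcd_eq_gcd_ab (Int.gcd a b : ℤ) c
  have hga : g ∣ a := (Int.gcd_dvd_left _ _).trans (Int.gcd_dvd_left _ _)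
  have hgb : g ∣ b := (Int.gcd_dvd_left _ _).trans (Int.gcd_dvd_right _ _)
  have hgc : g ∣ c := (Int.gcd_dvd_right _ _)
  have hgne : g ≠ 0 := by
    intro h
    rw [h] at hga hgb hgc
    apply h0
    rw [zero_dvd_iff] at hga hgb hgc
    subst hga hgb hgc
    ext i j; fin_cases i <;> fin_cases j <;> simp
  have hdd := hd g (by intro i j; fin_cases i <;> fin_cases j <;> simp [hga, hgb, hgc])
  obtain ⟨u, hu⟩ := hdd 0 0
  obtain ⟨v, hv⟩ := hdd 0 1
  obtain ⟨w, hw⟩ := hdd 1 0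
  simp at hu hv hw
  generalize Int.gcdA a b = x1 at *
  generalize Int.gcdB a b = x2 at *
  generalize Int.gcdA (Int.gcd a b : ℤ) c = x3 at *
  generalize Int.gcdB (Int.gcd a b : ℤ) c = x4 at *
  rw [← hgdef, hg1] at hg
  clear_value g
  have hab : a * b' = a' * b := by linarith
  have hac : a * c' = a' * c := by linarith
  have hbc : b * c' = b' * c := by linarith
  refine ⟨x1 * x3 * u + x2 * x3 * v + x4 * w, ?_⟩
  have ka : a' = (x1 * x3 * u + x2 * x3 * v + x4 * w) * a := by
    apply mul_left_cancel₀ hgne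
    have : g * a' = (x1 * x3 * a' + x2 * x3 * b' + x4 * c') * a := by
      rw [hg]; linear_combination  - (x2 * x3) * hab -x4 * hac
    rw [this, hu, hv, hw]; ring
  have kb : b' = (x1 * x3 * u + x2 * x3 * v + x4 * w) * b := by
    apply mul_left_cancel₀ hgne
    have : g * b' = (x1 * x3 * a' + x2 * x3 * b' + x4 * c') * b := by
      rw [hg]; linear_combination  (x1 * x3) * hab -x4 * hbc
    rw [this, hu, hv, hw]; ring
  have kc : c' = (x1 * x3 * u + x2 * x3 * v + x4 * w) * c := by
    apply mul_left_cancel₀ hgne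
    have : g * c' = (x1 * x3 * a' + x2 * x3 * b' + x4 * c') * c := by
      rw [hg]; linear_combination  (x1 * x3) * hac + (x2 * x3) * hbc
    rw [this, hu, hv, hw]; ring
  ext i j; fin_cases i <;> fin_cases j <;> simp
  · exact ka
  · exact kb
  · exact kc
  · exact ka

lemma conj_scalar2 (W : Matrix (Fin 2) (Fin 2) ℤ) (hW : W 1 1 = - W 0 0) (h0 : W ≠ 0)
    (z y : Matrix (Fin 2) (Fin 2) ℤ) (hz' : y * z = 1)
    (hc : W * (z * W * y) = (z * W * y) * W) :
    ∃ k : ℤ, z * W * y = k • W := by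
  refine conj_scalar W _ hW ?_ ?_ h0 hc
  · have h : (z * W * y).trace = W.trace := by
      rw [Matrix.trace_mul_comm, ← mul_assoc, hz', one_mul]
    rw [Matrix.trace_fin_two, Matrix.trace_fin_two, hW] at h
    linarith
  · intro d hd i j
    rw [Matrix.mul_apply]
    refine Finset.dvd_sum fun k _ => Dvd.dvd.mul_right ?_ _
    rw [Matrix.mul_apply]
    exact Finset.dvd_sum fun k _ => Dvd.dvd.mul_left (hd _ _) _

lemma sq_commute_mat (w z y : Matrix (Fin 2) (Fin 2) ℤ) (hz : z * y = 1) (hz' : y * z = 1)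
    (hc1 : w * (z * w * y) = (z * w * y) * w) : z * (z * w) = w * z * z := by
  obtain ⟨t, ht⟩ : ∃ t, t = w.trace := ⟨_, rfl⟩
  set W : Matrix (Fin 2) (Fin 2) ℤ := (2:ℤ) • w - t • (1 : Matrix _ _ ℤ) with hWd
  have hW : W 1 1 = - W 0 0 := by
    rw [hWd, ht, Matrix.trace_fin_two]
    simp only [Matrix.sub_apply, Matrix.smul_apply, Matrix.one_apply, smul_eq_mul]
    simp only [if_true]
    ring
  have e1 : z * W * y = (2:ℤ) • (z * w * y) - t • (1 : Matrix _ _ ℤ) := by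
    rw [hWd]
    simp only [mul_sub, sub_mul, Matrix.mul_smul, Matrix.smul_mul, mul_one, hz]
  have hcW : W * (z * W * y) = (z * W * y) * W := by
    rw [e1, hWd]
    simp only [mul_sub, sub_mul, Matrix.mul_smul, Matrix.smul_mul, mul_one, one_mul, hc1]
    module
  have key : z * (z * W) = W * z * z := by
    by_cases h0 : W = 0
    · rw [h0]; simp
    obtain ⟨k, hk⟩ := conj_scalar2 W hW h0 z y hz' hcW
    have hcW' : W * (y * W * z) = (y * W * z) * W := by
      have := congrArg (fun X => y * X * z) hcW
      beta_reduce at this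
      have f1 : y * (W * (z * W * y)) * z = y * W * z * W := by
        calc _ = y * W * z * W * (y * z) := by noncomm_ring
          _ = _ := by rw [hz', mul_one]
      have f2 : y * ((z * W * y) * W) * z = W * (y * W * z) := by
        calc _ = (y * z) * W * (y * W * z) := by noncomm_ring
          _ = _ := by rw [hz', one_mul]
      rw [f1, f2] at this
      exact this.symm
    obtain ⟨k', hk'⟩ := conj_scalar2 W hW h0 y z hz hcW'
    have h1 : z * W = k • (W * z) := by
      rw [← Matrix.smul_mul, ← hk, mul_assoc, hz', mul_one]
    have h2 : W * z = k' • (z * W) := by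
      rw [← Matrix.mul_smul, ← hk', ← mul_assoc, ← mul_assoc, hz, one_mul]
    have hne : z * W ≠ 0 := by
      intro h
      apply h0
      rw [← one_mul W, ← hz', mul_assoc, h, mul_zero]
    have h3 : k * k' = 1 := by
      have h4 : z * W = (k * k') • (z * W) := by
        conv_lhs => rw [h1, h2]
        rw [smul_smul]
      have h5 : (1 - k * k') • (z * W) = 0 := by
        rw [sub_smul, one_smul, ← h4, sub_self]
      rcases smul_eq_zero.1 h5 with h | h
      · linarith
      · exact absurd h hne
    have h6 : k * k = 1 := by
      rcases Int.eq_one_or_neg_one_of_mul_eq_one h3 with h | h <;> rw [h] <;> norm_num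
    calc z * (z * W) = k • (z * W * z) := by
          conv_lhs => rw [h1, Matrix.mul_smul, ← mul_assoc]
      _ = (k * k) • (W * z * z) := by
          rw [h1, Matrix.smul_mul, smul_smul]
      _ = _ := by rw [h6, one_smul]
  have key2 : (2:ℤ) • (z * (z * w)) = (2:ℤ) • (w * z * z) := by
    rw [hWd] at key
    simp only [mul_sub, sub_mul, Matrix.mul_smul, Matrix.smul_mul, mul_one, one_mul] at key
    exact sub_left_injective key
  exact smul_right_injective _ (by norm_num) key2

lemma sq_commute (w z : SpecialLinearGroup (Fin 2) ℤ)
    (hc : w * (z * w * z⁻¹) = (z * w * z⁻¹) * w) : z ^ 2 * w = w * z ^ 2 := by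
  rw [sq, mul_assoc, ← mul_assoc w]
  exact Subtype.ext (sq_commute_mat w.1 z.1 (z⁻¹).1
    (congrArg Subtype.val (mul_inv_cancel z)) (congrArg Subtype.val (inv_mul_cancel z))
    (congrArg Subtype.val hc))

end PartTwo

section PartTwoB
open Matrix

/-- A nonscalar matrix in `SL₂(ℤ)`. -/
def NC (w : SL2Z) : Prop := ¬ (w.1 0 1 = 0 ∧ w.1 1 0 = 0 ∧ w.1 0 0 = w.1 1 1)

lemma comm_iff_cross (a w : SL2Z) : a * w = w * a ↔
    (a.1 0 1 * w.1 1 0 = w.1 0 1 * a.1 1 0 ∧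
      a.1 0 1 * (w.1 0 0 - w.1 1 1) = w.1 0 1 * (a.1 0 0 - a.1 1 1) ∧
      a.1 1 0 * (w.1 0 0 - w.1 1 1) = w.1 1 0 * (a.1 0 0 - a.1 1 1)) := by
  constructor
  · intro h
    have h' : a.1 * w.1 = w.1 * a.1 := congrArg Subtype.val h
    have e1 := congrFun₂ h' 0 0
    have e2 := congrFun₂ h' 0 1
    have e3 := congrFun₂ h' 1 0
    simp only [Matrix.mul_apply, Fin.sum_univ_two] at e1 e2 e3
    refine ⟨by linarith, by linarith, by linarith⟩
  · rintro ⟨h1, h2, h3⟩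
    apply Subtype.ext
    change a.1 * w.1 = w.1 * a.1
    ext i j
    rw [Matrix.mul_apply, Matrix.mul_apply, Fin.sum_univ_two, Fin.sum_univ_two]
    fin_cases i <;> fin_cases j <;> simp only [Fin.zero_eta, Fin.mk_one]
    · linarith
    · linarith
    · linarith
    · linarith

lemma comm_of_NC (a b w : SL2Z) (hw : NC w) (ha : a * w = w * a) (hb : b * w = w * b) :
    a * b = b * a := by
  rw [comm_iff_cross] at *
  obtain ⟨a1, a2, a3'⟩ := ha
  obtain ⟨b1, b2, b3'⟩ := hb
  unfold NC at hw
  rw [← sub_eq_zero (a := w.1 0 0)] at hw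
  generalize w.1 0 0 - w.1 1 1 = z at *
  generalize b.1 0 0 - b.1 1 1 = b3 at *
  generalize a.1 0 0 - a.1 1 1 = a3 at *
  generalize w.1 0 1 = x at *
  generalize w.1 1 0 = y at *
  generalize a.1 0 1 = p1 at *
  generalize a.1 1 0 = p2 at *
  generalize b.1 0 1 = q1 at *
  generalize b.1 1 0 = q2 at *
  by_cases hx : x = 0
  · by_cases hy : y = 0
    · have hz : z ≠ 0 := fun h => hw ⟨hx, hy, h⟩
      subst hx hy
      simp [hz] at *
      simp [*]
    · have h3 : p2 * b3 = q2 * a3 := by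
        apply mul_left_cancel₀ hy
        linear_combination q2 * a3' - p2 * b3'
      refine ⟨?_, ?_, h3⟩
      · apply mul_left_cancel₀ hy
        linear_combination q2 * a1 - p2 * b1
      · apply mul_left_cancel₀ hy
        linear_combination b3 * a1 - a3 * b1 + x * h3
  · have h1 : p1 * b3 = q1 * a3 := by
      apply mul_left_cancel₀ hx
      linear_combination q1 * a2 - p1 * b2
    have h2 : p1 * q2 = q1 * p2 := by
      apply mul_left_cancel₀ hx
      linear_combination q1 * a1 - p1 * b1
    refine ⟨h2, h1, ?_⟩
    apply mul_left_cancel₀ hx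
    linear_combination b3 * (-a1) + a3 * b1 + y * h1

end PartTwoB

section PartTwoC
open Matrix

lemma g3_form (g : SL2Z) (hg : modq 3 g = 1) : ∃ a b c d : ℤ,
    g.1 0 0 = 1 + 3 * a ∧ g.1 0 1 = 3 * b ∧ g.1 1 0 = 3 * c ∧ g.1 1 1 = 1 + 3 * d := by
  have h : ∀ i j, ((g.1 i j : ℤ) : ZMod 3) = (1 : Matrix (Fin 2) (Fin 2) (ZMod 3)) i j := by
    intro i j
    have := congrFun₂ (congrArg Subtype.val hg) i j
    exact this
  have h00 := h 0 0
  have h01 := h 0 1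
  have h10 := h 1 0
  have h11 := h 1 1
  simp at h00 h01 h10 h11
  obtain ⟨b, hb⟩ := (ZMod.intCast_zmod_eq_zero_iff_dvd _ 3).1 h01
  obtain ⟨c, hc⟩ := (ZMod.intCast_zmod_eq_zero_iff_dvd _ 3).1 h10
  obtain ⟨a, ha⟩ := (ZMod.intCast_zmod_eq_zero_iff_dvd (g.1 0 0 - 1) 3).1 (by push_cast; rw [h00]; ring)
  obtain ⟨d, hd⟩ := (ZMod.intCast_zmod_eq_zero_iff_dvd (g.1 1 1 - 1) 3).1 (by push_cast; rw [h11]; ring)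
  exact ⟨a, b, c, d, by push_cast at ha; linarith, by exact_mod_cast hb, by exact_mod_cast hc,
    by push_cast at hd; linarith⟩

lemma sl_det (g : SL2Z) : g.1 0 0 * g.1 1 1 - g.1 0 1 * g.1 1 0 = 1 := by
  have := g.det_coe
  rwa [Matrix.det_fin_two] at this

lemma g3_trace (g : SL2Z) (hg : modq 3 g = 1) :
    g.1 0 0 + g.1 1 1 = 2 ∨ 7 ≤ |g.1 0 0 + g.1 1 1| := by
  obtain ⟨a, b, c, d, ha, hb, hc, hd⟩ := g3_form g hg
  have h := sl_det g
  rw [ha, hb, hc, hd] at h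
  rw [ha, hd]
  have : a + d = -3 * (a * d - b * c) := by linarith
  generalize a * d - b * c = e at this
  rw [le_abs]
  omega

lemma g3_NC (g : SL2Z) (hg : modq 3 g = 1) (h1 : g ≠ 1) : NC g := by
  rintro ⟨hb, hc, hd⟩
  apply h1
  have h := sl_det g
  obtain ⟨a, -, -, -, ha, -, -, -⟩ := g3_form g hg
  rw [hb, ← hd] at h
  have h2 : g.1 0 0 = 1 := by
    rcases Int.eq_one_or_neg_one_of_mul_eq_one (by linarith : g.1 0 0 * g.1 0 0 = 1) with h | h
    · exact h
    · omega
  apply Subtype.ext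
  change g.1 = 1
  ext i j
  fin_cases i <;> fin_cases j <;> simp
  · exact h2
  · exact hb
  · exact hc
  · rw [← hd]; exact h2

lemma pow_form (g : SL2Z) (ht : 2 ≤ |g.1 0 0 + g.1 1 1|) (n : ℕ) : ∃ a b : ℤ, |b| < |a| ∧
    (g ^ (n + 1)).1 = a • g.1 - b • (1 : Matrix (Fin 2) (Fin 2) ℤ) := by
  induction n with
  | zero => exact ⟨1, 0, by simp, by simp⟩
  | succ n ih =>
    obtain ⟨a, b, hab, h⟩ := ih
    refine ⟨a * (g.1 0 0 + g.1 1 1) - b, a, ?_, ?_⟩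
    · have h1 : |a * (g.1 0 0 + g.1 1 1)| ≤ |a * (g.1 0 0 + g.1 1 1) - b| + |b| := by
        simpa using abs_add_le (a * (g.1 0 0 + g.1 1 1) - b) b
      rw [abs_mul] at h1
      have h2 : |a| * 2 ≤ |a| * |g.1 0 0 + g.1 1 1| := by gcongr
      linarith
    · have hm : (g ^ (n + 1 + 1)).1 = (g ^ (n+1)).1 * g.1 := congrArg Subtype.val (pow_succ g (n+1))
      rw [hm, h]
      have hd := sl_det g
      ext i j
      rw [Matrix.mul_apply, Fin.sum_univ_two]
      simp only [Matrix.sub_apply, Matrix.smul_apply, smul_eq_mul, Matrix.one_apply]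
      fin_cases i <;> fin_cases j <;> simp
      · linear_combination -a * hd
      · ring
      · ring
      · linear_combination -a * hd

lemma NC_pow (g : SL2Z) (ht : 2 ≤ |g.1 0 0 + g.1 1 1|) (hg : NC g) (n : ℕ) : NC (g ^ (n + 1)) := by
  obtain ⟨a, b, hab, h⟩ := pow_form g ht n
  have ha : a ≠ 0 := by
    rintro rfl
    simp at hab
    exact absurd hab (not_lt.2 (abs_nonneg b))
  unfold NC
  rw [h]
  simp only [Matrix.sub_apply, Matrix.smul_apply, smul_eq_mul, Matrix.one_apply]
  simp [ha]
  intro h1 h2 h3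
  exact hg ⟨h1, h2, h3⟩

lemma g3_abs_trace (g : SL2Z) (hg : modq 3 g = 1) : 2 ≤ |g.1 0 0 + g.1 1 1| := by
  rcases g3_trace g hg with h | h
  · rw [h]; norm_num
  · linarith

lemma even_pow_comm (w z : SL2Z)
    (hc : w * (z * w * z⁻¹) = (z * w * z⁻¹) * w) : z ^ 120 * w = w * z ^ 120 := by
  have h : Commute (z ^ 2) w := sq_commute w z hc
  have := h.pow_left 60
  rw [← pow_mul] at this
  exact this

lemma int_law (x y : SL2Z) (hx : modq 3 x = 1) (hy : modq 3 y = 1)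
    (h1 : cw x y * (x * cw x y * x⁻¹) = x * cw x y * x⁻¹ * cw x y)
    (h2 : cw y x * (y * cw y x * y⁻¹) = y * cw y x * y⁻¹ * cw y x) : x * y = y * x := by
  by_cases hx1 : x = 1
  · simp [hx1]
  by_cases hy1 : y = 1
  · simp [hy1]
  have hinv : cw y x = (cw x y)⁻¹ := by unfold cw; group
  have h2' : cw x y * (y * cw x y * y⁻¹) = y * cw x y * y⁻¹ * cw x y := by
    rw [hinv] at h2
    have := congrArg (fun t => t⁻¹) h2
    simp only [_root_.mul_inv_rev, inv_inv] at this
    rw [← mul_assoc y, ← mul_assoc, ← mul_assoc] at this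
    simp only [mul_assoc] at this ⊢
    exact this.symm
  have e1 := even_pow_comm _ _ h1
  have e2 := even_pow_comm _ _ h2'
  have hcom : x ^ 120 * y ^ 120 = y ^ 120 * x ^ 120 := by
    by_cases hw : cw x y = 1
    · unfold cw at hw
      rw [mul_inv_eq_one, mul_inv_eq_iff_eq_mul] at hw
      exact hw
    · have hw3 : modq 3 (cw x y) = 1 := by
        unfold cw
        simp [hx, hy]
      exact comm_of_NC _ _ _ (g3_NC _ hw3 hw) e1 e2
  have nx := NC_pow x (g3_abs_trace x hx) (g3_NC x hx hx1) 119
  have ny := NC_pow y (g3_abs_trace y hy) (g3_NC y hy hy1) 119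
  have c1 : x * y ^ 120 = y ^ 120 * x :=
    comm_of_NC x (y ^ 120) (x ^ 120) nx ((Commute.refl x).pow_right 120) hcom.symm
  exact comm_of_NC x y (y ^ 120) ny c1 ((Commute.refl y).pow_right 120)

end PartTwoC

section PartThree
open Matrix

/-- Sum of absolute values of the entries. -/
def NN (g : SL2Z) : ℕ := (g.1 0 0).natAbs + (g.1 0 1).natAbs + (g.1 1 0).natAbs + (g.1 1 1).natAbs

lemma NN_mul (g h : SL2Z) : NN (g * h) ≤ NN g * NN h := by
  have e : ∀ i j, (g * h).1 i j = g.1 i 0 * h.1 0 j + g.1 i 1 * h.1 1 j := by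
    intro i j
    have : (g * h).1 i j = (g.1 * h.1) i j := rfl
    rw [this, Matrix.mul_apply, Fin.sum_univ_two]
  have b : ∀ i j, ((g * h).1 i j).natAbs ≤
      (g.1 i 0).natAbs * (h.1 0 j).natAbs + (g.1 i 1).natAbs * (h.1 1 j).natAbs := by
    intro i j
    rw [e, ← Int.natAbs_mul, ← Int.natAbs_mul]
    exact Int.natAbs_add_le _ _
  unfold NN
  have := b 0 0
  have := b 0 1
  have := b 1 0
  have := b 1 1
  nlinarith [Nat.zero_le ((g.1 0 0).natAbs * (h.1 1 0).natAbs), Nat.zero_le ((g.1 0 0).natAbs * (h.1 1 1).natAbs),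
    Nat.zero_le ((g.1 0 1).natAbs * (h.1 0 0).natAbs), Nat.zero_le ((g.1 0 1).natAbs * (h.1 0 1).natAbs),
    Nat.zero_le ((g.1 1 0).natAbs * (h.1 1 0).natAbs), Nat.zero_le ((g.1 1 0).natAbs * (h.1 1 1).natAbs),
    Nat.zero_le ((g.1 1 1).natAbs * (h.1 0 0).natAbs), Nat.zero_le ((g.1 1 1).natAbs * (h.1 0 1).natAbs)]

lemma inv_entries (g : SL2Z) : (g⁻¹).1 0 0 = g.1 1 1 ∧ (g⁻¹).1 0 1 = - g.1 0 1 ∧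
    (g⁻¹).1 1 0 = - g.1 1 0 ∧ (g⁻¹).1 1 1 = g.1 0 0 := by
  have : (g⁻¹).1 = !![g.1 1 1, - g.1 0 1; - g.1 1 0, g.1 0 0] := by
    have h := Matrix.SpecialLinearGroup.SL2_inv_expl g
    rw [h]
    rfl
  rw [this]; simp

lemma NN_inv (g : SL2Z) : NN g⁻¹ = NN g := by
  obtain ⟨h1, h2, h3, h4⟩ := inv_entries g
  unfold NN
  rw [h1, h2, h3, h4, Int.natAbs_neg, Int.natAbs_neg]
  ring

lemma NN_mul_le {M k l : ℕ} {g h : SL2Z} (hg : NN g ≤ M ^ k) (hh : NN h ≤ M ^ l) :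
    NN (g * h) ≤ M ^ (k + l) := by
  rw [pow_add]
  exact (NN_mul g h).trans (Nat.mul_le_mul hg hh)

lemma NN_pow_le {M k : ℕ} {g : SL2Z} (hg : NN g ≤ M ^ k) (n : ℕ) :
    NN (g ^ (n + 1)) ≤ M ^ (k * (n + 1)) := by
  induction n with
  | zero => simpa using hg
  | succ n ih =>
    rw [pow_succ g (n+1), mul_add k (n+1) 1, mul_one]
    exact NN_mul_le ih hg

lemma NN_entry (g : SL2Z) (i j : Fin 2) : (g.1 i j).natAbs ≤ NN g := by
  unfold NN
  fin_cases i <;> fin_cases j <;> simp <;> omega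

lemma NN_list {M : ℕ} (l : List SL2Z) (hl : ∀ x ∈ l, NN x ≤ M) (hne : l ≠ []) :
    NN l.prod ≤ M ^ l.length := by
  induction l with
  | nil => exact absurd rfl hne
  | cons a l ih =>
    by_cases h : l = []
    · subst h; simpa using hl a (by simp)
    · rw [List.prod_cons, List.length_cons, add_comm]
      exact NN_mul_le (by simpa using hl a (by simp)) (ih (fun x hx => hl x (by simp [hx])) h)

lemma NN_cw {M k : ℕ} {x y : SL2Z} (hx : NN x ≤ M ^ k) (hy : NN y ≤ M ^ k) :
    NN (cw x y) ≤ M ^ (480 * k) := by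
  have h1 := NN_pow_le hx 119
  have h2 := NN_pow_le hy 119
  have h3 := NN_mul_le (NN_mul_le (NN_mul_le h1 h2) ((NN_inv _).trans_le h1)) ((NN_inv _).trans_le h2)
  unfold cw
  convert h3 using 2
  ring

lemma law_entry_bound {M R : ℕ} (hM : 2 ≤ M) (hR : 1 ≤ R) {x y : SL2Z}
    (hx : NN x ≤ M ^ (2 * R)) (hy : NN y ≤ M ^ (2 * R)) (i j : Fin 2) :
    ((cw x y * (x * cw x y * x⁻¹)).1 i j - (x * cw x y * x⁻¹ * cw x y).1 i j).natAbs
      ≤ M ^ (1925 * R) := by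
  have hc := NN_cw hx hy
  have hm := NN_mul_le (NN_mul_le hx hc) ((NN_inv _).trans_le hx)
  have h1 := (NN_entry _ i j).trans (NN_mul_le hc hm)
  have h2 := (NN_entry _ i j).trans (NN_mul_le hm hc)
  have h3 := Int.natAbs_sub_le ((cw x y * (x * cw x y * x⁻¹)).1 i j) ((x * cw x y * x⁻¹ * cw x y).1 i j)
  have e1 : 480 * (2 * R) + (2 * R + 480 * (2 * R) + 2 * R) = 1924 * R := by ring
  have e2 : 2 * R + 480 * (2 * R) + 2 * R + 480 * (2 * R) = 1924 * R := by ring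
  rw [e1] at h1
  rw [e2] at h2
  have h4 : M ^ (1925 * R) = M ^ R * M ^ (1924 * R) := by rw [← pow_add]; congr 1; ring
  have h5 : 2 ≤ M ^ R := hM.trans (Nat.le_self_pow (by omega) M)
  rw [h4]
  calc _ ≤ M ^ (1924 * R) + M ^ (1924 * R) := h3.trans (Nat.add_le_add h1 h2)
    _ = 2 * M ^ (1924 * R) := by ring
    _ ≤ _ := Nat.mul_le_mul_right _ h5

lemma modq_comp {p q' : ℕ} (hp : p ∣ q') (x : SL2Z) :
    Matrix.SpecialLinearGroup.map (ZMod.castHom hp (ZMod p)) (modq q' x) = modq p x := by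
  apply Subtype.ext
  ext i j
  change ZMod.castHom hp (ZMod p) ((x.1 i j : ℤ) : ZMod q') = ((x.1 i j : ℤ) : ZMod p)
  rw [map_intCast]

lemma map_cw {G K : Type*} [Group G] [Group K] (f : G →* K) (a b : G) :
    f (cw a b) = cw (f a) (f b) := by
  simp [cw]

lemma dvd_entry {p q' : ℕ} (hpp : p.Prime) (hp : p ∣ q')
    (H : Subgroup (Matrix.SpecialLinearGroup (Fin 2) (ZMod q')))
    (hH : Subgroup.map (Matrix.SpecialLinearGroup.map (ZMod.castHom hp (ZMod p))) H ≠ ⊤)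
    (x y : SL2Z) (hx : modq q' x ∈ H) (hy : modq q' y ∈ H) (i j : Fin 2) :
    (p : ℤ) ∣ (cw x y * (x * cw x y * x⁻¹)).1 i j - (x * cw x y * x⁻¹ * cw x y).1 i j := by
  have : Fact p.Prime := ⟨hpp⟩
  have h := proper_law _ hH (modq p x) (modq p y)
    ⟨_, hx, modq_comp hp x⟩ ⟨_, hy, modq_comp hp y⟩
  rw [← map_cw, ← map_inv, ← map_mul, ← map_mul, ← map_mul, ← map_mul] at h
  have h2 := congrFun₂ (congrArg Subtype.val h) i j
  have h3 : (((cw x y * (x * cw x y * x⁻¹)).1 i j : ℤ) : ZMod p) =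
    (((x * cw x y * x⁻¹ * cw x y).1 i j : ℤ) : ZMod p) := h2
  rw [← dvd_neg, neg_sub]
  exact (ZMod.intCast_eq_intCast_iff_dvd_sub _ _ _).1 h3

lemma zero_of_small {κ q' n B : ℕ} (hk : ∀ p : ℕ, p.Prime → ¬ p ^ (κ + 1) ∣ q')
    (hp : ∀ p : ℕ, p.Prime → p ∣ q' → p ∣ n) (hn : n ≤ B) (hB : B ^ κ < q') : n = 0 := by
  by_contra h0
  have hd : q' ∣ n ^ κ := by
    rw [Nat.dvd_iff_prime_pow_dvd_dvd]
    intro p k hpp hpk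
    rcases Nat.eq_zero_or_pos k with h | h
    · simp [h]
    have hle : k ≤ κ := by
      by_contra hlt
      exact hk p hpp ((pow_dvd_pow p (by omega)).trans hpk)
    exact (pow_dvd_pow_of_dvd (hp p hpp ((dvd_pow_self p (by omega)).trans hpk)) k).trans
      (pow_dvd_pow n hle)
  have h1 := Nat.le_of_dvd (Nat.pow_pos (Nat.pos_of_ne_zero h0)) hd
  have h2 : n ^ κ ≤ B ^ κ := Nat.pow_le_pow_left hn κ
  omega

lemma small_law {κ q' M R : ℕ} (hM : 2 ≤ M) (hR : 1 ≤ R)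
    (hk : ∀ p : ℕ, p.Prime → ¬ p ^ (κ + 1) ∣ q')
    (H : Subgroup (Matrix.SpecialLinearGroup (Fin 2) (ZMod q')))
    (hH : ∀ p : ℕ, p.Prime → ∀ hp : p ∣ q',
      Subgroup.map (Matrix.SpecialLinearGroup.map (ZMod.castHom hp (ZMod p))) H ≠ ⊤)
    (hB : (M ^ (1925 * R)) ^ κ < q')
    (x y : SL2Z) (hx : modq q' x ∈ H) (hy : modq q' y ∈ H)
    (hxN : NN x ≤ M ^ (2 * R)) (hyN : NN y ≤ M ^ (2 * R)) :
    cw x y * (x * cw x y * x⁻¹) = x * cw x y * x⁻¹ * cw x y := by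
  apply Subtype.ext
  change (cw x y * (x * cw x y * x⁻¹)).1 = (x * cw x y * x⁻¹ * cw x y).1
  ext i j
  rw [← sub_eq_zero, ← Int.natAbs_eq_zero]
  refine zero_of_small hk (fun p hpp hp => ?_) (law_entry_bound hM hR hxN hyN i j) hB
  have := dvd_entry hpp hp H (hH p hpp hp) x y hx hy i j
  exact Int.natCast_dvd.1 this

lemma small_commute {κ q' M R : ℕ} (hM : 2 ≤ M) (hR : 1 ≤ R)
    (hk : ∀ p : ℕ, p.Prime → ¬ p ^ (κ + 1) ∣ q')
    (H : Subgroup (Matrix.SpecialLinearGroup (Fin 2) (ZMod q')))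
    (hH : ∀ p : ℕ, p.Prime → ∀ hp : p ∣ q',
      Subgroup.map (Matrix.SpecialLinearGroup.map (ZMod.castHom hp (ZMod p))) H ≠ ⊤)
    (hB : (M ^ (1925 * R)) ^ κ < q')
    (x y : SL2Z) (hx3 : modq 3 x = 1) (hy3 : modq 3 y = 1)
    (hx : modq q' x ∈ H) (hy : modq q' y ∈ H)
    (hxN : NN x ≤ M ^ (2 * R)) (hyN : NN y ≤ M ^ (2 * R)) : x * y = y * x :=
  int_law x y hx3 hy3 (small_law hM hR hk H hH hB x y hx hy hxN hyN)
    (small_law hM hR hk H hH hB y x hy hx hyN hxN)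

end PartThree

section PartFour
open Matrix

/-- Number of steps of the subtractive Euclidean algorithm. -/
def ef (a b : ℕ) : ℕ :=
  if _h : a = 0 ∨ b = 0 then 0 else if b ≤ a then 1 + ef (a - b) b else 1 + ef a (b - a)
termination_by a + b
decreasing_by all_goals omega

lemma ef_zero_left (b : ℕ) : ef 0 b = 0 := by rw [ef]; simp
lemma ef_zero_right (b : ℕ) : ef b 0 = 0 := by rw [ef]; simp
lemma ef_ge {a b : ℕ} (hb : 0 < b) (h : b ≤ a) : ef a b = 1 + ef (a - b) b := by
  rw [ef, dif_neg (by omega), if_pos h]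
lemma ef_lt {a b : ℕ} (ha : 0 < a) (h : a < b) : ef a b = 1 + ef a (b - a) := by
  rw [ef, dif_neg (by omega), if_neg (by omega)]
lemma ef_add (a b : ℕ) (hb : 0 < b) : ef (a + b) b = 1 + ef a b := by
  rw [ef_ge hb (by omega)]; simp

lemma ef_symm (n : ℕ) : ∀ a b : ℕ, a + b ≤ n → ef a b = ef b a := by
  induction n with
  | zero => intro a b h; have : a = 0 := by omega
            have : b = 0 := by omega
            simp [*]
  | succ n ih =>
    intro a b h
    rcases Nat.eq_zero_or_pos a with ha | ha
    · rw [ha, ef_zero_left, ef_zero_right]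
    rcases Nat.eq_zero_or_pos b with hb | hb
    · rw [hb, ef_zero_left, ef_zero_right]
    rcases lt_trichotomy a b with h1 | h1 | h1
    · rw [ef_lt ha h1, ef_ge ha h1.le, ih _ _ (by omega)]
    · rw [h1]
    · rw [ef_lt hb h1, ef_ge hb h1.le, ih _ _ (by omega)]

lemma ef_comm (a b : ℕ) : ef a b = ef b a := ef_symm _ a b le_rfl

lemma ef_one (m : ℕ) : ef m 1 = m := by
  induction m with
  | zero => exact ef_zero_left 1
  | succ m ih => rw [ef_add m 1 one_pos, ih]; ring

/-- The Euclid height of an integer vector. -/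
def eF (v : Fin 2 → ℤ) : ℕ := ef (v 0).natAbs (v 1).natAbs

lemma ef_int (x y : ℤ) : ef (x + y).natAbs y.natAbs ≤ ef x.natAbs y.natAbs + 1 ∧
    ef x.natAbs y.natAbs ≤ ef (x + y).natAbs y.natAbs + 1 := by
  by_cases hy : y = 0
  · subst hy; simp
  have hy' : 0 < y.natAbs := by omega
  by_cases hs : (x + y).natAbs = x.natAbs + y.natAbs
  · rw [hs, ef_add _ _ hy']; omega
  by_cases hs2 : x.natAbs = (x + y).natAbs + y.natAbs
  · rw [hs2, ef_add _ _ hy']; omega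
  have hs3 : (x + y).natAbs = y.natAbs - x.natAbs := by omega
  have h1 : x.natAbs < y.natAbs := by omega
  have h2 : 0 < x.natAbs := by omega
  rw [hs3, ef_lt h2 h1, ef_lt (by omega : 0 < y.natAbs - x.natAbs) (by omega)]
  have : y.natAbs - (y.natAbs - x.natAbs) = x.natAbs := by omega
  rw [this, ef_comm]
  omega

/-- `g` moves the Euclid height by at most `C`. -/
def eB (g : SL2Z) (C : ℕ) : Prop := ∀ v, eF (g.1 *ᵥ v) ≤ eF v + C ∧ eF v ≤ eF (g.1 *ᵥ v) + C

lemma eB_mul {g h : SL2Z} {C E : ℕ} (hg : eB g C) (hh : eB h E) : eB (g * h) (C + E) := by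
  intro v
  have e : (g * h).1 *ᵥ v = g.1 *ᵥ (h.1 *ᵥ v) := by
    rw [Matrix.mulVec_mulVec]; rfl
  rw [e]
  have h1 := hg (h.1 *ᵥ v)
  have h2 := hh v
  omega

lemma mulVec_inv_cancel (g : SL2Z) (v : Fin 2 → ℤ) : g.1 *ᵥ ((g⁻¹).1 *ᵥ v) = v := by
  rw [Matrix.mulVec_mulVec]
  have : g.1 * (g⁻¹).1 = 1 := congrArg Subtype.val (mul_inv_cancel g)
  rw [this, Matrix.one_mulVec]

lemma eB_inv {g : SL2Z} {C : ℕ} (hg : eB g C) : eB g⁻¹ C := by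
  intro v
  have h := hg ((g⁻¹).1 *ᵥ v)
  rw [mulVec_inv_cancel] at h
  exact ⟨h.2, h.1⟩

lemma eB_exists (g : SL2Z) : ∃ C, eB g C := by
  have hg : g ∈ Subgroup.closure {ModularGroup.S, ModularGroup.T} := by
    rw [SpecialLinearGroup.SL2Z_generators]; trivial
  induction hg using Subgroup.closure_induction with
  | mem x hx =>
    rcases hx with rfl | hx
    · refine ⟨0, fun v => ?_⟩
      have : eF (ModularGroup.S.1 *ᵥ v) = eF v := by
        unfold eF
        simp [ModularGroup.S, Matrix.mulVec, dotProduct, Fin.sum_univ_two]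
        exact ef_comm _ _
      rw [this]; simp
    · rw [Set.mem_singleton_iff] at hx
      subst hx
      refine ⟨1, fun v => ?_⟩
      unfold eF
      have h0 : (ModularGroup.T.1 *ᵥ v) 0 = v 0 + v 1 := by
        simp [ModularGroup.T, Matrix.mulVec, dotProduct, Fin.sum_univ_two]
      have h1 : (ModularGroup.T.1 *ᵥ v) 1 = v 1 := by
        simp [ModularGroup.T, Matrix.mulVec, dotProduct, Fin.sum_univ_two]
      rw [h0, h1]
      exact ef_int _ _
  | one => exact ⟨0, fun v => by simp⟩
  | mul x y _ _ hx hy =>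
    obtain ⟨C, hC⟩ := hx
    obtain ⟨E, hE⟩ := hy
    exact ⟨_, eB_mul hC hE⟩
  | inv x _ hx =>
    obtain ⟨C, hC⟩ := hx
    exact ⟨_, eB_inv hC⟩

lemma eB_list {C : ℕ} (l : List SL2Z) (hl : ∀ x ∈ l, eB x C) : eB l.prod (l.length * C) := by
  induction l with
  | nil => intro v; simp
  | cons a l ih =>
    rw [List.prod_cons, List.length_cons, add_mul, one_mul, add_comm]
    exact eB_mul (hl a (by simp)) (ih fun x hx => hl x (by simp [hx]))

lemma eB_pow {C : ℕ} {g : SL2Z} (hg : eB g C) (n : ℕ) : eB (g ^ n) (n * C) := by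
  induction n with
  | zero => intro v; simp
  | succ n ih => rw [pow_succ, add_mul, one_mul]; exact eB_mul ih hg

lemma unip_pow (u : SL2Z) (m : ℤ) (hu : u.1 = !![1, m; 0, 1]) (j : ℕ) :
    (u ^ j).1 = !![1, m * j; 0, 1] := by
  induction j with
  | zero =>
    have : (u ^ 0).1 = 1 := by rw [pow_zero]; rfl
    rw [this]
    ext i k; fin_cases i <;> fin_cases k <;> simp
  | succ j ih =>
    have : (u ^ (j + 1)).1 = (u ^ j).1 * u.1 := congrArg Subtype.val (pow_succ u j)
    rw [this, ih, hu, Matrix.mul_fin_two]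
    ext i k; fin_cases i <;> fin_cases k <;> simp
    ring

lemma undistorted (k z : SL2Z) (m : ℤ) (hz : (k * z * k⁻¹).1 = !![1, m; 0, 1]) {L : ℕ}
    (hL : eB z L) : m.natAbs ≤ L := by
  obtain ⟨E, hE⟩ := eB_exists k
  by_contra hlt
  set e2 : Fin 2 → ℤ := ![0, 1]
  set v := (k⁻¹).1 *ᵥ e2
  set j := eF v + E + 1
  have h1 := (eB_pow hL j v).1
  have h2 := (hE ((z ^ j).1 *ᵥ v)).1
  have h3 : k.1 *ᵥ ((z ^ j).1 *ᵥ v) = ((k * z * k⁻¹) ^ j).1 *ᵥ e2 := by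
    rw [conj_pow, Matrix.mulVec_mulVec, Matrix.mulVec_mulVec]; rfl
  have h4 : ((k * z * k⁻¹) ^ j).1 *ᵥ e2 = ![m * j, 1] := by
    rw [unip_pow _ m hz]
    ext i; fin_cases i <;> simp [e2]
  rw [h3, h4] at h2
  have h5 : eF ![m * j, 1] = m.natAbs * j := by
    simp [eF, ef_one, Int.natAbs_mul]
  rw [h5] at h2
  have h6 : (L + 1) * j ≤ m.natAbs * j := Nat.mul_le_mul_right _ (by omega)
  have : (L + 1) * j = j * L + j := by ring
  omega

end PartFour

section PartFourB
open Matrix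

lemma prim_vec (x y : ℤ) (h : x ≠ 0 ∨ y ≠ 0) : ∃ d x' y' : ℤ, d ≠ 0 ∧ x = d * x' ∧ y = d * y' ∧
    IsCoprime x' y' := by
  have hg : 0 < Int.gcd x y := Int.gcd_pos_iff.2 h
  obtain ⟨x', y', h1, h2, h3⟩ := Int.exists_gcd_one hg
  refine ⟨(Int.gcd x y : ℤ), x', y', by exact_mod_cast hg.ne', by rw [mul_comm]; exact h2,
    by rw [mul_comm]; exact h3, Int.isCoprime_iff_gcd_eq_one.2 h1⟩

lemma parabolic_conj (u : SL2Z) (hu3 : modq 3 u = 1) (hu : u ≠ 1) (ht : u.1 0 0 + u.1 1 1 = 2) :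
    ∃ k : SL2Z, (k * u * k⁻¹).1 0 0 = 1 ∧ (k * u * k⁻¹).1 1 0 = 0 := by
  have hnc := g3_NC u hu3 hu
  have hd := sl_det u
  have hv : ∃ x y : ℤ, (x ≠ 0 ∨ y ≠ 0) ∧ u.1 0 0 * x + u.1 0 1 * y = x ∧
      u.1 1 0 * x + u.1 1 1 * y = y := by
    by_cases h : u.1 0 1 = 0 ∧ u.1 0 0 = 1
    · refine ⟨1 - u.1 1 1, u.1 1 0, ?_, ?_, ?_⟩
      · right
        intro hc
        exact hnc ⟨h.1, hc, by linarith [h.2]⟩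
      · rw [h.1, h.2]; ring
      · ring
    · refine ⟨u.1 0 1, 1 - u.1 0 0, ?_, ?_, ?_⟩
      · by_contra hcon
        push Not at hcon
        exact h ⟨hcon.1, by linarith [hcon.2]⟩
      · ring
      · have : u.1 1 1 = 2 - u.1 0 0 := by linarith
        rw [this] at hd ⊢
        linarith
  obtain ⟨x, y, hxy, e1, e2⟩ := hv
  obtain ⟨d, x', y', hd0, rfl, rfl, hcop⟩ := prim_vec x y hxy
  have e1' : u.1 0 0 * x' + u.1 0 1 * y' = x' := mul_left_cancel₀ hd0 (by linarith)
  have e2' : u.1 1 0 * x' + u.1 1 1 * y' = y' := mul_left_cancel₀ hd0 (by linarith)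
  obtain ⟨g, hg0, hg1⟩ := hcop.exists_SL2_col 0
  have hgd := sl_det g
  have hg0' : g.1 0 0 = x' := hg0
  have hg1' : g.1 1 0 = y' := hg1
  refine ⟨g⁻¹, ?_⟩
  rw [inv_inv]
  obtain ⟨i1, i2, i3, i4⟩ := inv_entries g
  have hm : (g⁻¹ * u * g).1 = (g⁻¹).1 * u.1 * g.1 := rfl
  rw [hm]
  simp only [Matrix.mul_apply, Fin.sum_univ_two, i1, i2, i3, i4]
  rw [hg0', hg1'] at hgd ⊢
  constructor
  · linear_combination g.1 1 1 * e1' - g.1 0 1 * e2' + hgd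
  · linear_combination -y' * e1' + x' * e2'

lemma parabolic_form (u k : SL2Z) (hu3 : modq 3 u = 1) (hu : u ≠ 1)
    (h0 : (k * u * k⁻¹).1 0 0 = 1) (h1 : (k * u * k⁻¹).1 1 0 = 0)
    (z : SL2Z) (hz3 : modq 3 z = 1) (hz : z * u = u * z) :
    (k * z * k⁻¹).1 = !![1, (k * z * k⁻¹).1 0 1; 0, 1] := by
  have hU3 : modq 3 (k * u * k⁻¹) = 1 := by simp [hu3]
  have hU : k * u * k⁻¹ ≠ 1 := by
    intro h
    rw [mul_inv_eq_one] at h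
    exact hu (by simpa using h)
  have hZ3 : modq 3 (k * z * k⁻¹) = 1 := by simp [hz3]
  have hZ : (k * z * k⁻¹) * (k * u * k⁻¹) = (k * u * k⁻¹) * (k * z * k⁻¹) := by
    have : k * (z * u) * k⁻¹ = k * (u * z) * k⁻¹ := by rw [hz]
    simpa [mul_assoc] using this
  generalize k * u * k⁻¹ = U at *
  generalize k * z * k⁻¹ = Z at *
  have hnc := g3_NC U hU3 hU
  have hdU := sl_det U
  rw [h0, h1] at hdU
  have hU11 : U.1 1 1 = 1 := by linarith
  have hb : U.1 0 1 ≠ 0 := fun h => hnc ⟨h, h1, by rw [h0, hU11]⟩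
  obtain ⟨c1, c2, c3⟩ := (comm_iff_cross Z U).1 hZ
  rw [h1, mul_zero] at c1
  rw [h0, hU11, sub_self, mul_zero] at c2
  have z10 : Z.1 1 0 = 0 := (mul_eq_zero.1 c1.symm).resolve_left hb
  have zd : Z.1 0 0 - Z.1 1 1 = 0 := (mul_eq_zero.1 c2.symm).resolve_left hb
  have hdZ := sl_det Z
  obtain ⟨a, -, -, d, ha, -, -, hd⟩ := g3_form Z hZ3
  have h11 : Z.1 1 1 = Z.1 0 0 := by linarith
  rw [z10, h11] at hdZ
  have h00 : Z.1 0 0 = 1 := by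
    rcases Int.eq_one_or_neg_one_of_mul_eq_one (by linarith : Z.1 0 0 * Z.1 0 0 = 1) with h | h
    · exact h
    · omega
  ext i j
  fin_cases i <;> fin_cases j <;> simp
  · exact h00
  · exact z10
  · rw [h11]; exact h00

lemma card_of_int_inj (B : Finset SL2Z) (φ : SL2Z → ℤ) (L : ℕ)
    (hb : ∀ z ∈ B, (φ z).natAbs ≤ L) (hi : ∀ z ∈ B, ∀ z' ∈ B, φ z = φ z' → z = z') :
    B.card ≤ 2 * L + 1 := by
  have h := Finset.card_le_card_of_injOn φ (s := B) (t := Finset.Icc (-(L:ℤ)) L)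
    (fun z hz => by
      have := hb z hz
      simp only [Finset.coe_Icc, Set.mem_Icc]
      omega)
    (fun z hz z' hz' h => hi z hz z' hz' h)
  rw [Int.card_Icc] at h
  omega

lemma parabolic_count (u : SL2Z) (hu3 : modq 3 u = 1) (hu : u ≠ 1) (ht : u.1 0 0 + u.1 1 1 = 2)
    (B : Finset SL2Z) (L : ℕ) (hB3 : ∀ z ∈ B, modq 3 z = 1) (hBu : ∀ z ∈ B, z * u = u * z)
    (hBL : ∀ z ∈ B, eB z L) : B.card ≤ 2 * L + 1 := by
  obtain ⟨k, h0, h1⟩ := parabolic_conj u hu3 hu ht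
  refine card_of_int_inj B (fun z => (k * z * k⁻¹).1 0 1) L ?_ ?_
  · intro z hz
    exact undistorted k z _ (parabolic_form u k hu3 hu h0 h1 z (hB3 z hz) (hBu z hz)) (hBL z hz)
  · intro z hz z' hz' h
    have f1 := parabolic_form u k hu3 hu h0 h1 z (hB3 z hz) (hBu z hz)
    have f2 := parabolic_form u k hu3 hu h0 h1 z' (hB3 z' hz') (hBu z' hz')
    rw [h, ← f2] at f1
    have := Subtype.ext f1
    exact mul_left_cancel (mul_right_cancel this)

lemma lam_bound (l t : ℝ) (h : l ^ 2 - t * l + 1 = 0) : |l| ≤ |t| + 1 := by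
  by_contra hc
  push Not at hc
  have h1 : |l| * |l| = |t * l - 1| := by
    rw [← abs_mul]; congr 1; linarith
  have h2 : |t * l - 1| ≤ |t| * |l| + 1 := by
    have := abs_sub (t * l) 1
    rwa [abs_mul, abs_one] at this
  have h3 := abs_nonneg t
  nlinarith

lemma lam_gap (l t : ℝ) (h : l ^ 2 - t * l + 1 = 0) (ht : 7 ≤ |t|) (h1 : 1 / 2 < |l|)
    (h2 : |l| < 2) : False := by
  have h3 : |t| * |l| = |l ^ 2 + 1| := by rw [← abs_mul]; congr 1; linarith
  have h4 : |l ^ 2 + 1| = |l| ^ 2 + 1 := by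
    rw [abs_of_nonneg (by positivity), sq_abs]
  nlinarith

lemma hyper_one (u w : SL2Z) (hu : 7 ≤ |u.1 0 0 + u.1 1 1|) (hub : u.1 0 1 ≠ 0)
    (hw3 : modq 3 w = 1)
    (hc : w * u = u * w) (ht : w.1 0 0 + w.1 1 1 = 2) : w = 1 := by
  by_contra hne
  have hnc := g3_NC w hw3 hne
  obtain ⟨c1, c2, c3⟩ := (comm_iff_cross w u).1 hc
  have hdw := sl_det w
  have hdu := sl_det u
  have e1 : (w.1 0 0 - w.1 1 1) ^ 2 + 4 * (w.1 0 1 * w.1 1 0) = 0 := by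
    have : (w.1 0 0 - w.1 1 1) ^ 2 + 4 * (w.1 0 1 * w.1 1 0) = (w.1 0 0 + w.1 1 1) ^ 2 - 4 := by
      linear_combination -4 * hdw
    rw [this, ht]; norm_num
  have e2 : (u.1 0 0 - u.1 1 1) ^ 2 + 4 * (u.1 0 1 * u.1 1 0) = (u.1 0 0 + u.1 1 1) ^ 2 - 4 := by
    linear_combination -4 * hdu
  have e3 : (w.1 0 1) ^ 2 * ((u.1 0 0 - u.1 1 1) ^ 2 + 4 * (u.1 0 1 * u.1 1 0)) = 0 := by
    linear_combination (u.1 0 1) ^ 2 * e1 +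
      (w.1 0 1 * (u.1 0 0 - u.1 1 1) + u.1 0 1 * (w.1 0 0 - w.1 1 1)) * c2 +
      4 * u.1 0 1 * w.1 0 1 * c1
  have e4 : (u.1 0 0 + u.1 1 1) ^ 2 - 4 ≠ 0 := by
    have : (u.1 0 0 + u.1 1 1) ^ 2 = |u.1 0 0 + u.1 1 1| ^ 2 := (sq_abs _).symm
    rw [this]
    nlinarith
  rw [e2] at e3
  have w01 : w.1 0 1 = 0 := by
    have := (mul_eq_zero.1 e3).resolve_right e4
    exact pow_eq_zero_iff (two_ne_zero) |>.1 this
  rw [w01, zero_mul] at c1 c2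
  have w10 := (mul_eq_zero.1 c1.symm).resolve_left hub
  have wd := (mul_eq_zero.1 c2.symm).resolve_left hub
  exact hnc ⟨w01, w10, by linarith⟩

lemma hyper_count (u : SL2Z) (hu : 7 ≤ |u.1 0 0 + u.1 1 1|)
    (B : Finset SL2Z) (L : ℕ) (hB3 : ∀ z ∈ B, modq 3 z = 1) (hBu : ∀ z ∈ B, z * u = u * z)
    (hBL : ∀ z ∈ B, NN z + 1 ≤ 2 ^ L) : B.card ≤ 2 * L + 1 := by
  have hdu := sl_det u
  have hub : u.1 0 1 ≠ 0 := by
    intro h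
    rw [h] at hdu
    rcases Int.eq_one_or_neg_one_of_mul_eq_one' (by linarith : u.1 0 0 * u.1 1 1 = 1) with h | h <;>
    · rw [h.1, h.2] at hu; norm_num at hu
  obtain ⟨a, ea⟩ : ∃ a : ℝ, a = ((u.1 0 0 : ℤ) : ℝ) := ⟨_, rfl⟩
  obtain ⟨b, eb⟩ : ∃ b : ℝ, b = ((u.1 0 1 : ℤ) : ℝ) := ⟨_, rfl⟩
  obtain ⟨c, ec⟩ : ∃ c : ℝ, c = ((u.1 1 0 : ℤ) : ℝ) := ⟨_, rfl⟩
  obtain ⟨d, ed⟩ : ∃ d : ℝ, d = ((u.1 1 1 : ℤ) : ℝ) := ⟨_, rfl⟩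
  have hb : b ≠ 0 := by rw [eb]; exact_mod_cast hub
  have hdet : a * d - b * c = 1 := by rw [ea, eb, ec, ed]; exact_mod_cast hdu
  have htr : (7:ℝ) ≤ |a + d| := by rw [ea, ed]; exact_mod_cast hu
  have hdisc : 0 ≤ (a - d) ^ 2 + 4 * (b * c) := by
    have h1 : (a - d) ^ 2 + 4 * (b * c) = |a + d| ^ 2 - 4 := by rw [sq_abs]; linear_combination -4 * hdet
    rw [h1]; nlinarith
  obtain ⟨s, hs⟩ : ∃ s : ℝ, b * s ^ 2 + (a - d) * s - c = 0 := by
    refine ⟨(-(a - d) + √((a - d) ^ 2 + 4 * (b * c))) / (2 * b), ?_⟩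
    have h1 := Real.sq_sqrt hdisc
    generalize √((a - d) ^ 2 + 4 * (b * c)) = r at *
    field_simp
    linear_combination h1
  set lam : SL2Z → ℝ := fun z => (z.1 0 0 : ℤ) + (z.1 0 1 : ℤ) * s with hlam
  have eig : ∀ z : SL2Z, z * u = u * z →
      ((z.1 1 0 : ℤ) : ℝ) + (z.1 1 1 : ℤ) * s = lam z * s := by
    intro z hz
    obtain ⟨c1, c2, c3⟩ := (comm_iff_cross z u).1 hz
    have c1' : ((z.1 0 1 : ℤ) : ℝ) * c = b * (z.1 1 0 : ℤ) := by rw [eb, ec]; exact_mod_cast c1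
    have c2' : ((z.1 0 1 : ℤ) : ℝ) * (a - d) = b * ((z.1 0 0 : ℤ) - (z.1 1 1 : ℤ)) := by
      rw [ea, eb, ed]; exact_mod_cast c2
    apply mul_left_cancel₀ hb
    simp only [hlam]
    linear_combination -c1' + s * c2' - (z.1 0 1 : ℤ) * hs
  have hmul : ∀ z z' : SL2Z, z' * u = u * z' → lam (z * z') = lam z * lam z' := by
    intro z z' hz'
    have e := eig z' hz'
    have f0 : (z * z').1 0 0 = z.1 0 0 * z'.1 0 0 + z.1 0 1 * z'.1 1 0 := by
      have : (z * z').1 = z.1 * z'.1 := rfl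
      rw [this, Matrix.mul_apply, Fin.sum_univ_two]
    have f1 : (z * z').1 0 1 = z.1 0 0 * z'.1 0 1 + z.1 0 1 * z'.1 1 1 := by
      have : (z * z').1 = z.1 * z'.1 := rfl
      rw [this, Matrix.mul_apply, Fin.sum_univ_two]
    have : lam (z * z') = ((z * z').1 0 0 : ℤ) + ((z * z').1 0 1 : ℤ) * s := rfl
    rw [this, f0, f1]
    push_cast
    have h1 : lam z = (z.1 0 0 : ℤ) + (z.1 0 1 : ℤ) * s := rfl
    have h2 : lam z' = (z'.1 0 0 : ℤ) + (z'.1 0 1 : ℤ) * s := rfl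
    rw [h1]
    linear_combination (z.1 0 1 : ℤ) * e - (z.1 0 0 : ℤ) * h2
  have hchar : ∀ z : SL2Z, z * u = u * z →
      lam z ^ 2 - ((z.1 0 0 + z.1 1 1 : ℤ) : ℝ) * lam z + 1 = 0 := by
    intro z hz
    have e := eig z hz
    have hd : ((z.1 0 0 : ℤ) : ℝ) * (z.1 1 1 : ℤ) - (z.1 0 1 : ℤ) * (z.1 1 0 : ℤ) = 1 := by
      exact_mod_cast sl_det z
    simp only [hlam] at e ⊢
    push_cast
    linear_combination -(z.1 0 1 : ℤ) * e - hd
  have hone : lam 1 = 1 := by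
    simp [hlam]
  have hinvc : ∀ z : SL2Z, z * u = u * z → z⁻¹ * u = u * z⁻¹ := by
    intro z hz
    exact (Commute.inv_left (show Commute z u from hz))
  have hinv : ∀ z : SL2Z, z * u = u * z → lam z⁻¹ * lam z = 1 := by
    intro z hz
    rw [← hmul _ _ hz, inv_mul_cancel, hone]
  have hpos : ∀ z : SL2Z, z * u = u * z → 0 < |lam z| := by
    intro z hz
    rw [abs_pos]
    intro h
    have := hinv z hz
    rw [h] at this
    simp at this
  have hle : ∀ z : SL2Z, z * u = u * z → NN z + 1 ≤ 2 ^ L → |lam z| ≤ 2 ^ L := by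
    intro z hz hN
    refine (lam_bound _ _ (hchar z hz)).trans ?_
    have h1 : |z.1 0 0 + z.1 1 1| ≤ NN z := by
      unfold NN
      rw [abs_le]
      omega
    have h2 : |((z.1 0 0 + z.1 1 1 : ℤ) : ℝ)| ≤ NN z := by exact_mod_cast h1
    have h3 : ((NN z : ℝ) + 1) ≤ 2 ^ L := by exact_mod_cast hN
    linarith
  refine card_of_int_inj B (fun z => Int.log 2 |lam z|) L ?_ ?_
  · intro z hz
    have p := hpos z (hBu z hz)
    have h1 := hle z (hBu z hz) (hBL z hz)
    have h2 := hle z⁻¹ (hinvc z (hBu z hz)) (by rw [NN_inv]; exact hBL z hz)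
    have h3 : |lam z⁻¹| * |lam z| = 1 := by rw [← abs_mul, hinv z (hBu z hz), abs_one]
    have hup : Int.log 2 |lam z| ≤ L := by
      have := Int.log_mono_right (b := 2) p h1
      rwa [show ((2:ℝ) ^ L) = (((2:ℕ):ℝ) ^ (L:ℤ)) by norm_num, Int.log_zpow (by norm_num)] at this
    have hlo : -(L:ℤ) ≤ Int.log 2 |lam z| := by
      have h4 : ((2:ℝ) ^ L)⁻¹ ≤ |lam z| := by
        rw [inv_le_iff_one_le_mul₀ (by positivity)]
        rw [← h3, mul_comm]
        gcongr
      have := Int.log_mono_right (b := 2) (by positivity) h4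
      rwa [show ((2:ℝ) ^ L)⁻¹ = (((2:ℕ):ℝ) ^ (-(L:ℤ))) by norm_num, Int.log_zpow (by norm_num)] at this
    omega
  · intro z hz z' hz' h
    have p := hpos z (hBu z hz)
    have p' := hpos z' (hBu z' hz')
    have l1 := Int.zpow_log_le_self (b := 2) (by norm_num) p
    have l2 := Int.zpow_log_le_self (b := 2) (by norm_num) p'
    have u1 := Int.lt_zpow_succ_log_self (b := 2) (by norm_num) |lam z|
    have u2 := Int.lt_zpow_succ_log_self (b := 2) (by norm_num) |lam z'|
    rw [h] at l1 u1
    rw [zpow_add_one₀ (by norm_num)] at u1 u2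
    push_cast at l1 l2 u1 u2
    have hw3 : modq 3 (z⁻¹ * z') = 1 := by simp [hB3 z hz, hB3 z' hz']
    have hwc : (z⁻¹ * z') * u = u * (z⁻¹ * z') :=
      Commute.mul_left (show Commute z⁻¹ u from hinvc z (hBu z hz))
        (show Commute z' u from hBu z' hz')
    have hm : |lam (z⁻¹ * z')| * |lam z| = |lam z'| := by
      rw [hmul _ _ (hBu z' hz'), abs_mul]
      have h3 : |lam z⁻¹| * |lam z| = 1 := by rw [← abs_mul, hinv z (hBu z hz), abs_one]
      linear_combination |lam z'| * h3
    rcases g3_trace _ hw3 with ht | ht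
    · have := hyper_one u _ hu hub hw3 hwc ht
      rw [inv_mul_eq_one] at this
      exact this
    · exfalso
      refine lam_gap _ _ (hchar _ hwc) (by exact_mod_cast ht) ?_ ?_
      · nlinarith
      · nlinarith

end PartFourB

section PartFive
open Matrix

lemma abelian_count (B : Finset SL2Z) (L : ℕ) (hB3 : ∀ z ∈ B, modq 3 z = 1)
    (hBc : ∀ z ∈ B, ∀ u ∈ B, z * u = u * z)
    (hN : ∀ z ∈ B, NN z + 1 ≤ 2 ^ L) (hE : ∀ z ∈ B, eB z L) : B.card ≤ 2 * L + 1 := by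
  by_cases h : ∀ z ∈ B, z = 1
  · have : B.card ≤ 1 := Finset.card_le_one.2 fun a ha b hb => by rw [h a ha, h b hb]
    omega
  · push Not at h
    obtain ⟨u, hu, hu1⟩ := h
    rcases g3_trace u (hB3 u hu) with ht | ht
    · exact parabolic_count u (hB3 u hu) hu1 ht B L hB3 (fun z hz => hBc z hz u hu) hE
    · exact hyper_count u ht B L hB3 (fun z hz => hBc z hz u hu) hN

lemma eB_mono {g : SL2Z} {C E : ℕ} (h : C ≤ E) (hg : eB g C) : eB g E := by
  intro v
  have := hg v
  omega

lemma fiber_count {M E R : ℕ} (hM : 2 ≤ M) (S : Set SL2Z)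
    (hSM : ∀ s ∈ S, NN s ≤ M) (hSE : ∀ s ∈ S, eB s E) (hR : 1 ≤ R)
    (A : Finset SL2Z) (hA : ∀ x ∈ A, ∃ l : List SL2Z, l.length = R ∧ (∀ s ∈ l, s ∈ S) ∧ l.prod = x)
    (hA3 : ∀ x ∈ A, ∀ y ∈ A, modq 3 x = modq 3 y)
    (hAc : ∀ x ∈ A, ∀ y ∈ A, ∀ z ∈ A, NN (z⁻¹ * x) ≤ M ^ (2 * R) → NN (z⁻¹ * y) ≤ M ^ (2 * R) →
      (z⁻¹ * x) * (z⁻¹ * y) = (z⁻¹ * y) * (z⁻¹ * x)) :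
    A.card ≤ (4 * (M + E) + 3) * R := by
  classical
  rcases A.eq_empty_or_nonempty with rfl | ⟨x0, hx0⟩
  · simp
  have hNx : ∀ x ∈ A, NN x ≤ M ^ R := by
    intro x hx
    obtain ⟨l, rfl, h2, rfl⟩ := hA x hx
    exact NN_list l (fun s hs => hSM s (h2 s hs)) (by intro h; rw [h] at hR; simp at hR)
  have hEx : ∀ x ∈ A, eB x (R * E) := by
    intro x hx
    obtain ⟨l, rfl, h2, rfl⟩ := hA x hx
    exact eB_list l (fun s hs => hSE s (h2 s hs))
  have hN2 : ∀ x ∈ A, NN (x0⁻¹ * x) ≤ M ^ (2 * R) := by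
    intro x hx
    rw [two_mul]
    exact NN_mul_le ((NN_inv x0).trans_le (hNx x0 hx0)) (hNx x hx)
  have hcard : (A.image (fun x => x0⁻¹ * x)).card = A.card :=
    Finset.card_image_of_injective _ (mul_right_injective x0⁻¹)
  rw [← hcard]
  have hmain := abelian_count (A.image (fun x => x0⁻¹ * x)) (2 * R * (M + E) + 1) ?_ ?_ ?_ ?_
  · refine hmain.trans ?_
    nlinarith
  · intro z hz
    obtain ⟨x, hx, rfl⟩ := Finset.mem_image.1 hz
    rw [map_mul, map_inv, hA3 x hx x0 hx0, inv_mul_cancel]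
  · intro z hz u hu
    obtain ⟨x, hx, rfl⟩ := Finset.mem_image.1 hz
    obtain ⟨y, hy, rfl⟩ := Finset.mem_image.1 hu
    exact hAc x hx y hy x0 hx0 (hN2 x hx) (hN2 y hy)
  · intro z hz
    obtain ⟨x, hx, rfl⟩ := Finset.mem_image.1 hz
    have h1 := hN2 x hx
    have h2 : M ^ (2 * R) ≤ 2 ^ (2 * R * (M + E)) := by
      calc M ^ (2 * R) ≤ (2 ^ M) ^ (2 * R) := Nat.pow_le_pow_left (Nat.lt_two_pow_self).le _
        _ = 2 ^ (2 * R * M) := by rw [← pow_mul]; congr 1; ring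
        _ ≤ _ := Nat.pow_le_pow_right (by norm_num) (Nat.mul_le_mul_left _ (by omega))
    have h3 : 1 ≤ 2 ^ (2 * R * (M + E)) := Nat.one_le_two_pow
    rw [pow_succ]
    omega
  · intro z hz
    obtain ⟨x, hx, rfl⟩ := Finset.mem_image.1 hz
    refine eB_mono ?_ (eB_mul (eB_inv (hEx x0 hx0)) (hEx x hx))
    nlinarith [Nat.zero_le (R * M)]

lemma word_count {κ q' M E R : ℕ} (hM : 2 ≤ M) (S : Set SL2Z) (hfin : S.Finite)
    (hfree : FreelyGeneratesPSL S)
    (hSM : ∀ s ∈ S, NN s ≤ M) (hSE : ∀ s ∈ S, eB s E) (hR : 1 ≤ R)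
    (hk : ∀ p : ℕ, p.Prime → ¬ p ^ (κ + 1) ∣ q')
    (H : Subgroup (Matrix.SpecialLinearGroup (Fin 2) (ZMod q')))
    (hH : ∀ p : ℕ, p.Prime → ∀ hp : p ∣ q',
      Subgroup.map (Matrix.SpecialLinearGroup.map (ZMod.castHom hp (ZMod p))) H ≠ ⊤)
    (hB : (M ^ (1925 * R)) ^ κ < q') (a : Matrix.SpecialLinearGroup (Fin 2) (ZMod q')) :
    Nat.card {w : Fin R → SL2Z //
            (∀ i, w i ∈ S) ∧ ∃ h ∈ H, modq q' (List.ofFn w).prod = a * h}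
      ≤ (4 * (M + E) + 3) * R * Nat.card (Matrix.SpecialLinearGroup (Fin 2) (ZMod 3)) := by
  classical
  set W : Set (Fin R → SL2Z) :=
    {w | (∀ i, w i ∈ S) ∧ ∃ h ∈ H, modq q' (List.ofFn w).prod = a * h} with hW
  have hWfin : W.Finite := by
    refine (Set.Finite.pi' (t := fun _ : Fin R => S) (fun _ => hfin)).subset ?_
    intro w hw
    exact hw.1
  have hinj : Set.InjOn (fun w : Fin R → SL2Z => (List.ofFn w).prod) W := by
    intro w hw w' hw' h
    have hne : ∀ v : Fin R → SL2Z, List.ofFn v ≠ [] := by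
      intro v hv
      have := congrArg List.length hv
      simp at this
      omega
    have := hfree (List.ofFn w) (List.ofFn w') (hne w) (hne w')
      (by intro x hx; obtain ⟨i, rfl⟩ := List.mem_ofFn.1 hx; exact hw.1 i)
      (by intro x hx; obtain ⟨i, rfl⟩ := List.mem_ofFn.1 hx; exact hw'.1 i)
      (congrArg PSLproj h)
    exact List.ofFn_injective this
  set A : Finset SL2Z := hWfin.toFinset.image (fun w : Fin R → SL2Z => (List.ofFn w).prod) with hAdef
  have hcard : Nat.card W = A.card := by
    rw [hAdef, Finset.card_image_of_injOn (by simpa using hinj),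
      Nat.card_coe_set_eq, Set.ncard_eq_toFinset_card W hWfin]
  have hmem : ∀ x ∈ A, (∃ l : List SL2Z, l.length = R ∧ (∀ s ∈ l, s ∈ S) ∧ l.prod = x) ∧
      ∃ h ∈ H, modq q' x = a * h := by
    intro x hx
    obtain ⟨w, hw, rfl⟩ := Finset.mem_image.1 hx
    rw [Set.Finite.mem_toFinset] at hw
    exact ⟨⟨List.ofFn w, by simp, by
      intro x hx; obtain ⟨i, rfl⟩ := List.mem_ofFn.1 hx; exact hw.1 i, rfl⟩, hw.2⟩
  have hHmem : ∀ x ∈ A, ∀ z ∈ A, modq q' (z⁻¹ * x) ∈ H := by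
    intro x hx z hz
    obtain ⟨h, hh, e⟩ := (hmem x hx).2
    obtain ⟨h', hh', e'⟩ := (hmem z hz).2
    rw [map_mul, map_inv, e, e']
    have : (a * h')⁻¹ * (a * h) = h'⁻¹ * h := by group
    rw [this]
    exact H.mul_mem (H.inv_mem hh') hh
  change Nat.card W ≤ _
  rw [hcard]
  refine (Finset.card_le_mul_card_image (f := modq 3) A ((4 * (M + E) + 3) * R) ?_).trans ?_
  · intro b hb
    refine fiber_count hM S hSM hSE hR _ ?_ ?_ ?_
    · intro x hx
      exact (hmem x (Finset.mem_filter.1 hx).1).1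
    · intro x hx y hy
      rw [(Finset.mem_filter.1 hx).2, (Finset.mem_filter.1 hy).2]
    · intro x hx y hy z hz h1 h2
      rw [Finset.mem_filter] at hx hy hz
      refine small_commute hM hR hk H hH hB _ _ ?_ ?_ (hHmem x hx.1 z hz.1) (hHmem y hy.1 z hz.1) h1 h2
      · rw [map_mul, map_inv, hx.2, hz.2, inv_mul_cancel]
      · rw [map_mul, map_inv, hy.2, hz.2, inv_mul_cancel]
  · refine Nat.mul_le_mul_left _ ?_
    have := Finset.card_le_univ (A.image (modq 3))
    rwa [← Nat.card_eq_fintype_card] at this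

lemma trivial_count (S : Set SL2Z) (hfin : S.Finite) {R : ℕ} (P : (Fin R → SL2Z) → Prop) :
    Nat.card {w : Fin R → SL2Z // (∀ i, w i ∈ S) ∧ P w} ≤ (Nat.card S) ^ R := by
  have : Finite S := hfin
  have h := Nat.card_le_card_of_injective
    (fun w : {w : Fin R → SL2Z // (∀ i, w i ∈ S) ∧ P w} => fun i => (⟨w.1 i, w.2.1 i⟩ : S))
    (by
      intro w w' h
      apply Subtype.ext
      funext i
      exact congrArg Subtype.val (congrFun h i))
  rwa [Nat.card_fun, Nat.card_fin] at h

lemma exists_bounds (S : Set SL2Z) (hfin : S.Finite) : ∃ M E : ℕ, 2 ≤ M ∧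
    (∀ s ∈ S, NN s ≤ M) ∧ ∀ s ∈ S, eB s E := by
  choose e he using eB_exists
  obtain ⟨M, hM⟩ := (hfin.image NN).bddAbove
  obtain ⟨E, hE⟩ := (hfin.image e).bddAbove
  refine ⟨M + 2, E, by omega, ?_, ?_⟩
  · intro s hs
    have := hM (Set.mem_image_of_mem NN hs)
    omega
  · intro s hs
    exact eB_mono (hE (Set.mem_image_of_mem e hs)) (he s)

end PartFive

/-- **Hitting small subgroups.** Let `κ ≥ 1`, `D > 1` and let `S ⊂ SL₂(ℤ)` be finite with
images in `PSL₂(ℤ)` freely generating a free semigroup. There is `c = c(κ,D,S) > 0` such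
that for all `ε > 0` there is `C(ε) > 0` with: for every `q ≥ 2` in whose prime
factorization no prime occurs with exponent `> κ`, every `q' ∣ q` with `q' ≥ q^{1/D}`,
every subgroup `H ≤ SL₂(ℤ/q'ℤ)` projecting to a proper subgroup of `SL₂(ℤ/pℤ)` for each
prime `p ∣ q'`, and every coset `aH`, the number of words of length `⌈c log q⌉` over `S`
whose product lands in `aH` mod `q'` is at most `C(ε) q^ε`. -/
theorem hitting_small_subgroups
    (κ : ℕ) (hκ : 1 ≤ κ) (D : ℝ) (hD : 1 < D)
    (S : Set SL2Z) (hfin : S.Finite) (hfree : FreelyGeneratesPSL S) :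
    ∃ c : ℝ, 0 < c ∧ ∀ ε : ℝ, 0 < ε → ∃ C : ℝ, 0 < C ∧
      ∀ q : ℕ, 2 ≤ q → (∀ p : ℕ, p.Prime → ¬ p ^ (κ + 1) ∣ q) →
      ∀ q' : ℕ, ∀ hdvd : q' ∣ q, (q : ℝ) ^ (1 / D) ≤ (q' : ℝ) →
      ∀ H : Subgroup (Matrix.SpecialLinearGroup (Fin 2) (ZMod q')),
        (∀ p : ℕ, p.Prime → ∀ hp : p ∣ q',
          Subgroup.map
            (Matrix.SpecialLinearGroup.map (ZMod.castHom hp (ZMod p))) H ≠ ⊤) →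
      ∀ a : Matrix.SpecialLinearGroup (Fin 2) (ZMod q'),
        (Nat.card {w : Fin ⌈c * Real.log q⌉₊ → SL2Z //
            (∀ i, w i ∈ S) ∧ ∃ h ∈ H, modq q' (List.ofFn w).prod = a * h} : ℝ)
          ≤ C * (q : ℝ) ^ ε := by
  obtain ⟨M, E, hM, hSM, hSE⟩ := exists_bounds S hfin
  have hM1 : (1:ℝ) < M := by exact_mod_cast (by omega : 1 < M)
  have hlogM : 0 < Real.log M := Real.log_pos hM1
  have hκ' : (0:ℝ) < κ := by exact_mod_cast hκ
  have hD0 : (0:ℝ) < D := by linarith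
  obtain ⟨Q, hQ⟩ : ∃ Q : ℝ, Q = 2 * D * 1925 * κ * Real.log M := ⟨_, rfl⟩
  have hQ0 : 0 < Q := by rw [hQ]; positivity
  refine ⟨1 / Q, by positivity, fun ε hε => ?_⟩
  set K : ℕ := (4 * (M + E) + 3) * Nat.card (Matrix.SpecialLinearGroup (Fin 2) (ZMod 3))
  refine ⟨K * (2 * (1 / Q) / ε) + Nat.card S + 1, by positivity, ?_⟩
  intro q hq hk q' hdvd hq' H hH a
  have hq2 : (2:ℝ) ≤ q := by exact_mod_cast hq
  have hlogq : 0 < Real.log q := Real.log_pos (by linarith)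
  have hqε : 1 ≤ (q:ℝ) ^ ε := Real.one_le_rpow (by linarith) hε.le
  have hcpos : 0 < 1 / Q * Real.log q := by positivity
  generalize hRdef : ⌈1 / Q * Real.log q⌉₊ = R
  have hR : 1 ≤ R := by
    rw [← hRdef]
    exact Nat.one_le_iff_ne_zero.2 (Nat.ceil_pos.2 hcpos).ne'
  have hA : (0:ℝ) ≤ K * (2 * (1 / Q) / ε) := by positivity
  have hS0 : (0:ℝ) ≤ (Nat.card S : ℝ) := by positivity
  by_cases hsmall : 1 / Q * Real.log q ≤ 1
  · have hR1 : R = 1 := by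
      apply le_antisymm _ hR
      rw [← hRdef]
      exact Nat.ceil_le.2 (by simpa using hsmall)
    have h := trivial_count S hfin (R := R) (fun w => ∃ h ∈ H, modq q' (List.ofFn w).prod = a * h)
    have h' : (Nat.card {w : Fin R → SL2Z //
            (∀ i, w i ∈ S) ∧ ∃ h ∈ H, modq q' (List.ofFn w).prod = a * h} : ℝ)
        ≤ Nat.card S := by
      have h2 := h
      have e : (Nat.card S) ^ R = Nat.card S := by rw [hR1, pow_one]
      rw [e] at h2
      exact_mod_cast h2
    refine h'.trans ?_
    nlinarith
  · push Not at hsmall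
    have hRle : (R:ℝ) < 1 / Q * Real.log q + 1 := by
      rw [← hRdef]; exact Nat.ceil_lt_add_one hcpos.le
    have hB : (M ^ (1925 * R)) ^ κ < q' := by
      have h1 : (((M ^ (1925 * R)) ^ κ : ℕ) : ℝ) < (q:ℝ) ^ (1 / D) := by
        push_cast
        rw [← pow_mul, ← Real.log_lt_log_iff (by positivity) (by positivity), Real.log_pow,
          Real.log_rpow (by linarith)]
        push_cast
        have h2 : (1925 * R * κ : ℝ) * Real.log M = R * (Q / (2 * D)) := by
          rw [hQ]; field_simp
        rw [h2]
        calc (R:ℝ) * (Q / (2 * D)) < (1 / Q * Real.log q + 1 / Q * Real.log q) * (Q / (2 * D)) := by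
              apply mul_lt_mul_of_pos_right _ (by positivity)
              linarith
          _ = 1 / D * Real.log q := by field_simp; ring
      exact_mod_cast h1.trans_le hq'
    have hcount := word_count hM S hfin hfree hSM hSE hR
      (fun p hp hpd => hk p hp (hpd.trans hdvd)) H hH hB a
    have hcount' : (Nat.card {w : Fin R → SL2Z //
            (∀ i, w i ∈ S) ∧ ∃ h ∈ H, modq q' (List.ofFn w).prod = a * h} : ℝ) ≤ K * R := by
      have : (4 * (M + E) + 3) * R * Nat.card (Matrix.SpecialLinearGroup (Fin 2) (ZMod 3)) = K * R := by
        simp only [K]; ring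
      rw [this] at hcount
      exact_mod_cast hcount
    refine hcount'.trans ?_
    have hlog := Real.log_le_rpow_div (by linarith : (0:ℝ) ≤ q) hε
    have h3 : (R:ℝ) ≤ 2 * (1 / Q) / ε * (q:ℝ) ^ ε := by
      calc (R:ℝ) ≤ 2 * (1 / Q) * Real.log q := by linarith
        _ ≤ 2 * (1 / Q) * ((q:ℝ) ^ ε / ε) := by gcongr
        _ = _ := by ring
    have h4 : (K:ℝ) * R ≤ K * (2 * (1 / Q) / ε * (q:ℝ) ^ ε) := by gcongr
    have h5 : 0 ≤ ((Nat.card S : ℝ) + 1) * (q:ℝ) ^ ε := by positivity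
    linarith
end

section
/- Let I ⊂ ℝ be a finite union of disjoint compact intervals and let d ≥ 1. For every A > 0 there exists c > 0 such that the following holds: for every real b ≠ 0, every interval Z ⊆ I of length |Z| ≤ c/|b|, every C¹ function H : I → ℝ with H > 0 and |H'(x)| ≤ A|b|H(x) for all x ∈ I, and every C¹ function f : I → ℂ^d with |f(x)| ≤ H(x) and |f'(x)| ≤ A|b|H(x) for all x ∈ I (where |·| is the Euclidean norm on ℂ^d), either |f(u)| ≤ (3/4)H(u) for all u ∈ Z, or |f(u)| ≥ (1/4)H(u) for all u ∈ Z. -/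
/-- **Dichotomy on small intervals (Lemma 5.11 of Naud, vector-valued version).**
Let `I ⊂ ℝ` be a finite union of disjoint compact intervals and `d ≥ 1`. For every `A > 0`
there is `c > 0` such that: for every `b ≠ 0`, every interval `Z ⊆ I` of length `≤ c/|b|`,
every `C¹` function `H : I → ℝ` with `H > 0` and `|H'| ≤ A|b|H` on `I`, and every `C¹`
function `f : I → ℂᵈ` with `|f| ≤ H` and `|f'| ≤ A|b|H` on `I`, either `|f(u)| ≤ (3/4)H(u)`
for all `u ∈ Z`, or `|f(u)| ≥ (1/4)H(u)` for all `u ∈ Z`. -/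
theorem small_interval_dichotomy
    (k : ℕ) (endL endR : Fin k → ℝ) (hle : ∀ i, endL i ≤ endR i)
    (hdisj : Pairwise fun i j => Disjoint (Set.Icc (endL i) (endR i)) (Set.Icc (endL j) (endR j)))
    (I : Set ℝ) (hI : I = ⋃ i, Set.Icc (endL i) (endR i))
    (d : ℕ) (hd : 1 ≤ d) (A : ℝ) (hA : 0 < A) :
    ∃ c : ℝ, 0 < c ∧
      ∀ b : ℝ, b ≠ 0 →
      ∀ Z : Set ℝ, Z.OrdConnected → Z ⊆ I → (∀ x ∈ Z, ∀ y ∈ Z, |x - y| ≤ c / |b|) →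
      ∀ H H' : ℝ → ℝ,
        (∀ x ∈ I, HasDerivWithinAt H (H' x) I x) → ContinuousOn H' I →
        (∀ x ∈ I, 0 < H x) → (∀ x ∈ I, |H' x| ≤ A * |b| * H x) →
      ∀ f f' : ℝ → EuclideanSpace ℂ (Fin d),
        (∀ x ∈ I, HasDerivWithinAt f (f' x) I x) → ContinuousOn f' I →
        (∀ x ∈ I, ‖f x‖ ≤ H x) → (∀ x ∈ I, ‖f' x‖ ≤ A * |b| * H x) →
      (∀ u ∈ Z, ‖f u‖ ≤ (3 / 4) * H u) ∨ (∀ u ∈ Z, (1 / 4) * H u ≤ ‖f u‖) := by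
  refine ⟨1 / (8 * A), by positivity, ?_⟩
  intro b hb Z hZ hZI hlen H H' hH _ hpos hHb f f' hf _ hfH hfb
  by_contra hcon
  push Not at hcon
  obtain ⟨⟨u, hu, hu2⟩, v, hv, hv2⟩ := hcon
  have hb0 : 0 < |b| := abs_pos.mpr hb
  have hSZ : Set.uIcc u v ⊆ Z := hZ.uIcc_subset hu hv
  have hSI : Set.uIcc u v ⊆ I := hSZ.trans hZI
  have hcont : ContinuousOn H (Set.uIcc u v) := fun x hx =>
    ((hH x (hSI hx)).continuousWithinAt).mono hSI
  obtain ⟨m, hm, hmax⟩ := isCompact_uIcc.exists_isMaxOn Set.nonempty_uIcc hcont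
  have hM : 0 < H m := hpos m (hSI hm)
  have hconv : Convex ℝ (Set.uIcc u v) := convex_uIcc u v
  have hAb : 0 ≤ A * |b| := by positivity
  have hle1 : ∀ x ∈ Set.uIcc u v, A * |b| * H x ≤ A * |b| * H m := fun x hx =>
    mul_le_mul_of_nonneg_left (hmax hx) hAb
  have key : ∀ x ∈ Z, ∀ y ∈ Z, A * |b| * H m * |x - y| ≤ H m / 8 := by
    intro x hx y hy
    calc A * |b| * H m * |x - y| ≤ A * |b| * H m * (1 / (8 * A) / |b|) := by
          gcongr
          exact hlen x hx y hy
      _ = H m / 8 := by field_simp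
  have h1 := hconv.norm_image_sub_le_of_norm_hasDerivWithin_le (f := H) (f' := H')
    (C := A * |b| * H m) (fun x hx => (hH x (hSI hx)).mono hSI)
    (fun x hx => (hHb x (hSI hx)).trans (hle1 x hx)) Set.left_mem_uIcc hm
  have h2 := hconv.norm_image_sub_le_of_norm_hasDerivWithin_le (f := f) (f' := f')
    (C := A * |b| * H m) (fun x hx => (hf x (hSI hx)).mono hSI)
    (fun x hx => (hfb x (hSI hx)).trans (hle1 x hx)) Set.right_mem_uIcc Set.left_mem_uIcc
  rw [Real.norm_eq_abs, Real.norm_eq_abs] at h1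
  rw [Real.norm_eq_abs] at h2
  have h3 := key m (hSZ hm) u hu
  have h4 := key u hu v hv
  have h5 := norm_sub_norm_le (f u) (f v)
  have h6 := le_abs_self (H m - H u)
  have h7 : H v ≤ H m := hmax Set.right_mem_uIcc
  linarith
end

section
/- Let A ⊂ ℕ be a finite set with |A| ≥ 2 and for a ∈ A let g_a = [[0,1],[1,a]] ∈ GL₂(ℤ). The matrices g_a freely generate a free semigroup: for any two finite words (a₁,…,a_m) and (b₁,…,b_n) over A, if g_{a₁}g_{a₂}⋯g_{a_m} = g_{b₁}g_{b₂}⋯g_{b_n} then m = n and a_i = b_i for all i. -/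
/-- The 2×2 integer matrix `g_a = [[0,1],[1,a]]` (an element of `GL₂(ℤ)`, det = −1). -/
def gMat (a : ℕ) : Matrix (Fin 2) (Fin 2) ℤ := !![0, 1; 1, (a : ℤ)]

theorem gMat_mul_entries (a : ℕ) (M : Matrix (Fin 2) (Fin 2) ℤ) :
    (gMat a * M) 0 0 = M 1 0 ∧ (gMat a * M) 0 1 = M 1 1 ∧
    (gMat a * M) 1 0 = M 0 0 + a * M 1 0 ∧ (gMat a * M) 1 1 = M 0 1 + a * M 1 1 := by
  simp [gMat, Matrix.mul_apply, Fin.sum_univ_two]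

/-- Size invariants of products of the matrices `gMat a` with `a ≥ 1`. -/
theorem gMat_prod_invariant (l : List ℕ) (h : ∀ a ∈ l, 1 ≤ a) :
    0 ≤ (l.map gMat).prod 0 0 ∧ 0 ≤ (l.map gMat).prod 0 1 ∧
    0 ≤ (l.map gMat).prod 1 0 ∧ 1 ≤ (l.map gMat).prod 1 1 ∧
    (l.map gMat).prod 0 1 ≤ (l.map gMat).prod 1 1 ∧
    ((l.map gMat).prod 0 0 ≤ (l.map gMat).prod 1 0 ∨ (l.map gMat).prod 0 1 = 0) ∧
    (l.map gMat).prod 0 0 * (l.map gMat).prod 1 1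
      - (l.map gMat).prod 0 1 * (l.map gMat).prod 1 0 ≠ 0 := by
  induction l with
  | nil => simp
  | cons a l ih =>
    have ha : (1 : ℤ) ≤ a := by exact_mod_cast h a (by simp)
    obtain ⟨h1, h2, h3, h4, h5, h6, h7⟩ := ih (fun b hb => h b (by simp [hb]))
    simp only [List.map_cons, List.prod_cons]
    obtain ⟨e1, e2, e3, e4⟩ := gMat_mul_entries a (l.map gMat).prod
    rw [e1, e2, e3, e4]
    generalize (l.map gMat).prod 0 0 = p at *
    generalize (l.map gMat).prod 0 1 = q at *
    generalize (l.map gMat).prod 1 0 = r at *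
    generalize (l.map gMat).prod 1 1 = s at *
    refine ⟨h3, by linarith, by nlinarith, by nlinarith, by nlinarith, Or.inl (by nlinarith), ?_⟩
    intro hd
    apply h7
    linarith

theorem gMat_letter_not_lt (a b : ℕ) (l m : List ℕ) (hl : ∀ a ∈ l, 1 ≤ a) (hm : ∀ a ∈ m, 1 ≤ a)
    (h : gMat a * (l.map gMat).prod = gMat b * (m.map gMat).prod) : ¬ a < b := by
  intro hab
  have hab' : (a : ℤ) + 1 ≤ b := by exact_mod_cast hab
  obtain ⟨h1, h2, h3, h4, h5, h6, h7⟩ := gMat_prod_invariant l hl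
  obtain ⟨k1, k2, k3, k4, k5, k6, k7⟩ := gMat_prod_invariant m hm
  obtain ⟨e1, e2, e3, e4⟩ := gMat_mul_entries a (l.map gMat).prod
  obtain ⟨f1, f2, f3, f4⟩ := gMat_mul_entries b (m.map gMat).prod
  rw [h] at e1 e2 e3 e4
  rw [f1] at e1
  rw [f2] at e2
  rw [f3, e1] at e3
  rw [f4, e2] at e4
  generalize (l.map gMat).prod 0 0 = p at *
  generalize (l.map gMat).prod 0 1 = q at *
  generalize (l.map gMat).prod 1 0 = r at *
  generalize (l.map gMat).prod 1 1 = s at *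
  have hq : q = s := by nlinarith
  have hp : r ≤ p := by nlinarith
  rcases h6 with h6 | h6
  · have : p = r := by linarith
    apply h7
    rw [this, hq]
    ring
  · linarith

theorem gMat_words_injective (l : List ℕ) : ∀ m : List ℕ, (∀ a ∈ l, 1 ≤ a) → (∀ a ∈ m, 1 ≤ a) →
    (l.map gMat).prod = (m.map gMat).prod → l = m := by
  have nil_case : ∀ (b : ℕ) (m : List ℕ), (∀ a ∈ m, 1 ≤ a) →
      (1 : Matrix (Fin 2) (Fin 2) ℤ) ≠ gMat b * (m.map gMat).prod := by
    intro b m hm h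
    have h4 := (gMat_prod_invariant m hm).2.2.2.1
    have e := (gMat_mul_entries b (m.map gMat).prod).2.1
    rw [← h] at e
    simp at e
    omega
  induction l with
  | nil =>
    intro m _ hm h
    cases m with
    | nil => rfl
    | cons b m =>
      exact absurd (by simpa using h) (nil_case b m (fun a ha => hm a (by simp [ha])))
  | cons a l ih =>
    intro m hl hm h
    have hl' : ∀ a ∈ l, 1 ≤ a := fun c hc => hl c (by simp [hc])
    cases m with
    | nil => exact absurd (by simpa using h.symm) (nil_case a l hl')
    | cons b m =>
      have hm' : ∀ a ∈ m, 1 ≤ a := fun c hc => hm c (by simp [hc])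
      simp only [List.map_cons, List.prod_cons] at h
      have n1 := gMat_letter_not_lt a b l m hl' hm' h
      have n2 := gMat_letter_not_lt b a m l hm' hl' h.symm
      have hab : a = b := by omega
      subst hab
      obtain ⟨e1, e2, e3, e4⟩ := gMat_mul_entries a (l.map gMat).prod
      obtain ⟨f1, f2, f3, f4⟩ := gMat_mul_entries a (m.map gMat).prod
      rw [h] at e1 e2 e3 e4
      rw [f1] at e1
      rw [f2] at e2
      rw [f3, e1] at e3
      rw [f4, e2] at e4
      rw [ih m hl' hm' ?_]
      ext i j
      fin_cases i <;> fin_cases j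
      · simpa using e3.symm
      · simpa using e4.symm
      · simpa using e1.symm
      · simpa using e2.symm

/-- **Free generation.** For a finite alphabet `A ⊂ ℕ` (of positive integers) with `|A| ≥ 2`,
the matrices `g_a`, `a ∈ A`, freely generate a free semigroup: if two finite words over `A`
evaluate to the same product of the matrices `g_a`, then the words coincide
(in particular they have the same length and the same letters). -/
theorem gMat_freely_generates (A : Finset ℕ) (hA : 2 ≤ A.card) (hA1 : ∀ a ∈ A, 1 ≤ a)
    (l₁ l₂ : List ℕ) (h₁ : ∀ a ∈ l₁, a ∈ A) (h₂ : ∀ a ∈ l₂, a ∈ A)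
    (hprod : (l₁.map gMat).prod = (l₂.map gMat).prod) : l₁ = l₂ :=  by
  exact gMat_words_injective l₁ l₂ (fun a ha => hA1 a (h₁ a ha)) (fun a ha => hA1 a (h₂ a ha)) hprod
end
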